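/- arXiv:2603.09680 — 2 statements merged into one kernel-verified Lean document; each statement's English description precedes it below -/
import Mathlib

section
/- There exist infinitely many primes p such that π(p;4,1) > π(p;4,3); that is, the aggregate discrepancy is positive at infinitely many primes. -/
/-- `piMod4 x r` is the number of primes `q ≤ x` with `q ≡ r (mod 4)`. -/
def piMod4 (x r : ℕ) : ℕ :=
  ((Finset.range (x + 1)).filter (fun q => Nat.Prime q ∧ q % 4 = r)).card

/-!
Suppose that the discrepancy `D n = π(n;4,1) - π(n;4,3)` is bounded above by `C`. Then
`(C - D t) / t` is the density of a positive measure, whose Mellin transform is, up to a factor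
`s`, the function `F(s) = C - ∑ χ₄(p) p⁻ˢ`, and `F' = (ζ'/ζ)(2s) - L'/L` up to a function bounded
on `re s ≥ 1/2`. By Landau's theorem the transform converges for `re s > 1/2`, so that `L(s, χ₄)`
has no zeros there and, by the functional equation, all its nontrivial zeros are on the critical
line. The derivative of minus the transform has at `1/2 + i x` the residue `m x / (1/2 + i x)`,
with `m x` the order of vanishing of `L` and with `m 0` replaced by `m 0 + 1/2` because of the
squares of primes. Being limits of transforms of positive measures, these residues are a positive
definite function of `x`.

Positive definiteness, tested against a Fejér kernel whose frequency makes the contributions of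
high zeros negative, bounds the number of zeros up to height `T` by `T` times a bounded multiple
of `1 + ∑ |1/2 + i x|⁻²`, the sum running over the zeros up to a fixed multiple of `T`. As the
growth of the completed `L`-function makes this sum converge, there are `O(T)` such zeros. But by
Jensen's formula this contradicts the factor `Γ` of the completed `L`-function, which grows faster
than every exponential.
-/

namespace PrimeRace

open Finset Filter Topology MeasureTheory ProbabilityTheory
open scoped ComplexConjugate

section PositiveDefinite

variable {G : Type*} [AddCommGroup G] {r : G → ℂ}

/-- Positive definiteness of a function on an abelian group, without any topology. Only the real
part of the quadratic form is required to be nonnegative. -/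
def IsPositiveDefinite (r : G → ℂ) : Prop :=
  ∀ (B : Finset G) (z : G → ℂ), 0 ≤ (∑ a ∈ B, ∑ b ∈ B, z a * conj (z b) * r (a - b)).re

lemma IsPositiveDefinite.of_tendsto {ι : Type*} {l : Filter ι} [l.NeBot] {q : ι → G → ℂ}
    (hq : ∀ᶠ i in l, IsPositiveDefinite (q i)) (hlim : ∀ x, Tendsto (q · x) l (𝓝 (r x))) :
    IsPositiveDefinite r := fun B z ↦
  ge_of_tendsto ((Complex.continuous_re.tendsto _).comp <| tendsto_finsetSum _ fun a _ ↦
    tendsto_finsetSum _ fun b _ ↦ (hlim (a - b)).const_mul _) (hq.mono fun _ h ↦ h B z)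

lemma IsPositiveDefinite.const_mul (hr : IsPositiveDefinite r) {c : ℝ} (hc : 0 ≤ c) :
    IsPositiveDefinite fun x ↦ c * r x := fun B z ↦ by
  simp only [mul_left_comm _ (c : ℂ), ← mul_sum, Complex.re_ofReal_mul]
  exact mul_nonneg hc (hr B z)

lemma IsPositiveDefinite.mul_conj (hr : IsPositiveDefinite r) (B : Finset G) (e z : G → ℂ) :
    0 ≤ (∑ a ∈ B, ∑ b ∈ B, z a * conj (z b) * (e a * conj (e b) * r (a - b))).re := by
  refine (hr B fun a ↦ z a * e a).trans_eq (congrArg _ ?_)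
  refine sum_congr rfl fun a _ ↦ sum_congr rfl fun b _ ↦ ?_
  rw [map_mul]
  ring

section Folner

open scoped Pointwise

variable [DecidableEq G]

lemma card_nsmul_le_pow (S : Finset G) (n : ℕ) : #(n • S) ≤ (n + 1) ^ #S := by
  let combination (f : S → ℕ) : G := ∑ s, f s • (s : G)
  have nsmul_subset : n • S ⊆
      (Fintype.piFinset fun _ : S ↦ range (n + 1)).image combination := by
    induction n with
    | zero =>
      simp only [zero_nsmul, zero_subset, mem_image, Fintype.mem_piFinset]
      exact ⟨0, by simp, by simp [combination]⟩
    | succ n ih =>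
      rw [succ_nsmul]
      refine add_subset_iff.2 fun b hb s hs ↦ ?_
      obtain ⟨f, hf, rfl⟩ := mem_image.1 (ih hb)
      rw [Fintype.mem_piFinset] at hf
      refine mem_image.2 ⟨f + Pi.single ⟨s, hs⟩ 1, Fintype.mem_piFinset.2 fun t ↦ ?_, ?_⟩
      · have := mem_range.1 (hf t)
        rw [mem_range, Pi.add_apply, Pi.single_apply]
        split_ifs <;> omega
      · simp [combination, add_smul, sum_add_distrib, Pi.single_apply]
  calc #(n • S) ≤ #(Fintype.piFinset fun _ : S ↦ range (n + 1)) :=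
        (card_le_card nsmul_subset).trans card_image_le
    _ = (n + 1) ^ #S := by simp

lemma exists_card_succ_nsmul_le (S : Finset G) {ε : ℝ} (hε : 0 < ε) :
    ∃ n : ℕ, (#((n + 1) • S) : ℝ) ≤ (1 + ε) * #(n • S) := by
  by_contra! hgrowth
  have exponential_growth (n : ℕ) : (1 + ε) ^ n ≤ #(n • S) := by
    induction n with
    | zero => simp
    | succ n ih =>
      calc (1 + ε) ^ (n + 1) = (1 + ε) * (1 + ε) ^ n := pow_succ' _ _
        _ ≤ (1 + ε) * #(n • S) := by gcongr
        _ ≤ #((n + 1) • S) := (hgrowth n).le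
  have hlim := (tendsto_pow_const_div_const_pow_of_one_lt #S (by linarith : 1 < 1 + ε)).comp
    (tendsto_add_atTop_nat 1)
  obtain ⟨n, hn⟩ := (hlim.eventually_lt_const (u := (1 + ε)⁻¹) (by positivity)).exists
  have hpoly : (#(n • S) : ℝ) ≤ ((n + 1 : ℕ) : ℝ) ^ #S := mod_cast card_nsmul_le_pow S n
  rw [Function.comp_apply, div_lt_iff₀ (by positivity), pow_succ', inv_mul_cancel_left₀
    (by positivity)] at hn
  linarith [exponential_growth n]

end Folner

lemma sum_sub_right_eq_of_add_mem {E : Type*} [AddCommMonoid E] {f : G → E} {S B : Finset G}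
    (hS : ∀ x, f x ≠ 0 → x ∈ S) {b : G} (hB : ∀ s ∈ S, b + s ∈ B) :
    ∑ a ∈ B, f (a - b) = ∑ x ∈ S, f x :=
  (sum_of_injOn (b + ·) (add_right_injective b).injOn hB
    (fun a _ ha ↦ by_contra fun h ↦ ha ⟨a - b, hS _ h, add_sub_cancel b a⟩) (by simp)).symm

lemma sum_norm_sub_right_le {f : G → ℂ} {S : Finset G} (hS : ∀ x, f x ≠ 0 → x ∈ S)
    (B : Finset G) (b : G) : ∑ a ∈ B, ‖f (a - b)‖ ≤ ∑ x ∈ S, ‖f x‖ := by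
  classical
  rw [← sum_image (g := (· - b)) (f := (‖f ·‖)) (sub_left_injective (b := b)).injOn,
    ← sum_filter_ne_zero]
  exact sum_le_sum_of_subset_of_nonneg
    (fun x hx ↦ hS x (norm_ne_zero_iff.1 (mem_filter.1 hx).2)) fun _ _ _ ↦ norm_nonneg _

-- The value at the trivial character of the Fourier transform: a Følner set `B ⊆ B'` makes the
-- boundary terms of the quadratic form over `B'` negligible.
lemma IsPositiveDefinite.re_sum_nonneg (hr : IsPositiveDefinite r) {S : Finset G}
    (hS : ∀ x, r x ≠ 0 → x ∈ S) (h0 : 0 ∈ S) : 0 ≤ (∑ x ∈ S, r x).re := by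
  classical
  open scoped Pointwise in
  set K := ∑ x ∈ S, ‖r x‖
  have hK : 0 ≤ K := sum_nonneg fun _ _ ↦ norm_nonneg _
  refine le_of_forall_pos_le_add fun ε hε ↦ ?_
  obtain ⟨n, hn⟩ := exists_card_succ_nsmul_le S (ε := ε / (K + 1)) (by positivity)
  set B := n • S
  set B' := (n + 1) • S
  have hBB' : B ⊆ B' := nsmul_subset_nsmul_right h0 n.le_succ
  have hB : (0 : ℝ) < #B := mod_cast card_pos.2 (Nonempty.nsmul ⟨0, h0⟩)
  have boundary : (∑ b ∈ B' \ B, ∑ a ∈ B', r (a - b)).re ≤ #B * ε := by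
    calc (∑ b ∈ B' \ B, ∑ a ∈ B', r (a - b)).re ≤ ∑ _ ∈ B' \ B, K :=
          (Complex.re_le_norm _).trans <| norm_sum_le_of_le _ fun b _ ↦
            (norm_sum_le _ _).trans (sum_norm_sub_right_le hS B' b)
      _ = (#B' - #B) * K := by
          rw [sum_const, nsmul_eq_mul, cast_card_sdiff hBB']
      _ ≤ ε / (K + 1) * #B * (K + 1) := by
          gcongr <;> linarith
      _ = #B * ε := by field_simp
  have interior : ∑ b ∈ B, ∑ a ∈ B', r (a - b) = #B * ∑ x ∈ S, r x := by
    rw [← nsmul_eq_mul, ← sum_const]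
    refine sum_congr rfl fun b hb ↦ sum_sub_right_eq_of_add_mem hS fun s hs ↦ ?_
    rw [show B' = B + S from succ_nsmul S n]
    exact add_mem_add hb hs
  have quadratic_form : 0 ≤ (∑ b ∈ B', ∑ a ∈ B', r (a - b)).re := by
    rw [sum_comm]
    simpa using hr B' 1
  rw [← sum_sdiff hBB', interior, Complex.add_re,
    ← Complex.ofReal_natCast, Complex.re_ofReal_mul] at quadratic_form
  exact nonneg_of_mul_nonneg_right (by linarith : 0 ≤ (#B : ℝ) * (_ + ε)) hB

end PositiveDefinite

section FejerKernel

variable {r : ℝ → ℂ}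

lemma IsPositiveDefinite.cexp_mul (hr : IsPositiveDefinite r) (u : ℝ) :
    IsPositiveDefinite fun x : ℝ ↦ Complex.exp (Complex.I * u * x) * r x := by
  intro B z
  refine (hr.mul_conj B (fun a : ℝ ↦ Complex.exp (Complex.I * u * a)) z).trans_eq ?_
  refine congrArg _ <| sum_congr rfl fun a _ ↦ sum_congr rfl fun b _ ↦ ?_
  simp only [← Complex.exp_conj, ← Complex.exp_add, map_mul, Complex.conj_I, Complex.conj_ofReal]
  congr 3
  push_cast
  ring

lemma indicator_Ioc_mul_indicator_Ioc (T a b : ℝ) :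
    (fun x ↦ (Set.Ioc (a - T) a).indicator (1 : ℝ → ℝ) x * (Set.Ioc (b - T) b).indicator 1 x) =
      (Set.Ioc (max a b - T) (min a b)).indicator 1 := by
  rw [← max_sub_sub_right, ← Set.Ioc_inter_Ioc, Set.inter_indicator_one]
  rfl

lemma integrable_indicator_Ioc_mul (T a b : ℝ) :
    Integrable fun x ↦
      (Set.Ioc (a - T) a).indicator (1 : ℝ → ℝ) x * (Set.Ioc (b - T) b).indicator 1 x := by
  rw [indicator_Ioc_mul_indicator_Ioc, integrable_indicator_iff measurableSet_Ioc]
  exact integrableOn_const (by simp)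

lemma integral_indicator_Ioc_mul (T a b : ℝ) :
    ∫ x, (Set.Ioc (a - T) a).indicator (1 : ℝ → ℝ) x * (Set.Ioc (b - T) b).indicator 1 x =
      max (T - |a - b|) 0 := by
  rw [indicator_Ioc_mul_indicator_Ioc, integral_indicator_one measurableSet_Ioc,
    Real.volume_real_Ioc, ← max_sub_min_eq_abs']
  congr 1
  ring

lemma IsPositiveDefinite.tent_mul (hr : IsPositiveDefinite r) (T : ℝ) :
    IsPositiveDefinite fun x : ℝ ↦ (max (T - |x|) 0 : ℝ) * r x := by
  intro B z
  let w (x a : ℝ) : ℝ := (Set.Ioc (a - T) a).indicator 1 x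
  have hint (a b : ℝ) (c : ℂ) : Integrable fun x ↦ c * (w x a * w x b : ℝ) :=
    (integrable_indicator_Ioc_mul T a b).ofReal.const_mul c
  have form_eq : ∑ a ∈ B, ∑ b ∈ B, z a * conj (z b) * ((max (T - |a - b|) 0 : ℝ) * r (a - b)) =
      ∫ x, ∑ a ∈ B, ∑ b ∈ B, z a * conj (z b) * r (a - b) * (w x a * w x b : ℝ) := by
    rw [integral_finsetSum _ fun a _ ↦ integrable_finsetSum _ fun b _ ↦ hint a b _]
    refine sum_congr rfl fun a _ ↦ ?_
    rw [integral_finsetSum _ fun b _ ↦ hint a b _]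
    refine sum_congr rfl fun b _ ↦ ?_
    rw [integral_const_mul, integral_complex_ofReal, integral_indicator_Ioc_mul]
    ring
  rw [form_eq, ← Complex.reCLM_apply, ← Complex.reCLM.integral_comp_comm
    (integrable_finsetSum _ fun a _ ↦ integrable_finsetSum _ fun b _ ↦ hint a b _)]
  refine integral_nonneg fun x ↦ (hr.mul_conj B (fun a ↦ (w x a : ℂ)) z).trans_eq ?_
  simp only [Complex.reCLM_apply, Complex.conj_ofReal]
  refine congrArg _ <| sum_congr rfl fun a _ ↦ sum_congr rfl fun b _ ↦ ?_
  push_cast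
  ring

lemma IsPositiveDefinite.re_fejer_sum_nonneg (hr : IsPositiveDefinite r) (T u : ℝ) {S : Finset ℝ}
    (hS : ∀ x, |x| < T → r x ≠ 0 → x ∈ S) (h0 : 0 ∈ S) :
    0 ≤ (∑ x ∈ S, (max (T - |x|) 0 : ℝ) * (Complex.exp (Complex.I * u * x) * r x)).re := by
  refine ((hr.cexp_mul u).tent_mul T).re_sum_nonneg (fun x hx ↦ hS x ?_ ?_) h0
  · by_contra! hTx
    simp [max_eq_right (sub_nonpos.2 hTx)] at hx
  · rintro h
    simp [h] at hx

end FejerKernel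

section ZeroCounting

variable {m : ℝ → ℕ} {Z : ℝ → Finset ℝ} {R T : ℝ}

/-- Number of zeros up to height `R`, counted with multiplicity `m`, where `Z R` is the set of
ordinates of absolute value at most `R`. -/
def zeroCount (m : ℝ → ℕ) (Z : ℝ → Finset ℝ) (R : ℝ) : ℝ :=
  ∑ x ∈ Z R, (m x : ℝ)

/-- The sum over the zeros in a disc of radius `R` that occurs in Jensen's formula. -/
noncomputable def jensenSum (m : ℝ → ℕ) (Z : ℝ → Finset ℝ) (R : ℝ) : ℝ :=
  ∑ x ∈ Z R, m x * Real.log (R / |x|)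

/-- The sum of `|1/2 + i x|⁻²` over the zeros `x` up to height `R`. -/
noncomputable def invNormSqSum (m : ℝ → ℕ) (Z : ℝ → Finset ℝ) (R : ℝ) : ℝ :=
  ∑ x ∈ Z R, m x / (1 / 4 + x ^ 2)

/-- The function `x ↦ (m x + δ x) / (1/2 + i x)`, with `δ` half the indicator function of `0`: for
`m` the multiplicities of the zeros of `L(s, χ₄)` on the critical line, it collects the residues on
this line of the transform of the discrepancy; `δ` stems from the squares of primes. -/
noncomputable def residueFunction (m : ℝ → ℕ) (x : ℝ) : ℂ :=
  (m x + if x = 0 then 1 / 2 else 0) / (1 / 2 + Complex.I * x)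

lemma sq_div_le_mul_sin {x : ℝ} (hx : |x| ≤ T) : x ^ 2 / (2 * T) ≤ x * Real.sin (x / T) := by
  wlog h : 0 ≤ x generalizing x
  · simpa [neg_div] using this (x := -x) (by rwa [abs_neg]) (by linarith)
  rcases h.eq_or_lt with rfl | h
  · simp
  rw [abs_of_pos h] at hx
  have hT : 0 < T := h.trans_le hx
  have half_le : (1 : ℝ) / 2 ≤ 2 / Real.pi := by
    rw [div_le_div_iff₀ two_pos Real.pi_pos]
    linarith [Real.pi_lt_four]
  have hxT : x / T ≤ Real.pi / 2 := ((div_le_one hT).2 hx).trans (by linarith [Real.pi_gt_three])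
  calc x ^ 2 / (2 * T) = x * (1 / 2 * (x / T)) := by field_simp
    _ ≤ x * (2 / Real.pi * (x / T)) := by gcongr
    _ ≤ x * Real.sin (x / T) := by gcongr; exact Real.mul_le_sin (by positivity) hxT

lemma re_cexp_neg_div_half_add_I_mul (x y : ℝ) :
    (Complex.exp (Complex.I * (-1 : ℝ) * y) / (1 / 2 + Complex.I * x)).re =
      (1 / 2 * Real.cos y - x * Real.sin y) / (1 / 4 + x ^ 2) := by
  have hexp : Complex.exp (Complex.I * (-1 : ℝ) * y) = ⟨Real.cos y, -Real.sin y⟩ := by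
    rw [show Complex.I * (-1 : ℝ) * y = (-y : ℝ) * Complex.I by push_cast; ring]
    apply Complex.ext
    · rw [Complex.exp_ofReal_mul_I_re, Real.cos_neg]
    · rw [Complex.exp_ofReal_mul_I_im, Real.sin_neg]
  have hden : (1 / 2 + Complex.I * x : ℂ) = ⟨1 / 2, x⟩ := by
    apply Complex.ext <;> simp
  rw [hexp, hden, Complex.div_re, Complex.normSq_mk]
  field_simp
  ring

/-- The Fejér kernel is evaluated at frequency `-1 / T`, where the sine terms of the zeros are all
negative. -/
lemma fejer_sum_nonneg (hpos : IsPositiveDefinite (residueFunction m))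
    (hZ : ∀ R x, x ∈ Z R ↔ |x| ≤ R ∧ m x ≠ 0) (h0 : m 0 = 0) (hT : 0 < T) :
    0 ≤ T + ∑ x ∈ Z T, (T - |x|) * m x * ((1 / 2 - x ^ 2 / (2 * T)) / (1 / 4 + x ^ 2)) := by
  have hsupp (x : ℝ) (hx : |x| < T) (hr : residueFunction m x ≠ 0) : x ∈ insert 0 (Z T) := by
    rw [mem_insert, hZ]
    by_contra! h
    exact hr (by simp [residueFunction, h.1, h.2 hx.le])
  have h0Z : (0 : ℝ) ∉ Z T := by simp [hZ, h0]
  have hfejer := hpos.re_fejer_sum_nonneg T (-1 / T) hsupp (mem_insert_self _ _)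
  rw [sum_insert h0Z, Complex.add_re, Complex.re_sum] at hfejer
  refine hfejer.trans ?_
  gcongr with x hx
  · simp [residueFunction, h0, hT.le]
  obtain ⟨hxT, hmx⟩ := (hZ T x).1 hx
  have hx0 : x ≠ 0 := by
    rintro rfl
    exact hmx h0
  calc ((max (T - |x|) 0 : ℝ) * (Complex.exp (Complex.I * (-1 / T : ℝ) * x) *
        residueFunction m x)).re
      = (T - |x|) * m x * (Complex.exp (Complex.I * (-1 : ℝ) * (x / T : ℝ)) /
          (1 / 2 + Complex.I * x)).re := by
        rw [← Complex.re_ofReal_mul, max_eq_left (sub_nonneg.2 hxT), residueFunction, if_neg hx0]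
        congr 1
        push_cast
        ring_nf
    _ = (T - |x|) * m x *
          ((1 / 2 * Real.cos (x / T) - x * Real.sin (x / T)) / (1 / 4 + x ^ 2)) := by
        rw [re_cexp_neg_div_half_add_I_mul]
    _ ≤ (T - |x|) * m x * ((1 / 2 - x ^ 2 / (2 * T)) / (1 / 4 + x ^ 2)) := by
        have := sub_nonneg.2 hxT
        gcongr
        · linarith [Real.cos_le_one (x / T)]
        · exact sq_div_le_mul_sin hxT

lemma abs_pos_of_mem (hZ : ∀ R x, x ∈ Z R ↔ |x| ≤ R ∧ m x ≠ 0) (h0 : m 0 = 0) {x : ℝ}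
    (hx : x ∈ Z R) : 0 < |x| := by
  rw [abs_pos]
  rintro rfl
  exact ((hZ R 0).1 hx).2 h0

lemma subset_of_le (hZ : ∀ R x, x ∈ Z R ↔ |x| ≤ R ∧ m x ≠ 0) (hRT : R ≤ T) : Z R ⊆ Z T :=
  fun x hx ↦ (hZ T x).2 ⟨((hZ R x).1 hx).1.trans hRT, ((hZ R x).1 hx).2⟩

lemma lt_abs_of_mem_sdiff (hZ : ∀ R x, x ∈ Z R ↔ |x| ≤ R ∧ m x ≠ 0) {x : ℝ}
    (hx : x ∈ Z T \ Z R) : R < |x| := by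
  rw [Finset.mem_sdiff, hZ, hZ] at hx
  by_contra! h
  exact hx.2 ⟨h, hx.1.2⟩

lemma one_le_log_four : 1 ≤ Real.log 4 := by
  rw [Real.le_log_iff_exp_le four_pos]
  linarith [Real.exp_one_lt_d9]

lemma log_four_le_two : Real.log 4 ≤ 2 := by
  rw [show (4 : ℝ) = 2 ^ 2 by norm_num, Real.log_pow]
  push_cast
  linarith [Real.log_two_lt_d9]

lemma jensenSum_summand_nonneg (hZ : ∀ R x, x ∈ Z R ↔ |x| ≤ R ∧ m x ≠ 0) {x : ℝ} (hx : x ∈ Z R) :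
    0 ≤ m x * Real.log (R / |x|) := by
  rcases (abs_nonneg x).eq_or_lt with h | h
  · simp [← h]
  exact mul_nonneg (Nat.cast_nonneg _)
    (Real.log_nonneg ((one_le_div h).2 ((hZ R x).1 hx).1))

lemma zeroCount_le_jensenSum (hZ : ∀ R x, x ∈ Z R ↔ |x| ≤ R ∧ m x ≠ 0) (h0 : m 0 = 0)
    (hR : 0 ≤ R) : zeroCount m Z R ≤ jensenSum m Z (4 * R) := by
  calc ∑ x ∈ Z R, (m x : ℝ) ≤ ∑ x ∈ Z R, m x * Real.log (4 * R / |x|) := by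
        refine sum_le_sum fun x hx ↦ le_mul_of_one_le_right (Nat.cast_nonneg _) ?_
        have hx0 := abs_pos_of_mem hZ h0 hx
        refine one_le_log_four.trans (Real.log_le_log four_pos ((le_div_iff₀ hx0).2 ?_))
        linarith [((hZ R x).1 hx).1]
    _ ≤ jensenSum m Z (4 * R) :=
        sum_le_sum_of_subset_of_nonneg (subset_of_le hZ (by linarith))
          fun x hx _ ↦ jensenSum_summand_nonneg hZ hx

lemma jensenSum_four_mul_le (hZ : ∀ R x, x ∈ Z R ↔ |x| ≤ R ∧ m x ≠ 0) (h0 : m 0 = 0)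
    (hR : 0 < R) :
    jensenSum m Z (4 * R) ≤ jensenSum m Z R + 2 * zeroCount m Z (4 * R) := by
  have hsub : Z R ⊆ Z (4 * R) := subset_of_le hZ (by linarith)
  have near : ∑ x ∈ Z R, m x * Real.log (4 * R / |x|) ≤
      ∑ x ∈ Z R, (m x * Real.log (R / |x|) + 2 * m x) := by
    gcongr with x hx
    have hx0 := abs_pos_of_mem hZ h0 hx
    rw [mul_div_assoc, Real.log_mul (by norm_num) (by positivity)]
    nlinarith [log_four_le_two, (m x).cast_nonneg (α := ℝ)]
  have far : ∑ x ∈ Z (4 * R) \ Z R, m x * Real.log (4 * R / |x|) ≤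
      ∑ x ∈ Z (4 * R) \ Z R, 2 * (m x : ℝ) := by
    refine sum_le_sum fun x hx ↦ ?_
    have hRx := lt_abs_of_mem_sdiff hZ hx
    have : Real.log (4 * R / |x|) ≤ 2 := by
      refine (Real.log_le_log (div_pos (by linarith) (hR.trans hRx)) ?_).trans log_four_le_two
      rw [div_le_iff₀ (hR.trans hRx)]
      linarith
    rw [mul_comm 2]
    exact mul_le_mul_of_nonneg_left this (Nat.cast_nonneg _)
  rw [sum_add_distrib] at near
  rw [jensenSum, jensenSum, zeroCount, mul_sum, ← sum_sdiff hsub,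
    ← sum_sdiff (f := fun x ↦ 2 * (m x : ℝ)) hsub]
  linarith

lemma invNormSqSum_four_mul_le (hZ : ∀ R x, x ∈ Z R ↔ |x| ≤ R ∧ m x ≠ 0) (hR : 0 < R) :
    invNormSqSum m Z (4 * R) ≤ invNormSqSum m Z R + zeroCount m Z (4 * R) / R ^ 2 := by
  rw [invNormSqSum, ← sum_sdiff (subset_of_le hZ (by linarith : R ≤ 4 * R)), add_comm]
  refine add_le_add le_rfl ?_
  calc ∑ x ∈ Z (4 * R) \ Z R, m x / (1 / 4 + x ^ 2) ≤ ∑ x ∈ Z (4 * R) \ Z R, m x / R ^ 2 := by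
        gcongr with x hx
        have := sq_le_sq' (by linarith [abs_nonneg x]) (lt_abs_of_mem_sdiff hZ hx).le
        rw [sq_abs] at this
        linarith
    _ ≤ ∑ x ∈ Z (4 * R), m x / R ^ 2 :=
        sum_le_sum_of_subset_of_nonneg sdiff_subset fun _ _ _ ↦ by positivity
    _ = zeroCount m Z (4 * R) / R ^ 2 := (sum_div ..).symm

lemma zeroCount_le_of_isPositiveDefinite (hpos : IsPositiveDefinite (residueFunction m))
    (hZ : ∀ R x, x ∈ Z R ↔ |x| ≤ R ∧ m x ≠ 0) (h0 : m 0 = 0) (hR : 1 ≤ R) :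
    zeroCount m Z R ≤ 11 * R * (1 + invNormSqSum m Z (4 * R)) := by
  set T := 4 * R
  have split (x : ℝ) : (1 / 2 - x ^ 2 / (2 * T)) / (1 / 4 + x ^ 2) =
      (1 / 2 + 1 / (8 * T)) / (1 / 4 + x ^ 2) - 1 / (2 * T) := by
    field_simp
    ring
  have upper : ∑ x ∈ Z T, (T - |x|) * m x * ((1 / 2 + 1 / (8 * T)) / (1 / 4 + x ^ 2)) ≤
      T * invNormSqSum m Z T := by
    rw [invNormSqSum, mul_sum]
    refine sum_le_sum fun x _ ↦ ?_
    calc (T - |x|) * m x * ((1 / 2 + 1 / (8 * T)) / (1 / 4 + x ^ 2))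
        ≤ T * m x * (1 / (1 / 4 + x ^ 2)) := by
          gcongr
          · linarith [abs_nonneg x]
          · rw [← le_sub_iff_add_le', div_le_iff₀ (by positivity)]
            linarith
      _ = T * (m x / (1 / 4 + x ^ 2)) := by ring
  have lower : 3 / 8 * zeroCount m Z R ≤ ∑ x ∈ Z T, (T - |x|) * m x * (1 / (2 * T)) := by
    rw [zeroCount, mul_sum]
    calc ∑ x ∈ Z R, 3 / 8 * (m x : ℝ) ≤ ∑ x ∈ Z R, (T - |x|) * m x * (1 / (2 * T)) := by
          refine sum_le_sum fun x hx ↦ ?_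
          have hxR := ((hZ R x).1 hx).1
          rw [mul_right_comm]
          gcongr
          rw [mul_one_div, le_div_iff₀ (by positivity)]
          linarith
      _ ≤ _ := sum_le_sum_of_subset_of_nonneg (subset_of_le hZ (by linarith)) fun x hx _ ↦ by
          have := sub_nonneg.2 ((hZ T x).1 hx).1
          positivity
  have hfejer := fejer_sum_nonneg hpos hZ h0 (T := T) (by linarith)
  simp only [split, mul_sub, sum_sub_distrib] at hfejer
  have hS : 0 ≤ R * invNormSqSum m Z T :=
    mul_nonneg (by linarith) (sum_nonneg fun _ _ ↦ by positivity)
  linarith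

lemma exists_invNormSqSum_le (hZ : ∀ R x, x ∈ Z R ↔ |x| ≤ R ∧ m x ≠ 0) (h0 : m 0 = 0) {C : ℝ}
    (hC : ∀ k : ℕ, jensenSum m Z (4 ^ k) ≤ C * 8 ^ k) :
    ∃ M, ∀ k : ℕ, invNormSqSum m Z (4 ^ k) ≤ M := by
  have step (k : ℕ) : invNormSqSum m Z (4 ^ (k + 1)) ≤
      invNormSqSum m Z (4 ^ k) + 64 * C * (1 / 2) ^ k := by
    have hcount : zeroCount m Z (4 ^ (k + 1)) ≤ C * 8 ^ (k + 2) :=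
      (zeroCount_le_jensenSum hZ h0 (by positivity)).trans (by rw [← pow_succ']; exact hC _)
    rw [pow_succ']
    refine (invNormSqSum_four_mul_le hZ (by positivity)).trans ?_
    gcongr
    rw [div_le_iff₀ (by positivity), ← pow_succ']
    calc zeroCount m Z (4 ^ (k + 1)) ≤ C * 8 ^ (k + 2) := hcount
      _ = 64 * C * (1 / 2 * 4 ^ 2) ^ k := by rw [pow_add]; norm_num; ring
      _ = 64 * C * (1 / 2) ^ k * (4 ^ k) ^ 2 := by rw [mul_pow, pow_right_comm]; ring
  have geometric (k : ℕ) : invNormSqSum m Z (4 ^ k) ≤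
      invNormSqSum m Z 1 + 128 * C * (1 - (1 / 2) ^ k) := by
    induction k with
    | zero => simp
    | succ k ih =>
      calc invNormSqSum m Z (4 ^ (k + 1))
          ≤ invNormSqSum m Z 1 + 128 * C * (1 - (1 / 2) ^ k) + 64 * C * (1 / 2) ^ k := by
            linarith [step k]
        _ = invNormSqSum m Z 1 + 128 * C * (1 - (1 / 2) ^ (k + 1)) := by ring
  have hC0 : 0 ≤ C := by
    simpa using (sum_nonneg fun x hx ↦ jensenSum_summand_nonneg hZ hx).trans (hC 0)
  refine ⟨invNormSqSum m Z 1 + 128 * C, fun k ↦ (geometric k).trans ?_⟩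
  have : 0 ≤ C * (1 / 2) ^ k := by positivity
  linarith

theorem exists_jensenSum_le_of_isPositiveDefinite (hpos : IsPositiveDefinite (residueFunction m))
    (hZ : ∀ R x, x ∈ Z R ↔ |x| ≤ R ∧ m x ≠ 0) (h0 : m 0 = 0) {C : ℝ}
    (hC : ∀ k : ℕ, jensenSum m Z (4 ^ k) ≤ C * 8 ^ k) :
    ∃ A, ∀ k : ℕ, jensenSum m Z (4 ^ k) ≤ A * 4 ^ k := by
  obtain ⟨M, hM⟩ := exists_invNormSqSum_le hZ h0 hC
  set N := 11 * (1 + M)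
  have hcount (k : ℕ) : zeroCount m Z (4 ^ k) ≤ N * 4 ^ k := by
    calc zeroCount m Z (4 ^ k) ≤ 11 * 4 ^ k * (1 + invNormSqSum m Z (4 ^ (k + 1))) := by
          rw [pow_succ']
          exact zeroCount_le_of_isPositiveDefinite hpos hZ h0 (one_le_pow₀ (by norm_num))
      _ ≤ 11 * 4 ^ k * (1 + M) := by gcongr; exact hM (k + 1)
      _ = N * 4 ^ k := by ring
  have geometric (k : ℕ) : jensenSum m Z (4 ^ k) ≤ jensenSum m Z 1 + 8 / 3 * N * (4 ^ k - 1) := by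
    induction k with
    | zero => simp
    | succ k ih =>
      have step := jensenSum_four_mul_le hZ h0 (R := 4 ^ k) (by positivity)
      rw [← pow_succ'] at step
      calc jensenSum m Z (4 ^ (k + 1))
          ≤ jensenSum m Z 1 + 8 / 3 * N * (4 ^ k - 1) + 2 * (N * 4 ^ (k + 1)) := by
            linarith [hcount (k + 1)]
        _ = jensenSum m Z 1 + 8 / 3 * N * (4 ^ (k + 1) - 1) := by ring
  have hJ : 0 ≤ jensenSum m Z 1 := sum_nonneg fun x hx ↦ jensenSum_summand_nonneg hZ hx
  have hN : 0 ≤ N := by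
    simpa using (sum_nonneg fun x _ ↦ (m x).cast_nonneg).trans (hcount 0)
  refine ⟨jensenSum m Z 1 + 8 / 3 * N, fun k ↦ (geometric k).trans ?_⟩
  have : jensenSum m Z 1 ≤ jensenSum m Z 1 * 4 ^ k :=
    le_mul_of_one_le_right hJ (one_le_pow₀ (by norm_num))
  linarith

end ZeroCounting

section Gamma

variable {x : ℝ}

lemma norm_GammaSeq_add_mul_I (x y : ℝ) {n : ℕ} (hn : 0 < n) :
    ‖Complex.GammaSeq (x + y * Complex.I) n‖ =
      (n : ℝ) ^ x * n.factorial / ∏ j ∈ range (n + 1), √((x + j) ^ 2 + y ^ 2) := by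
  rw [Complex.GammaSeq, norm_div, norm_mul, norm_prod, Complex.norm_natCast_cpow_of_pos hn,
    Complex.norm_natCast]
  congr 1
  · simp
  · refine prod_congr rfl fun j _ ↦ ?_
    rw [← Complex.norm_add_mul_I]
    push_cast
    ring_nf

lemma norm_Gamma_le_Gamma_re {z : ℂ} (hz : 0 < z.re) : ‖Complex.Gamma z‖ ≤ Real.Gamma z.re := by
  rw [Complex.Gamma_eq_integral hz, Real.Gamma_eq_integral hz, Complex.GammaIntegral]
  refine (norm_integral_le_integral_norm _).trans_eq (setIntegral_congr_fun measurableSet_Ioi ?_)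
  intro t ht
  simp [Complex.norm_cpow_eq_rpow_re_of_pos ht, Complex.norm_exp]

lemma monotoneOn_norm_Gamma_div_Gamma (y : ℝ) :
    MonotoneOn (fun x : ℝ ↦ ‖Complex.Gamma (x + y * Complex.I)‖ / Real.Gamma x) (Set.Ioi 0) := by
  intro a (ha : 0 < a) x (hx : 0 < x) hax
  refine le_of_tendsto_of_tendsto
    ((Complex.GammaSeq_tendsto_Gamma _).norm.div (Real.GammaSeq_tendsto_Gamma a)
      (Real.Gamma_pos_of_pos ha).ne')
    ((Complex.GammaSeq_tendsto_Gamma _).norm.div (Real.GammaSeq_tendsto_Gamma x)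
      (Real.Gamma_pos_of_pos hx).ne') ?_
  filter_upwards [eventually_gt_atTop 0] with n hn
  have hratio {b : ℝ} (hb : 0 < b) : ‖Complex.GammaSeq (b + y * Complex.I) n‖ / Real.GammaSeq b n =
      ∏ j ∈ range (n + 1), (b + j) / √((b + j) ^ 2 + y ^ 2) := by
    have : 0 < ∏ j ∈ range (n + 1), (b + j) := prod_pos fun j _ ↦ by positivity
    rw [norm_GammaSeq_add_mul_I b y hn, Real.GammaSeq, prod_div_distrib]
    field_simp
  simp only [Pi.div_apply, hratio ha, hratio hx]
  refine prod_le_prod (fun j _ ↦ by positivity) fun j _ ↦ ?_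
  rw [div_le_div_iff₀ (by positivity) (by positivity)]
  refine (abs_le_of_sq_le_sq' ?_ (by positivity)).2
  rw [mul_pow, mul_pow, Real.sq_sqrt (by positivity), Real.sq_sqrt (by positivity)]
  have : (a + j) ^ 2 ≤ (x + j) ^ 2 := by gcongr
  nlinarith [sq_nonneg y]

lemma norm_Gamma_half_add_mul_I_sq (y : ℝ) :
    ‖Complex.Gamma (1 / 2 + y * Complex.I)‖ ^ 2 = Real.pi / Real.cosh (Real.pi * y) := by
  have hconj : 1 - (1 / 2 + y * Complex.I) = conj (1 / 2 + y * Complex.I) := by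
    apply Complex.ext <;> norm_num
  have hsin : Complex.sin (Real.pi * (1 / 2 + y * Complex.I)) = Real.cosh (Real.pi * y) := by
    rw [show (Real.pi : ℂ) * (1 / 2 + y * Complex.I) =
      (Real.pi * y : ℝ) * Complex.I + Real.pi / 2 by push_cast; ring,
      Complex.sin_add_pi_div_two, Complex.cos_mul_I, Complex.ofReal_cosh]
  have hreflection := Complex.Gamma_mul_Gamma_one_sub (1 / 2 + y * Complex.I)
  rw [hconj, Complex.Gamma_conj, Complex.mul_conj, hsin, Complex.normSq_eq_norm_sq] at hreflection
  exact_mod_cast hreflection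

lemma sqrt_pi_mul_exp_neg_le_norm_Gamma_half (y : ℝ) :
    √Real.pi * Real.exp (-(Real.pi * |y| / 2)) ≤ ‖Complex.Gamma (1 / 2 + y * Complex.I)‖ := by
  refine (abs_le_of_sq_le_sq' ?_ (norm_nonneg _)).2
  have hcosh : Real.cosh (Real.pi * y) ≤ Real.exp (Real.pi * |y|) := by
    rw [← Real.cosh_abs, abs_mul, abs_of_pos Real.pi_pos, Real.cosh_eq]
    have : Real.exp (-(Real.pi * |y|)) ≤ Real.exp (Real.pi * |y|) :=
      Real.exp_le_exp.2 (neg_le_self (by positivity))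
    linarith
  calc (√Real.pi * Real.exp (-(Real.pi * |y| / 2))) ^ 2
      = Real.pi / Real.exp (Real.pi * |y|) := by
        rw [mul_pow, Real.sq_sqrt Real.pi_pos.le, ← Real.exp_nat_mul, div_eq_mul_inv Real.pi,
          ← Real.exp_neg]
        push_cast
        ring_nf
    _ ≤ Real.pi / Real.cosh (Real.pi * y) :=
        div_le_div_of_nonneg_left Real.pi_pos.le (Real.cosh_pos _) hcosh
    _ = _ := (norm_Gamma_half_add_mul_I_sq y).symm

lemma Gamma_mul_exp_neg_le_norm_Gamma (hx : 1 / 2 ≤ x) (y : ℝ) :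
    Real.Gamma x * Real.exp (-(Real.pi * |y| / 2)) ≤ ‖Complex.Gamma (x + y * Complex.I)‖ := by
  have hx0 : 0 < x := by linarith
  have hmono := monotoneOn_norm_Gamma_div_Gamma y (Set.mem_Ioi.2 one_half_pos) hx0 hx
  have hsqrt : 0 < √Real.pi := Real.sqrt_pos.2 Real.pi_pos
  push_cast at hmono
  rw [Real.Gamma_one_half_eq, div_le_div_iff₀ hsqrt (Real.Gamma_pos_of_pos hx0)] at hmono
  refine le_of_mul_le_mul_right ?_ hsqrt
  calc Real.Gamma x * Real.exp (-(Real.pi * |y| / 2)) * √Real.pi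
      = (√Real.pi * Real.exp (-(Real.pi * |y| / 2))) * Real.Gamma x := by ring
    _ ≤ ‖Complex.Gamma (1 / 2 + y * Complex.I)‖ * Real.Gamma x := by
        gcongr
        exact sqrt_pi_mul_exp_neg_le_norm_Gamma_half y
    _ ≤ _ := hmono

lemma rpow_mul_exp_neg_div_le_Gamma (hx : 0 < x) {b : ℝ} (hb : 0 < b) :
    b ^ x * (Real.exp (-(b + 1)) / (b + 1)) ≤ Real.Gamma x := by
  have hint := Real.GammaIntegral_convergent hx
  have hsub : Set.Ioc b (b + 1) ⊆ Set.Ioi 0 := fun t ht ↦ hb.trans ht.1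
  rw [Real.Gamma_eq_integral hx]
  calc b ^ x * (Real.exp (-(b + 1)) / (b + 1))
      = ∫ _ in Set.Ioc b (b + 1), b ^ x * (Real.exp (-(b + 1)) / (b + 1)) := by simp
    _ ≤ ∫ t in Set.Ioc b (b + 1), Real.exp (-t) * t ^ (x - 1) := by
        refine setIntegral_mono_on (integrableOn_const (by simp)) (hint.mono_set hsub)
          measurableSet_Ioc fun t ht ↦ ?_
        have ht0 : 0 < t := hsub ht
        rw [Real.rpow_sub_one ht0.ne', ← mul_div_assoc, ← mul_div_assoc, mul_comm]
        gcongr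
        exacts [ht.2, ht.1.le, ht.2]
    _ ≤ _ := by
        refine setIntegral_mono_set hint ?_ hsub.eventuallyLE
        filter_upwards [ae_restrict_mem measurableSet_Ioi] with t (ht : 0 < t)
        simp only [Pi.zero_apply]
        positivity

lemma exists_mul_sub_le_log_Gamma (a : ℝ) :
    ∃ C, ∀ x : ℝ, 0 < x → a * x - C ≤ Real.log (Real.Gamma x) := by
  set b := Real.exp a with hb
  have hb0 : 0 < b := Real.exp_pos a
  refine ⟨b + 1 + Real.log (b + 1), fun x hx ↦ ?_⟩
  refine le_trans (le_of_eq ?_)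
    (Real.log_le_log (by positivity) (rpow_mul_exp_neg_div_le_Gamma hx hb0))
  rw [Real.log_mul (by positivity) (by positivity), Real.log_div (by positivity) (by positivity),
    Real.log_exp, Real.log_rpow hb0, hb, Real.log_exp]
  ring

lemma Gamma_le_pow_floor (hx : 3 / 4 ≤ x) : Real.Gamma x ≤ (x + 2) ^ (⌊x⌋₊ + 2) := by
  have hx0 : 0 < x := by linarith
  have hfloor := Nat.floor_le hx0.le
  calc Real.Gamma x ≤ (x + 1) * x * Real.Gamma x :=
        le_mul_of_one_le_left (Real.Gamma_pos_of_pos hx0).le (by nlinarith)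
    _ = Real.Gamma (x + 1 + 1) := by
        rw [Real.Gamma_add_one (by positivity), Real.Gamma_add_one hx0.ne', mul_assoc]
    _ ≤ Real.Gamma ((⌊x⌋₊ + 2 : ℕ) + 1) := by
        have hlt := Nat.lt_floor_add_one x
        refine Real.Gamma_strictMonoOn_Ici.monotoneOn (Set.mem_Ici.2 ?_) (Set.mem_Ici.2 ?_) ?_ <;>
          push_cast <;> linarith
    _ ≤ ((⌊x⌋₊ + 2 : ℕ) : ℝ) ^ (⌊x⌋₊ + 2) := by
        rw [Real.Gamma_nat_eq_factorial]
        exact_mod_cast Nat.factorial_le_pow _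
    _ ≤ (x + 2) ^ (⌊x⌋₊ + 2) := by
        gcongr
        push_cast
        linarith

lemma log_Gamma_le (hx : 3 / 4 ≤ x) : Real.log (Real.Gamma x) ≤ 2 * (x + 2) * √(x + 2) := by
  have hx0 : 0 < x := by linarith
  have hlog : Real.log (x + 2) ≤ 2 * √(x + 2) := by
    have := Real.log_le_sub_one_of_pos (Real.sqrt_pos.2 (by linarith : 0 < x + 2))
    rw [Real.log_sqrt (by positivity)] at this
    linarith
  calc Real.log (Real.Gamma x) ≤ Real.log ((x + 2) ^ (⌊x⌋₊ + 2)) :=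
        Real.log_le_log (Real.Gamma_pos_of_pos hx0) (Gamma_le_pow_floor hx)
    _ = (⌊x⌋₊ + 2) * Real.log (x + 2) := by rw [Real.log_pow]; push_cast; ring
    _ ≤ (x + 2) * (2 * √(x + 2)) := by
        gcongr
        · exact Real.log_nonneg (by linarith)
        · exact Nat.floor_le hx0.le
    _ = _ := by ring

lemma abs_log_norm_Gamma_sub_le (hx : 1 / 2 ≤ x) (y : ℝ) :
    |Real.log ‖Complex.Gamma (x + y * Complex.I)‖ - Real.log (Real.Gamma x)| ≤
      Real.pi * |y| / 2 := by
  have hGamma : 0 < Real.Gamma x := Real.Gamma_pos_of_pos (by linarith)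
  have hupper : ‖Complex.Gamma (x + y * Complex.I)‖ ≤ Real.Gamma x := by
    simpa using norm_Gamma_le_Gamma_re (z := x + y * Complex.I) (by simp; linarith)
  have hlower := Gamma_mul_exp_neg_le_norm_Gamma hx y
  have hlogl := Real.log_le_log (by positivity) hlower
  rw [Real.log_mul hGamma.ne' (Real.exp_ne_zero _), Real.log_exp] at hlogl
  have hlogu := Real.log_le_log (lt_of_lt_of_le (by positivity) hlower) hupper
  exact abs_le.2 ⟨by linarith, by linarith⟩

end Gamma

section Jensen

variable {R : ℝ}

lemma circleAverage_mono_of_re_ne_zero (hR : 0 < R) {f g : ℂ → ℝ} (hf : CircleIntegrable f 0 R)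
    (hg : CircleIntegrable g 0 R) (h : ∀ w : ℂ, ‖w‖ = R → w.re ≠ 0 → f w ≤ g w) :
    Real.circleAverage f 0 R ≤ Real.circleAverage g 0 R := by
  rw [Real.circleAverage_def, Real.circleAverage_def, smul_eq_mul, smul_eq_mul]
  refine mul_le_mul_of_nonneg_left ?_ (by positivity)
  refine intervalIntegral.integral_mono_ae (by positivity) hf hg ?_
  have hcountable :
      (circleMap 0 R ⁻¹' {(R : ℂ) * Complex.I, -((R : ℂ) * Complex.I)}).Countable :=
    (Set.Finite.countable (by simp)).preimage_circleMap 0 hR.ne'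
  filter_upwards [hcountable.ae_notMem volume] with θ hθ
  have hnorm : ‖circleMap 0 R θ‖ = R := by simp [abs_of_pos hR]
  refine h _ hnorm fun hre ↦ hθ ?_
  rw [Set.mem_preimage]
  generalize circleMap 0 R θ = w at hnorm hre ⊢
  have him : w.im ^ 2 = R ^ 2 := by
    rw [← hnorm, Complex.sq_norm, Complex.normSq_apply, hre]
    ring
  rcases sq_eq_sq_iff_eq_or_eq_neg.1 him with h | h
  · left; apply Complex.ext <;> simp [hre, h]
  · right; apply Complex.ext <;> simp [hre, h]

lemma log_abs_re_circleMap_div (hR : 0 < R) (θ : ℝ) :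
    Real.log (|(circleMap 0 R θ).re| / R) = Real.log (Real.cos θ) := by
  simp [circleMap, Complex.exp_ofReal_mul_I_re, abs_mul, abs_of_pos hR, hR.ne', Real.log_abs]

lemma circleIntegrable_log_abs_re_div (hR : 0 < R) :
    CircleIntegrable (fun w ↦ Real.log (|w.re| / R)) 0 R := by
  simp only [CircleIntegrable, log_abs_re_circleMap_div hR]
  exact intervalIntegrable_log_cos

lemma integral_log_cos_zero_two_pi :
    ∫ θ in 0..2 * Real.pi, Real.log (Real.cos θ) = -(2 * Real.pi * Real.log 2) := by
  have hper : Function.Periodic (fun θ ↦ Real.log (Real.sin θ)) Real.pi := fun θ ↦ by simp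
  have hint (a b : ℝ) : IntervalIntegrable (fun θ ↦ Real.log (Real.sin θ)) volume a b :=
    intervalIntegrable_log_sin
  simp only [← Real.sin_add_pi_div_two]
  rw [intervalIntegral.integral_comp_add_right (fun θ ↦ Real.log (Real.sin θ)), zero_add,
    ← intervalIntegral.integral_add_adjacent_intervals (b := Real.pi / 2 + Real.pi)
      (hint _ _) (hint _ _),
    show 2 * Real.pi + Real.pi / 2 = Real.pi / 2 + Real.pi + Real.pi by ring,
    hper.intervalIntegral_add_eq _ 0, hper.intervalIntegral_add_eq (Real.pi / 2 + Real.pi) 0,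
    zero_add, integral_log_sin_zero_pi]
  ring

lemma circleAverage_log_abs_re_div (hR : 0 < R) :
    Real.circleAverage (fun w ↦ Real.log (|w.re| / R)) 0 R = -Real.log 2 := by
  simp only [Real.circleAverage_def, log_abs_re_circleMap_div hR, integral_log_cos_zero_two_pi,
    smul_eq_mul]
  field_simp

lemma circleIntegrable_add_mul_log_abs_re_div (hR : 0 < R) (a b : ℝ) :
    CircleIntegrable (fun w ↦ a + b * Real.log (|w.re| / R)) 0 R :=
  (circleIntegrable_const _ _ _).add ((circleIntegrable_log_abs_re_div hR).const_smul (a := b))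

lemma circleAverage_add_mul_log_abs_re_div (hR : 0 < R) (a b : ℝ) :
    Real.circleAverage (fun w ↦ a + b * Real.log (|w.re| / R)) 0 R = a - b * Real.log 2 := by
  have hlog := circleIntegrable_log_abs_re_div hR
  have hsmul : Real.circleAverage (fun w ↦ b * Real.log (|w.re| / R)) 0 R =
      b • Real.circleAverage (fun w ↦ Real.log (|w.re| / R)) 0 R :=
    Real.circleAverage_fun_smul (a := b) (f := fun w : ℂ ↦ Real.log (|w.re| / R))
  rw [Real.circleAverage_fun_add (f₂ := fun w ↦ b * Real.log (|w.re| / R))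
    (circleIntegrable_const _ _ _) (hlog.const_smul (a := b)), Real.circleAverage_const, hsmul,
    circleAverage_log_abs_re_div hR, smul_eq_mul]
  ring

/-- The order of vanishing of `f` at the point `i x` of the imaginary axis. -/
noncomputable def imaginaryAxisOrder (f : ℂ → ℂ) (x : ℝ) : ℕ :=
  analyticOrderNatAt f (Complex.I * x)

variable {f : ℂ → ℂ}

lemma divisor_closedBall_apply (hf : Differentiable ℂ f) (h0 : f 0 ≠ 0) {z : ℂ}
    (hz : z ∈ Metric.closedBall 0 R) :
    MeromorphicOn.divisor f (Metric.closedBall 0 R) z = analyticOrderNatAt f z := by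
  have hana (U : Set ℂ) : AnalyticOnNhd ℂ f U := fun z _ ↦ hf.analyticAt z
  have horder : analyticOrderAt f z ≠ ⊤ := fun h ↦
    h0 ((hana Set.univ).eqOn_zero_of_preconnected_of_eventuallyEq_zero isPreconnected_univ
      (Set.mem_univ z) (analyticOrderAt_eq_top.1 h) (Set.mem_univ 0))
  rw [MeromorphicOn.AnalyticOnNhd.divisor_apply (hana _) hz, ← Nat.cast_analyticOrderNatAt horder]
  rfl

lemma finite_setOf_imaginaryAxisOrder_ne_zero (hf : Differentiable ℂ f) (h0 : f 0 ≠ 0) (R : ℝ) :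
    {x : ℝ | |x| ≤ R ∧ imaginaryAxisOrder f x ≠ 0}.Finite := by
  have hfin := (MeromorphicOn.divisor f (Metric.closedBall 0 R)).finiteSupport
    (isCompact_closedBall 0 R)
  refine (hfin.preimage (f := fun x : ℝ ↦ Complex.I * x) fun a _ b _ h ↦ by simpa using h).subset ?_
  rintro x ⟨hxR, hx⟩
  rw [Set.mem_preimage, Function.mem_support, divisor_closedBall_apply hf h0 (by simpa using hxR)]
  exact_mod_cast hx

variable {Z : ℝ → Finset ℝ}

theorem circleAverage_log_norm_eq_jensenSum_add (hf : Differentiable ℂ f) (h0 : f 0 ≠ 0)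
    (hre : ∀ w, f w = 0 → w.re = 0)
    (hZ : ∀ R x, x ∈ Z R ↔ |x| ≤ R ∧ imaginaryAxisOrder f x ≠ 0) (hR : 0 < R) :
    Real.circleAverage (fun w ↦ Real.log ‖f w‖) 0 R =
      jensenSum (imaginaryAxisOrder f) Z R + Real.log ‖f 0‖ := by
  have hinj : Set.InjOn (fun x : ℝ ↦ Complex.I * x) (Z R) := fun a _ b _ h ↦ by simpa using h
  rw [AnalyticOnNhd.circleAverage_log_norm hR.ne' (fun z _ ↦ hf.analyticAt z) h0, abs_of_pos hR,
    finsum_eq_sum_of_support_subset (s := (Z R).image fun x : ℝ ↦ Complex.I * x), sum_image hinj,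
    jensenSum]
  · congr 1
    refine sum_congr rfl fun x hx ↦ ?_
    rw [divisor_closedBall_apply hf h0 (by simpa using ((hZ R x).1 hx).1)]
    simp [imaginaryAxisOrder, div_eq_mul_inv]
  · intro z hz
    have hdiv := Int.cast_ne_zero.1 (left_ne_zero_of_mul (Function.mem_support.1 hz))
    have hball := (MeromorphicOn.divisor f (Metric.closedBall 0 R)).supportWithinDomain hdiv
    rw [divisor_closedBall_apply hf h0 hball, Nat.cast_ne_zero] at hdiv
    obtain ⟨x, rfl⟩ : ∃ x : ℝ, Complex.I * x = z := by
      refine ⟨z.im, ?_⟩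
      apply Complex.ext <;> simp [hre z (apply_eq_zero_of_analyticOrderNatAt_ne_zero hdiv)]
    rw [coe_image]
    exact Set.mem_image_of_mem _ ((hZ _ _).2 ⟨by simpa using hball, hdiv⟩)

lemma circleIntegrable_log_norm (hf : Differentiable ℂ f) :
    CircleIntegrable (fun w ↦ Real.log ‖f w‖) 0 R :=
  AnalyticOnNhd.meromorphicOn (fun z _ ↦ hf.analyticAt z) |>.circleIntegrable_log_norm

lemma jensenSum_le_of_log_norm_le (hf : Differentiable ℂ f) (h0 : f 0 ≠ 0)
    (hre : ∀ w, f w = 0 → w.re = 0)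
    (hZ : ∀ R x, x ∈ Z R ↔ |x| ≤ R ∧ imaginaryAxisOrder f x ≠ 0) (hR : 0 < R) {a b : ℝ}
    (hle : ∀ w : ℂ, ‖w‖ = R → w.re ≠ 0 → Real.log ‖f w‖ ≤ a - b * Real.log (|w.re| / R)) :
    jensenSum (imaginaryAxisOrder f) Z R ≤ a + b * Real.log 2 - Real.log ‖f 0‖ := by
  have := circleAverage_mono_of_re_ne_zero hR (circleIntegrable_log_norm hf)
    (circleIntegrable_add_mul_log_abs_re_div hR a (-b)) fun w hw hw0 ↦ by linarith [hle w hw hw0]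
  rw [circleAverage_add_mul_log_abs_re_div hR,
    circleAverage_log_norm_eq_jensenSum_add hf h0 hre hZ hR] at this
  linarith

lemma le_jensenSum_of_le_log_norm (hf : Differentiable ℂ f) (h0 : f 0 ≠ 0)
    (hre : ∀ w, f w = 0 → w.re = 0)
    (hZ : ∀ R x, x ∈ Z R ↔ |x| ≤ R ∧ imaginaryAxisOrder f x ≠ 0) (hR : 0 < R) {a b c : ℝ}
    (hc : 0 ≤ c) (hle : ∀ w : ℂ, ‖w‖ = R → w.re ≠ 0 →
      c * |w.re| - a + b * Real.log (|w.re| / R) ≤ Real.log ‖f w‖) :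
    c * R * (1 - Real.log 2) - a - b * Real.log 2 - Real.log ‖f 0‖ ≤
      jensenSum (imaginaryAxisOrder f) Z R := by
  have := circleAverage_mono_of_re_ne_zero hR
    (circleIntegrable_add_mul_log_abs_re_div hR (c * R - a) (c * R + b))
    (circleIntegrable_log_norm hf) fun w hw hw0 ↦ by
      have hlog : Real.log (|w.re| / R) ≤ |w.re| / R - 1 :=
        Real.log_le_sub_one_of_pos (div_pos (abs_pos.2 hw0) hR)
      have hmul : c * R * Real.log (|w.re| / R) ≤ c * |w.re| - c * R := by
        refine (mul_le_mul_of_nonneg_left hlog (by positivity)).trans_eq ?_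
        field_simp
      linarith [hle w hw hw0]
  rw [circleAverage_add_mul_log_abs_re_div hR,
    circleAverage_log_norm_eq_jensenSum_add hf h0 hre hZ hR] at this
  linarith

end Jensen

section HalfPlane

variable {σ τ : ℝ}

lemma setOf_lt_re_mem_nhds {s : ℂ} (hs : σ < s.re) : {z : ℂ | σ < z.re} ∈ 𝓝 s :=
  (isOpen_lt continuous_const Complex.continuous_re).mem_nhds hs

lemma eq_of_analyticOnNhd_setOf_lt_re {f g : ℂ → ℂ} (hf : AnalyticOnNhd ℂ f {z | σ < z.re})
    (hg : AnalyticOnNhd ℂ g {z | σ < z.re}) (heq : ∀ z : ℂ, τ < z.re → f z = g z) {s : ℂ}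
    (hs : σ < s.re) : f s = g s := by
  have hσ : σ < ((max σ τ + 1 : ℝ) : ℂ).re := by
    rw [Complex.ofReal_re]
    linarith [le_max_left σ τ]
  have hτ : τ < ((max σ τ + 1 : ℝ) : ℂ).re := by
    rw [Complex.ofReal_re]
    linarith [le_max_right σ τ]
  exact hf.eqOn_of_preconnected_of_eventuallyEq hg (convex_halfSpace_re_gt σ).isPreconnected hσ
    (mem_of_superset (setOf_lt_re_mem_nhds hτ) heq) hs

lemma exists_differentiableOn_ball_eq_of_deriv_eq {F h : ℂ → ℂ} {c : ℂ} {r : ℝ} {V : Set ℂ}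
    (hV : IsOpen V) (hVc : IsPreconnected V) (hVsub : V ⊆ Metric.ball c r)
    (hF : DifferentiableOn ℂ F V) (hh : DifferentiableOn ℂ h (Metric.ball c r))
    (hFh : ∀ z ∈ V, deriv F z = h z) :
    ∃ G : ℂ → ℂ, DifferentiableOn ℂ G (Metric.ball c r) ∧ ∀ z ∈ V, G z = F z := by
  obtain ⟨G, hG⟩ := hh.isExactOn_ball
  have hder : ∀ z ∈ V, HasDerivAt (fun s ↦ F s - G s) 0 z := fun z hz ↦ by
    have h := (hF.differentiableAt (hV.mem_nhds hz)).hasDerivAt.sub (hG z (hVsub hz))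
    rwa [hFh z hz, sub_self] at h
  obtain ⟨k, hk⟩ : ∃ k, ∀ z ∈ V, F z - G z = k :=
    hV.exists_is_const_of_deriv_eq_zero hVc
      (fun z hz ↦ (hder z hz).differentiableAt.differentiableWithinAt) fun z hz ↦ (hder z hz).deriv
  exact ⟨fun z ↦ G z + k, fun z hz ↦
    ((hG z hz).differentiableAt.add_const k).differentiableWithinAt,
    fun z hz ↦ by rw [← hk z hz]; ring⟩

end HalfPlane

section Landau

variable {Ω : Type*} {mΩ : MeasurableSpace Ω} {μ : Measure Ω}

lemma integrable_of_hasSum_of_summable_integral {f : ℕ → Ω → ℝ} {g : Ω → ℝ}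
    (hf : ∀ n, Integrable (f n) μ) (hf0 : ∀ n, 0 ≤ᵐ[μ] f n)
    (hsum : Summable fun n ↦ ∫ ω, f n ω ∂μ) (hg : ∀ᵐ ω ∂μ, HasSum (f · ω) (g ω)) :
    Integrable g μ := by
  refine ⟨aestronglyMeasurable_of_tendsto_ae atTop
    (fun N ↦ (integrable_finsetSum (Finset.range N) fun n _ ↦ hf n).aestronglyMeasurable)
    (hg.mono fun ω hω ↦ hω.tendsto_sum_nat), ?_⟩
  have hseries : ∀ᵐ ω ∂μ, ENNReal.ofReal ‖g ω‖ = ∑' n, ENNReal.ofReal (f n ω) := by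
    filter_upwards [hg, ae_all_iff.2 hf0] with ω hω hω0
    rw [← hω.tsum_eq, Real.norm_of_nonneg (tsum_nonneg hω0),
      ENNReal.ofReal_tsum_of_nonneg hω0 hω.summable]
  rw [hasFiniteIntegral_iff_norm, lintegral_congr_ae hseries,
    lintegral_tsum fun n ↦ (hf n).aemeasurable.ennreal_ofReal]
  simp only [← ofReal_integral_eq_lintegral_ofReal (hf _) (hf0 _)]
  rw [← ENNReal.ofReal_tsum_of_nonneg (fun n ↦ integral_nonneg_of_ae (hf0 n)) hsum]
  exact ENNReal.ofReal_lt_top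

variable {X : Ω → ℝ} {σ c d r ε : ℝ}

lemma isUpperSet_integrableExpSet (hX : Measurable X) (hX0 : ∀ᵐ ω ∂μ, X ω ≤ 0) :
    IsUpperSet (integrableExpSet X μ) := fun c d hcd hc ↦ by
  refine Integrable.mono' hc (by fun_prop) ?_
  filter_upwards [hX0] with ω hω
  rw [Real.norm_of_nonneg (Real.exp_pos _).le]
  exact Real.exp_le_exp.2 (mul_le_mul_of_nonpos_right hcd hω)

lemma mem_interior_integrableExpSet (hS : ∀ c, σ < c → c ∈ integrableExpSet X μ) (hc : σ < c) :
    c ∈ interior (integrableExpSet X μ) :=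
  mem_interior.2 ⟨Set.Ioi σ, fun _ h ↦ hS _ h, isOpen_Ioi, hc⟩

lemma sub_mem_integrableExpSet_of_summable (hX0 : ∀ᵐ ω ∂μ, X ω ≤ 0) (hr : 0 ≤ r)
    (hint : ∀ n : ℕ, Integrable (fun ω ↦ X ω ^ n * Real.exp (c * X ω)) μ)
    (hsum : Summable fun n : ℕ ↦
      (-r) ^ n / (n.factorial : ℝ) * ∫ ω, X ω ^ n * Real.exp (c * X ω) ∂μ) :
    c - r ∈ integrableExpSet X μ := by
  refine integrable_of_hasSum_of_summable_integral (fun n ↦ (hint n).const_mul _) (fun n ↦ ?_)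
    (hsum.congr fun n ↦ (integral_const_mul _ _).symm) (Eventually.of_forall fun ω ↦ ?_)
  · filter_upwards [hX0] with ω hω
    have hrX : 0 ≤ -r * X ω := mul_nonneg_of_nonpos_of_nonpos (neg_nonpos.2 hr) hω
    rw [Pi.zero_apply, div_mul_eq_mul_div, ← mul_assoc, ← mul_pow]
    positivity
  · have hexp := (NormedSpace.expSeries_div_hasSum_exp (-r * X ω)).mul_right (Real.exp (c * X ω))
    rw [← Real.exp_eq_exp_ℝ, ← Real.exp_add, show -r * X ω + c * X ω = (c - r) * X ω by ring]
      at hexp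
    exact hexp.congr_fun fun n ↦ by rw [mul_pow]; ring

lemma iteratedDeriv_complexMGF_ofReal (hc : c ∈ interior (integrableExpSet X μ)) (n : ℕ) :
    iteratedDeriv n (complexMGF X μ) c = ((∫ ω, X ω ^ n * Real.exp (c * X ω) ∂μ : ℝ) : ℂ) := by
  rw [iteratedDeriv_complexMGF (by simpa using hc), ← integral_complex_ofReal]
  push_cast
  rfl

-- The Taylor coefficients of an analytic continuation `g` at `σ + ε / 4` are moments of constant
-- sign up to `(-1) ^ n`, so its convergent Taylor series at `σ - ε / 4` bounds the integral there.
theorem sub_mem_integrableExpSet_of_differentiableOn_ball (hX0 : ∀ᵐ ω ∂μ, X ω ≤ 0) (hε : 0 < ε)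
    (hS : ∀ c, σ < c → c ∈ integrableExpSet X μ) {g : ℂ → ℂ}
    (hg : DifferentiableOn ℂ g (Metric.ball (σ : ℂ) ε))
    (hgX : ∀ s ∈ Metric.ball (σ : ℂ) ε, σ < s.re → g s = complexMGF X μ s) :
    σ - ε / 4 ∈ integrableExpSet X μ := by
  set c : ℝ := σ + ε / 4 with hc
  have hcint := mem_interior_integrableExpSet hS (show σ < c by linarith)
  have hsub : Metric.ball (c : ℂ) (3 * ε / 4) ⊆ Metric.ball (σ : ℂ) ε := by
    apply Metric.ball_subset_ball'
    rw [Complex.dist_eq, ← Complex.ofReal_sub, Complex.norm_real, Real.norm_eq_abs, hc,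
      add_sub_cancel_left, abs_of_pos (by linarith)]
    linarith
  have hmem : ((c - ε / 2 : ℝ) : ℂ) ∈ Metric.ball (c : ℂ) (3 * ε / 4) := by
    rw [Metric.mem_ball, Complex.dist_eq, ← Complex.ofReal_sub, Complex.norm_real, Real.norm_eq_abs,
      sub_sub_cancel_left, abs_neg, abs_of_pos (by linarith)]
    linarith
  have hgc : g =ᶠ[𝓝 (c : ℂ)] complexMGF X μ := by
    filter_upwards [Metric.isOpen_ball.mem_nhds (hsub (Metric.mem_ball_self (by linarith))),
      setOf_lt_re_mem_nhds (show σ < (c : ℂ).re by rw [Complex.ofReal_re]; linarith)]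
      with z hzball hzre using hgX z hzball hzre
  have hsum : Summable fun n : ℕ ↦ (-(ε / 2)) ^ n / (n.factorial : ℝ) *
      ∫ ω, X ω ^ n * Real.exp (c * X ω) ∂μ := by
    refine Complex.summable_ofReal.1
      ((Complex.hasSum_taylorSeries_on_ball (hg.mono hsub) hmem).summable.congr fun n ↦ ?_)
    rw [hgc.iteratedDeriv_eq n, iteratedDeriv_complexMGF_ofReal hcint]
    simp only [smul_eq_mul]
    push_cast
    ring
  have hlt := sub_mem_integrableExpSet_of_summable hX0 (half_pos hε).le
    (integrable_pow_mul_exp_of_mem_interior_integrableExpSet hcint) hsum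
  rwa [hc, show σ + ε / 4 - ε / 2 = σ - ε / 4 by ring] at hlt

/-- The function `s · E[exp(sX)]`. When `X = -log` and `μ` has density `a(t)/t` on `(1, ∞)` it is
the Dirichlet series with summatory function `a`. -/
noncomputable def mulComplexMGF (X : Ω → ℝ) (μ : Measure Ω) (s : ℂ) : ℂ :=
  s * complexMGF X μ s

lemma analyticOnNhd_mulComplexMGF (hS : ∀ c, σ < c → c ∈ integrableExpSet X μ) :
    AnalyticOnNhd ℂ (mulComplexMGF X μ) {s | σ < s.re} := fun _ hs ↦
  analyticAt_id.mul (analyticAt_complexMGF (mem_interior_integrableExpSet hS hs))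

variable {f g : ℂ → ℂ} {τ τ' : ℝ}

lemma deriv_mulComplexMGF_mul_eq (hf : AnalyticOnNhd ℂ f {z | τ < z.re})
    (hg : AnalyticOnNhd ℂ g {z | τ < z.re}) (hS : ∀ c, τ < c → c ∈ integrableExpSet X μ)
    (heq : ∀ s : ℂ, τ' < s.re → deriv (mulComplexMGF X μ) s * f s = g s) {s : ℂ}
    (hs : τ < s.re) : deriv (mulComplexMGF X μ) s * f s = g s :=
  eq_of_analyticOnNhd_setOf_lt_re ((analyticOnNhd_mulComplexMGF hS).deriv.mul hf) hg heq hs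

lemma exists_sub_mem_integrableExpSet (hX0 : ∀ᵐ ω ∂μ, X ω ≤ 0) (hτ : 0 ≤ τ)
    (hf : AnalyticOnNhd ℂ f {z | τ < z.re}) (hg : AnalyticOnNhd ℂ g {z | τ < z.re})
    (hne : ∀ x : ℝ, τ < x → f x ≠ 0)
    (heq : ∀ s : ℂ, τ' < s.re → deriv (mulComplexMGF X μ) s * f s = g s) (hσ : τ < σ)
    (hS : ∀ c, σ < c → c ∈ integrableExpSet X μ) :
    ∃ δ > 0, σ - δ ∈ integrableExpSet X μ := by
  have hsub : {z : ℂ | σ < z.re} ⊆ {z | τ < z.re} := fun z hz ↦ hσ.trans hz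
  have hστ : τ < ((σ : ℝ) : ℂ).re := hσ
  obtain ⟨ε, hε, hball⟩ := Metric.mem_nhds_iff.1 (inter_mem (setOf_lt_re_mem_nhds hστ)
    ((hf _ hστ).continuousAt.eventually_ne (hne σ hσ)))
  have hz0 {z : ℂ} (hz : z ∈ Metric.ball (σ : ℂ) ε) : z ≠ 0 := by
    rintro rfl
    exact hτ.not_gt (hball hz).1
  obtain ⟨G, hG, hGF⟩ := exists_differentiableOn_ball_eq_of_deriv_eq
    (V := Metric.ball (σ : ℂ) ε ∩ {z | σ < z.re}) (F := mulComplexMGF X μ) (h := fun z ↦ g z / f z)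
    (Metric.isOpen_ball.inter (isOpen_lt continuous_const Complex.continuous_re))
    ((convex_ball _ _).inter (convex_halfSpace_re_gt σ)).isPreconnected Set.inter_subset_left
    ((analyticOnNhd_mulComplexMGF hS).differentiableOn.mono Set.inter_subset_right)
    (fun z hz ↦ ((hg z (hball hz).1).div (hf z (hball hz).1)
      (hball hz).2).differentiableAt.differentiableWithinAt)
    fun z hz ↦ (eq_div_iff (hball hz.1).2).2
      (deriv_mulComplexMGF_mul_eq (hf.mono hsub) (hg.mono hsub) hS heq hz.2)
  refine ⟨ε / 4, by positivity, sub_mem_integrableExpSet_of_differentiableOn_ball hX0 hε hS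
    (hG.div differentiableOn_id fun z hz ↦ hz0 hz) fun z hz hzσ ↦ ?_⟩
  rw [Pi.div_apply, hGF z ⟨hz, hzσ⟩]
  exact mul_div_cancel_left₀ _ (hz0 hz)

theorem mem_integrableExpSet_of_deriv_mulComplexMGF_mul_eq (hX : Measurable X)
    (hX0 : ∀ᵐ ω ∂μ, X ω ≤ 0) (hτ : 0 ≤ τ)
    (hf : AnalyticOnNhd ℂ f {z | τ < z.re}) (hg : AnalyticOnNhd ℂ g {z | τ < z.re})
    (hne : ∀ x : ℝ, τ < x → f x ≠ 0) (hS : ∀ c, τ' < c → c ∈ integrableExpSet X μ)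
    (heq : ∀ s : ℂ, τ' < s.re → deriv (mulComplexMGF X μ) s * f s = g s) (hc : τ < c) :
    c ∈ integrableExpSet X μ := by
  by_contra hcS
  have hup := isUpperSet_integrableExpSet hX hX0
  have hlb : c ∈ lowerBounds (integrableExpSet X μ) := fun d hd ↦
    le_of_not_ge fun hdc ↦ hcS (hup hdc hd)
  have hne' : (integrableExpSet X μ).Nonempty := ⟨τ' + 1, hS _ (lt_add_one τ')⟩
  obtain ⟨δ, hδ, hδS⟩ := exists_sub_mem_integrableExpSet hX0 hτ hf hg hne heq
    (hc.trans_le (le_csInf hne' hlb)) fun d hd ↦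
      let ⟨_, he, hed⟩ := exists_lt_of_csInf_lt hne' hd
      hup hed.le he
  linarith [csInf_le ⟨c, hlb⟩ hδS]

end Landau

section MellinMeasure

variable {a : ℝ → ℝ}

/-- The function `t ↦ -log t`, the random variable whose moment generating function under
`mellinMeasure a` is a Mellin transform of `a`. -/
noncomputable def negLog (t : ℝ) : ℝ := -Real.log t

lemma measurable_negLog : Measurable negLog := Real.measurable_log.neg

/-- The measure on `(1, ∞)` with density `a(t)/t`, where `a` is meant to be nonnegative. -/
noncomputable def mellinMeasure (a : ℝ → ℝ) : Measure ℝ :=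
  (volume.restrict (Set.Ioi 1)).withDensity fun t ↦ ENNReal.ofReal (a t / t)

lemma ae_mellinMeasure_one_lt (a : ℝ → ℝ) : ∀ᵐ t ∂mellinMeasure a, 1 < t :=
  (withDensity_absolutelyContinuous _ _).ae_le (ae_restrict_mem measurableSet_Ioi)

lemma ae_negLog_nonpos (a : ℝ → ℝ) : ∀ᵐ t ∂mellinMeasure a, negLog t ≤ 0 :=
  (ae_mellinMeasure_one_lt a).mono fun _ ht ↦ neg_nonpos.2 (Real.log_nonneg ht.le)

lemma integral_mellinMeasure (ha : Measurable a) (ha0 : ∀ t, 0 ≤ a t) {E : Type*}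
    [NormedAddCommGroup E] [NormedSpace ℝ E] (g : ℝ → E) :
    ∫ t, g t ∂mellinMeasure a = ∫ t in Set.Ioi 1, (a t / t) • g t := by
  rw [mellinMeasure, integral_withDensity_eq_integral_toReal_smul (by fun_prop)
    (Eventually.of_forall fun _ ↦ ENNReal.ofReal_lt_top)]
  refine setIntegral_congr_fun measurableSet_Ioi fun t ht ↦ ?_
  rw [ENNReal.toReal_ofReal (div_nonneg (ha0 t) (one_pos.trans ht).le)]

lemma complexMGF_negLog_mellinMeasure (ha : Measurable a) (ha0 : ∀ t, 0 ≤ a t) (s : ℂ) :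
    complexMGF negLog (mellinMeasure a) s =
      ∫ t in Set.Ioi (1 : ℝ), (a t : ℂ) * (t : ℂ) ^ (-(s + 1)) := by
  rw [complexMGF, integral_mellinMeasure ha ha0]
  refine setIntegral_congr_fun measurableSet_Ioi fun t ht ↦ ?_
  have ht0 : (0 : ℝ) < t := one_pos.trans ht
  have htc : (t : ℂ) ≠ 0 := by exact_mod_cast ht0.ne'
  simp only [negLog, Complex.real_smul]
  rw [show -(s + 1) = -s - 1 by ring, Complex.cpow_sub _ _ htc, Complex.cpow_one,
    Complex.cpow_def_of_ne_zero htc, ← Complex.ofReal_log ht0.le]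
  push_cast
  rw [show s * -(Real.log t : ℂ) = (Real.log t : ℂ) * -s by ring]
  field_simp

lemma mem_integrableExpSet_mellinMeasure (ha : Measurable a) (ha0 : ∀ t, 0 ≤ a t) {K r c : ℝ}
    (hK : ∀ t, 1 < t → a t ≤ K * t ^ r) (hc : r < c) :
    c ∈ integrableExpSet negLog (mellinMeasure a) := by
  change Integrable (fun t ↦ Real.exp (c * negLog t)) (mellinMeasure a)
  rw [mellinMeasure, integrable_withDensity_iff_integrable_smul' (by fun_prop)
    (Eventually.of_forall fun _ ↦ ENNReal.ofReal_lt_top)]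
  have hmaj : IntegrableOn (fun t : ℝ ↦ K * t ^ (r - c - 1)) (Set.Ioi 1) :=
    (integrableOn_Ioi_rpow_of_lt (by linarith) one_pos).const_mul K
  have hmeas := measurable_negLog
  refine Integrable.mono' hmaj (by fun_prop : Measurable _).aestronglyMeasurable
    ((ae_restrict_mem measurableSet_Ioi).mono fun t ht ↦ ?_)
  have ht0 : (0 : ℝ) < t := one_pos.trans ht
  rw [ENNReal.toReal_ofReal (div_nonneg (ha0 t) ht0.le), smul_eq_mul, norm_mul,
    Real.norm_of_nonneg (div_nonneg (ha0 t) ht0.le), Real.norm_of_nonneg (Real.exp_pos _).le,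
    negLog, show c * -Real.log t = Real.log t * -c by ring, ← Real.rpow_def_of_pos ht0]
  calc a t / t * t ^ (-c) ≤ K * t ^ r / t * t ^ (-c) := by gcongr; exact hK t ht
    _ = K * t ^ (r - c - 1) := by
      rw [show r - c - 1 = r + -c + -1 by ring, Real.rpow_add ht0, Real.rpow_add ht0,
        Real.rpow_neg_one]
      ring

end MellinMeasure

section SummatoryFunction

variable {A : ℕ → ℝ} {K r : ℝ}

lemma measurable_comp_natFloor (A : ℕ → ℝ) : Measurable fun t : ℝ ↦ A ⌊t⌋₊ :=
  (measurable_from_nat (f := A)).comp Nat.measurable_floor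

lemma mem_integrableExpSet_summatory (hA0 : ∀ n, 0 ≤ A n) (hr : 0 ≤ r)
    (hAK : ∀ n, 1 ≤ n → A n ≤ K * n ^ r) {c : ℝ} (hc : r < c) :
    c ∈ integrableExpSet negLog (mellinMeasure fun t ↦ A ⌊t⌋₊) := by
  have hK : 0 ≤ K := (hA0 1).trans (by simpa using hAK 1 le_rfl)
  refine mem_integrableExpSet_mellinMeasure (K := K) (measurable_comp_natFloor A) (fun t ↦ hA0 _)
    (fun t ht ↦ ?_) hc
  calc A ⌊t⌋₊ ≤ K * (⌊t⌋₊ : ℝ) ^ r := hAK _ ((Nat.one_le_floor_iff t).2 ht.le)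
    _ ≤ K * t ^ r := by gcongr; exact Nat.floor_le (one_pos.trans ht).le

lemma LSeries_eq_mulComplexMGF {f : ℕ → ℂ} (hA0 : ∀ n, 0 ≤ A n) (hr : 0 ≤ r)
    (hAK : ∀ n, 1 ≤ n → A n ≤ K * n ^ r) (hfA : ∀ n, 1 ≤ n → ∑ k ∈ Icc 1 n, f k = A n) {s : ℂ}
    (hf : LSeriesSummable f s) (hs : r < s.re) :
    LSeries f s = mulComplexMGF negLog (mellinMeasure fun t ↦ A ⌊t⌋₊) s := by
  have hO : (fun n ↦ ∑ k ∈ Icc 1 n, f k) =O[atTop] fun n ↦ (n : ℝ) ^ r := by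
    refine Asymptotics.IsBigO.of_bound K ?_
    filter_upwards [eventually_ge_atTop 1] with n hn
    rw [hfA n hn, Complex.norm_real, Real.norm_of_nonneg (hA0 n),
      Real.norm_of_nonneg (by positivity)]
    exact hAK n hn
  rw [LSeries_eq_mul_integral _ hr hs hf hO, mulComplexMGF,
    complexMGF_negLog_mellinMeasure (measurable_comp_natFloor A) fun t ↦ hA0 _]
  congr 1
  refine setIntegral_congr_fun measurableSet_Ioi fun t ht ↦ ?_
  simp only [hfA _ ((Nat.one_le_floor_iff t).2 (le_of_lt ht))]

end SummatoryFunction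

/-- The nontrivial Dirichlet character modulo 4, with complex values. -/
noncomputable def chi4 : DirichletCharacter ℂ 4 := ZMod.χ₄.ringHomComp (Int.castRingHom ℂ)

local notation "L" => DirichletCharacter.LFunction chi4

section CharacterModFour

lemma chi4_apply (n : ℕ) : chi4 (n : ZMod 4) = ((ZMod.χ₄ (n : ZMod 4) : ℤ) : ℂ) := rfl

lemma chi4_neg_one : chi4 (-1) = -1 := by
  simp [chi4, MulChar.ringHomComp_apply, show ZMod.χ₄ (-1) = -1 by decide]

lemma chi4_ne_one : chi4 ≠ 1 := by
  intro h
  have hneg := chi4_neg_one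
  rw [h, MulChar.one_apply isUnit_neg_one] at hneg
  norm_num at hneg

lemma differentiable_L : Differentiable ℂ L :=
  DirichletCharacter.differentiable_LFunction chi4_ne_one

lemma analyticAt_L (s : ℂ) : AnalyticAt ℂ L s := differentiable_L.analyticAt s

lemma L_ne_zero_of_one_le_re {s : ℂ} (hs : 1 ≤ s.re) : L s ≠ 0 :=
  DirichletCharacter.LFunction_ne_zero_of_one_le_re chi4 (.inl chi4_ne_one) hs

/-- The summatory function of the character modulo 4. -/
noncomputable def chi4Sum (n : ℕ) : ℝ := if n % 4 = 1 ∨ n % 4 = 2 then 1 else 0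

lemma sum_chi4 (n : ℕ) : ∑ k ∈ Icc 1 n, chi4 (k : ZMod 4) = chi4Sum n := by
  simp only [chi4_apply, chi4Sum]
  induction n with
  | zero => simp
  | succ n ih =>
    rw [Finset.sum_Icc_succ_top (by lia), ih, ZMod.χ₄_nat_eq_if_mod_four]
    split_ifs <;> first | lia | norm_num

lemma chi4Sum_nonneg (n : ℕ) : 0 ≤ chi4Sum n := by
  unfold chi4Sum
  split_ifs <;> norm_num

lemma chi4Sum_le (n : ℕ) : chi4Sum n ≤ 1 * n ^ (0 : ℝ) := by
  rw [chi4Sum, Real.rpow_zero]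
  split_ifs <;> norm_num

lemma mem_integrableExpSet_chi4Sum {c : ℝ} (hc : 0 < c) :
    c ∈ integrableExpSet negLog (mellinMeasure fun t ↦ chi4Sum ⌊t⌋₊) :=
  mem_integrableExpSet_summatory chi4Sum_nonneg le_rfl (fun n _ ↦ chi4Sum_le n) hc

lemma L_eq_mulComplexMGF {s : ℂ} (hs : 0 < s.re) :
    L s = mulComplexMGF negLog (mellinMeasure fun t ↦ chi4Sum ⌊t⌋₊) s := by
  refine eq_of_analyticOnNhd_setOf_lt_re (τ := 1) (fun z _ ↦ analyticAt_L z)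
    (analyticOnNhd_mulComplexMGF fun c hc ↦ mem_integrableExpSet_chi4Sum hc) (fun z hz ↦ ?_) hs
  rw [DirichletCharacter.LFunction_eq_LSeries chi4 hz]
  exact LSeries_eq_mulComplexMGF chi4Sum_nonneg le_rfl (fun n _ ↦ chi4Sum_le n)
    (fun n _ ↦ sum_chi4 n) (DirichletCharacter.LSeriesSummable_of_one_lt_re chi4 hz)
    (one_pos.trans hz)

lemma L_ofReal_ne_zero {x : ℝ} (hx : 0 < x) : L x ≠ 0 := by
  have hμ : mellinMeasure (fun t ↦ chi4Sum ⌊t⌋₊) ≠ 0 := fun h ↦ by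
    have hL := L_eq_mulComplexMGF (s := 1) (by simp)
    rw [h, mulComplexMGF, complexMGF, integral_zero_measure, mul_zero] at hL
    exact L_ne_zero_of_one_le_re (by simp) hL
  rw [L_eq_mulComplexMGF (by simpa using hx), mulComplexMGF, complexMGF_ofReal]
  exact mul_ne_zero (by exact_mod_cast hx.ne')
    (by exact_mod_cast (mgf_pos' hμ (mem_integrableExpSet_chi4Sum hx)).ne')

end CharacterModFour

section PrimeSum

open ArithmeticFunction (vonMangoldt)

/-- The coefficients of `∑ χ₄(p) p⁻ˢ`, the sum running over primes. -/
noncomputable def primeCoeff (n : ℕ) : ℂ := if n.Prime then chi4 (n : ZMod 4) else 0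

open Classical in
/-- The coefficients of `-(ζ'/ζ)(2s)`. -/
noncomputable def squareCoeff (n : ℕ) : ℂ := if IsSquare n then (vonMangoldt n : ℂ) else 0

/-- The coefficients of the difference between `-L'/L` and its contributions from primes and from
even prime powers. They vanish on primes and on squares of odd primes, which makes the series
converge absolutely on the line `re s = 1/2`. -/
noncomputable def errorCoeff (n : ℕ) : ℂ :=
  chi4 (n : ZMod 4) * (vonMangoldt n : ℂ) - squareCoeff n - LSeries.logMul primeCoeff n

lemma norm_primeCoeff_le_one (n : ℕ) : ‖primeCoeff n‖ ≤ 1 := by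
  unfold primeCoeff
  split_ifs
  · exact chi4.norm_le_one _
  · simp

lemma summable_primeCoeff {s : ℂ} (hs : 1 < s.re) : LSeriesSummable primeCoeff s :=
  LSeriesSummable_of_bounded_of_one_lt_re (m := 1) (fun n _ ↦ norm_primeCoeff_le_one n) hs

lemma abscissaOfAbsConv_primeCoeff_le_one : LSeries.abscissaOfAbsConv primeCoeff ≤ 1 :=
  LSeries.abscissaOfAbsConv_le_of_forall_lt_LSeriesSummable' fun y hy ↦
    summable_primeCoeff (by rw [Complex.ofReal_re]; exact_mod_cast hy)

lemma term_squareCoeff_sq (s : ℂ) (m : ℕ) :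
    LSeries.term squareCoeff s (m ^ 2) =
      LSeries.term (fun n ↦ (vonMangoldt n : ℂ)) (2 * s) m := by
  rcases eq_or_ne m 0 with rfl | hm
  · simp
  have hmc : (m : ℂ) ≠ 0 := by exact_mod_cast hm
  rw [LSeries.term_of_ne_zero (by positivity), LSeries.term_of_ne_zero hm, squareCoeff,
    if_pos (IsSquare.sq m), ArithmeticFunction.vonMangoldt_apply_pow two_ne_zero, sq, Nat.cast_mul,
    Complex.natCast_mul_natCast_cpow, two_mul, Complex.cpow_add _ _ hmc]

lemma term_squareCoeff_of_not_isSquare (s : ℂ) {n : ℕ} (hn : ¬IsSquare n) :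
    LSeries.term squareCoeff s n = 0 := by
  simp [LSeries.term_def, squareCoeff, hn]

lemma hasSum_squareCoeff {s : ℂ} (hs : 1 / 2 < s.re) :
    LSeriesHasSum squareCoeff s (-deriv riemannZeta (2 * s) / riemannZeta (2 * s)) := by
  have hs2 : 1 < (2 * s).re := by
    rw [two_mul, Complex.add_re]
    linarith
  rw [← ArithmeticFunction.LSeries_vonMangoldt_eq_deriv_riemannZeta_div hs2, LSeriesHasSum,
    ← (Nat.pow_left_injective two_ne_zero).hasSum_iff fun n hn ↦
      term_squareCoeff_of_not_isSquare s fun h ↦ hn ?_]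
  · exact (ArithmeticFunction.LSeriesSummable_vonMangoldt hs2).LSeriesHasSum.congr_fun
      (term_squareCoeff_sq s)
  · obtain ⟨r, rfl⟩ := h
    exact ⟨r, sq r⟩

lemma hasSum_errorCoeff {s : ℂ} (hs : 1 < s.re) :
    LSeriesHasSum errorCoeff s (-deriv L s / L s -
      -deriv riemannZeta (2 * s) / riemannZeta (2 * s) - -deriv (LSeries primeCoeff) s) := by
  have habs : LSeries.abscissaOfAbsConv primeCoeff < s.re :=
    abscissaOfAbsConv_primeCoeff_le_one.trans_lt (by exact_mod_cast hs)
  have hL := (DirichletCharacter.LSeriesSummable_twist_vonMangoldt chi4 hs).LSeriesHasSum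
  rw [DirichletCharacter.LSeries_twist_vonMangoldt_eq chi4 hs,
    ← DirichletCharacter.deriv_LFunction_eq_deriv_LSeries chi4 hs,
    ← DirichletCharacter.LFunction_eq_LSeries chi4 hs] at hL
  rw [LSeries_deriv habs, neg_neg]
  exact (hL.sub (hasSum_squareCoeff (by linarith))).sub
    (LSeriesSummable_logMul_of_lt_re habs).LSeriesHasSum

lemma deriv_LSeries_primeCoeff {s : ℂ} (hs : 1 < s.re) :
    deriv (LSeries primeCoeff) s = deriv L s / L s -
      deriv riemannZeta (2 * s) / riemannZeta (2 * s) + LSeries errorCoeff s := by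
  rw [(hasSum_errorCoeff hs).LSeries_eq]
  ring

lemma errorCoeff_prime {p : ℕ} (hp : p.Prime) : errorCoeff p = 0 := by
  rw [errorCoeff, squareCoeff, if_neg hp.prime.irreducible.not_isSquare, LSeries.logMul, primeCoeff,
    if_pos hp, ArithmeticFunction.vonMangoldt_apply_prime hp, ← Complex.natCast_log]
  push_cast
  ring

lemma errorCoeff_prime_sq {p : ℕ} (hp : p.Prime) (hp2 : p ≠ 2) : errorCoeff (p ^ 2) = 0 := by
  have hχ : chi4 ((p ^ 2 : ℕ) : ZMod 4) = 1 := by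
    have hodd : p % 2 = 1 := hp.eq_two_or_odd.resolve_left hp2
    rw [chi4_apply, ZMod.χ₄_nat_one_mod_four, Int.cast_one]
    rcases (by lia : p % 4 = 1 ∨ p % 4 = 3) with h | h <;> simp [Nat.pow_mod, h]
  rw [errorCoeff, squareCoeff, if_pos (IsSquare.sq p), LSeries.logMul, primeCoeff,
    if_neg (Nat.Prime.not_prime_pow le_rfl), ArithmeticFunction.vonMangoldt_apply_pow two_ne_zero,
    hχ]
  ring

lemma eq_two_or_two_le_of_errorCoeff_ne_zero {p k : ℕ} (hp : p.Prime)
    (h : errorCoeff (p ^ (k + 1)) ≠ 0) : p = 2 ∨ 2 ≤ k := by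
  by_contra! hcon
  rcases (by lia : k = 0 ∨ k = 1) with rfl | rfl
  · exact h (by simpa using errorCoeff_prime hp)
  · exact h (errorCoeff_prime_sq hp hcon.1)

lemma norm_errorCoeff_le (n : ℕ) : ‖errorCoeff n‖ ≤ 2 * vonMangoldt n := by
  have hΛ := ArithmeticFunction.vonMangoldt_nonneg (n := n)
  by_cases hp : n.Prime
  · rw [errorCoeff_prime hp, norm_zero]
    positivity
  have hχ : ‖chi4 (n : ZMod 4) * (vonMangoldt n : ℂ)‖ ≤ vonMangoldt n := by
    rw [norm_mul, Complex.norm_real, Real.norm_of_nonneg hΛ]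
    exact mul_le_of_le_one_left hΛ (chi4.norm_le_one _)
  have hsq : ‖squareCoeff n‖ ≤ vonMangoldt n := by
    unfold squareCoeff
    split_ifs
    · rw [Complex.norm_real, Real.norm_of_nonneg hΛ]
    · rwa [norm_zero]
  rw [errorCoeff, LSeries.logMul, primeCoeff, if_neg hp, mul_zero, sub_zero]
  exact (norm_sub_le _ _).trans (by linarith)

lemma errorCoeff_of_not_isPrimePow {n : ℕ} (hn : ¬IsPrimePow n) : errorCoeff n = 0 := by
  have h := norm_errorCoeff_le n
  rwa [ArithmeticFunction.vonMangoldt_eq_zero_iff.2 hn, mul_zero, norm_le_zero_iff] at h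

lemma pow_three_mul_sqrt_two_pow_le {q : ℝ} (hq : √2 ≤ q) {k : ℕ} (hqk : q = √2 ∨ 2 ≤ k) :
    q ^ 3 * √2 ^ k ≤ 2 * q ^ (k + 1) := by
  have hsq : √(2 : ℝ) ^ 2 = 2 := Real.sq_sqrt zero_le_two
  rcases hqk with rfl | hk
  · calc √2 ^ 3 * √2 ^ k = √2 ^ 2 * √2 ^ (k + 1) := by ring
      _ ≤ 2 * √2 ^ (k + 1) := by rw [hsq]
  · obtain ⟨j, rfl⟩ := Nat.exists_eq_add_of_le hk
    have hq0 : 0 ≤ q := (Real.sqrt_nonneg 2).trans hq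
    calc q ^ 3 * √2 ^ (2 + j) = 2 * q ^ 3 * √2 ^ j := by rw [pow_add, hsq]; ring
      _ ≤ 2 * q ^ 3 * q ^ j := by gcongr
      _ = 2 * q ^ (2 + j + 1) := by ring

lemma natCast_pow_rpow_half (p j : ℕ) : ((p ^ j : ℕ) : ℝ) ^ (1 / 2 : ℝ) = √p ^ j := by
  rw [← Real.sqrt_eq_rpow, Nat.cast_pow, Real.sqrt_eq_rpow, Real.sqrt_eq_rpow,
    ← Real.rpow_natCast, ← Real.rpow_mul p.cast_nonneg, ← Real.rpow_natCast,
    ← Real.rpow_mul p.cast_nonneg, mul_comm]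

lemma norm_term_errorCoeff_half_le {p : ℕ} (hp : p.Prime) (k : ℕ) :
    ‖LSeries.term errorCoeff ((1 / 2 : ℝ) : ℂ) (p ^ (k + 1))‖ ≤
      ‖LSeries.term (fun n ↦ (vonMangoldt n : ℂ)) ((3 / 2 : ℝ) : ℂ) p‖ * (4 * √(1 / 2) ^ k) := by
  rcases eq_or_ne (errorCoeff (p ^ (k + 1))) 0 with h | h
  · rw [LSeries.term_of_ne_zero (pow_ne_zero _ hp.ne_zero), h, zero_div, norm_zero]
    positivity
  have hpow := pow_three_mul_sqrt_two_pow_le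
    (Real.sqrt_le_sqrt (by exact_mod_cast hp.two_le : (2 : ℝ) ≤ p))
    ((eq_two_or_two_le_of_errorCoeff_ne_zero hp h).imp_left fun h2 ↦ by rw [h2, Nat.cast_ofNat])
  have hp32 : (p : ℝ) ^ (3 / 2 : ℝ) = √p ^ 3 := by
    rw [Real.sqrt_eq_rpow, ← Real.rpow_natCast, ← Real.rpow_mul p.cast_nonneg]
    norm_num
  have hb := norm_errorCoeff_le (p ^ (k + 1))
  rw [ArithmeticFunction.vonMangoldt_apply_pow k.succ_ne_zero] at hb
  have hp0 : 0 < √(p : ℝ) := Real.sqrt_pos.2 (by exact_mod_cast hp.pos)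
  have hΛ := ArithmeticFunction.vonMangoldt_nonneg (n := p)
  rw [LSeries.norm_term_eq, if_neg (pow_ne_zero _ hp.ne_zero), LSeries.norm_term_eq,
    if_neg hp.ne_zero, Complex.norm_real, Real.norm_of_nonneg hΛ, Complex.ofReal_re,
    Complex.ofReal_re, natCast_pow_rpow_half, hp32, Real.sqrt_div zero_le_one, Real.sqrt_one]
  calc ‖errorCoeff (p ^ (k + 1))‖ / √p ^ (k + 1) ≤ 2 * vonMangoldt p / √p ^ (k + 1) := by gcongr
    _ ≤ vonMangoldt p * 4 / (√p ^ 3 * √2 ^ k) := by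
        rw [div_le_div_iff₀ (by positivity) (by positivity)]
        nlinarith
    _ = vonMangoldt p / √p ^ 3 * (4 * (1 / √2) ^ k) := by
        rw [div_pow, one_pow]
        field_simp

lemma summable_errorCoeff_half : LSeriesSummable errorCoeff ((1 / 2 : ℝ) : ℂ) := by
  have hinj : Function.Injective fun x : Nat.Primes × ℕ ↦ (x.1 : ℕ) ^ (x.2 + 1) :=
    Subtype.val_injective.comp Nat.Primes.prodNatEquiv.injective
  rw [LSeriesSummable, ← summable_norm_iff, ← hinj.summable_iff]
  · have hΛ : Summable fun p : Nat.Primes ↦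
        ‖LSeries.term (fun n ↦ (vonMangoldt n : ℂ)) ((3 / 2 : ℝ) : ℂ) p‖ :=
      (ArithmeticFunction.LSeriesSummable_vonMangoldt
        (by rw [Complex.ofReal_re]; norm_num)).norm.comp_injective Nat.Primes.coe_nat_injective
    have hgeom : Summable fun k : ℕ ↦ 4 * √(1 / 2 : ℝ) ^ k :=
      (summable_geometric_of_lt_one (by positivity)
        (by rw [Real.sqrt_lt' one_pos]; norm_num)).mul_left 4
    exact (hΛ.mul_of_nonneg hgeom (fun _ ↦ norm_nonneg _) fun _ ↦ by positivity).of_nonneg_of_le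
      (fun _ ↦ norm_nonneg _) fun x ↦ norm_term_errorCoeff_half_le x.1.2 x.2
  · intro n hn
    have hpp : ¬IsPrimePow n := fun h ↦ hn ⟨Nat.Primes.prodNatEquiv.symm ⟨n, h⟩,
      congrArg Subtype.val (Equiv.apply_symm_apply Nat.Primes.prodNatEquiv ⟨n, h⟩)⟩
    simp [LSeries.norm_term_eq, errorCoeff_of_not_isPrimePow hpp]

lemma analyticAt_LSeries_errorCoeff {s : ℂ} (hs : 1 / 2 < s.re) :
    AnalyticAt ℂ (LSeries errorCoeff) s :=
  LSeries_analyticOnNhd errorCoeff s (summable_errorCoeff_half.abscissaOfAbsConv_le.trans_lt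
    (by rw [Complex.ofReal_re]; exact_mod_cast hs))

lemma exists_norm_LSeries_errorCoeff_le :
    ∃ K, ∀ s : ℂ, 1 / 2 ≤ s.re → ‖LSeries errorCoeff s‖ ≤ K := by
  refine ⟨∑' n, ‖LSeries.term errorCoeff ((1 / 2 : ℝ) : ℂ) n‖, fun s hs ↦ ?_⟩
  have hle : ∀ n, ‖LSeries.term errorCoeff s n‖ ≤
      ‖LSeries.term errorCoeff ((1 / 2 : ℝ) : ℂ) n‖ :=
    LSeries.norm_term_le_of_re_le_re errorCoeff (by rw [Complex.ofReal_re]; exact hs)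
  have hsum := summable_errorCoeff_half.norm.of_nonneg_of_le (fun _ ↦ norm_nonneg _) hle
  exact (norm_tsum_le_tsum_norm hsum).trans (hsum.tsum_le_tsum hle summable_errorCoeff_half.norm)

end PrimeSum

section LogDeriv

variable {𝕜 : Type*} [NontriviallyNormedField 𝕜] [CompleteSpace 𝕜] {f g h : 𝕜 → 𝕜} {z₀ : 𝕜}

lemma ne_zero_of_deriv_eventuallyEq_mul [CharZero 𝕜] (hf : AnalyticAt 𝕜 f z₀)
    (hh : AnalyticAt 𝕜 h z₀) (hfin : analyticOrderAt f z₀ ≠ ⊤) (hfh : deriv f =ᶠ[𝓝 z₀] h * f) :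
    f z₀ ≠ 0 := by
  intro hf0
  have horder := hf.analyticOrderAt_deriv_add_one
  simp only [hf0, sub_zero] at horder
  rw [analyticOrderAt_congr hfh, analyticOrderAt_mul hh hf] at horder
  obtain ⟨n, hn⟩ := ENat.ne_top_iff_exists.1 hfin
  rw [← hn] at horder
  have hfin' : analyticOrderAt h z₀ ≠ ⊤ := fun htop ↦ by simp [htop] at horder
  obtain ⟨k, hk⟩ := ENat.ne_top_iff_exists.1 hfin'
  rw [← hk] at horder
  have : k + n + 1 = n := by exact_mod_cast horder
  lia

lemma tendsto_sub_mul_logDeriv {n : ℤ} (hg : AnalyticAt 𝕜 g z₀) (hg0 : g z₀ ≠ 0)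
    (hfg : f =ᶠ[𝓝[≠] z₀] fun z ↦ (z - z₀) ^ n * g z) :
    Tendsto (fun z ↦ (z - z₀) * logDeriv f z) (𝓝[≠] z₀) (𝓝 n) := by
  have hlim : Tendsto (fun z ↦ n + (z - z₀) * logDeriv g z) (𝓝[≠] z₀) (𝓝 n) := by
    have hcont : ContinuousAt (fun z ↦ n + (z - z₀) * logDeriv g z) z₀ :=
      continuousAt_const.add
        ((continuousAt_id.sub continuousAt_const).mul (hg.deriv.div hg hg0).continuousAt)
    simpa [ContinuousAt] using hcont.tendsto.mono_left nhdsWithin_le_nhds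
  refine hlim.congr' ?_
  filter_upwards [nhdsWithin_le_nhds (hg.continuousAt.eventually_ne hg0),
    nhdsWithin_le_nhds hg.eventually_analyticAt, eventually_eventually_nhdsWithin.2 hfg,
    self_mem_nhdsWithin] with z hgz hgan hfz hz
  have hz' : z - z₀ ≠ 0 := sub_ne_zero.2 hz
  have hsub : DifferentiableAt 𝕜 (· - z₀) z := by fun_prop
  rw [isOpen_compl_singleton.nhdsWithin_eq hz] at hfz
  rw [(logDeriv_congr_nhds hfz).eq_of_nhds, logDeriv_mul (f := fun x ↦ (x - z₀) ^ n) z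
    (zpow_ne_zero n hz') hgz (hsub.zpow (.inl hz')) hgan.differentiableAt, logDeriv_fun_zpow hsub n,
    logDeriv_apply (· - z₀), deriv_sub_const, deriv_id'']
  field_simp

end LogDeriv

section ZetaLogDeriv

lemma analyticAt_riemannZeta {s : ℂ} (hs : s ≠ 1) : AnalyticAt ℂ riemannZeta s :=
  DifferentiableOn.analyticAt (s := {1}ᶜ)
    (fun _ hz ↦ (differentiableAt_riemannZeta hz).differentiableWithinAt)
    (isOpen_compl_singleton.mem_nhds hs)

lemma analyticAt_logDeriv_riemannZeta {s : ℂ} (hs : 1 ≤ s.re) (hs1 : s ≠ 1) :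
    AnalyticAt ℂ (logDeriv riemannZeta) s :=
  (analyticAt_riemannZeta hs1).deriv.div (analyticAt_riemannZeta hs1)
    (riemannZeta_ne_zero_of_one_le_re hs)

lemma tendsto_sub_one_mul_logDeriv_riemannZeta :
    Tendsto (fun s ↦ (s - 1) * logDeriv riemannZeta s) (𝓝[≠] 1) (𝓝 (-1)) := by
  set g : ℂ → ℂ := Function.update (fun s ↦ (s - 1) * riemannZeta s) 1 1
  have hgζ : ∀ s ≠ 1, g s = (s - 1) * riemannZeta s := fun s hs ↦ Function.update_of_ne hs _ _
  have hg1 : g 1 = 1 := Function.update_self _ _ _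
  have hgan : AnalyticAt ℂ g 1 := by
    refine Complex.analyticAt_of_differentiable_on_punctured_nhds_of_continuousAt ?_
      (continuousAt_update_same.2 riemannZeta_residue_one)
    filter_upwards [self_mem_nhdsWithin] with s hs
    refine ((by fun_prop : DifferentiableAt ℂ (· - 1) s).mul
      (differentiableAt_riemannZeta hs)).congr_of_eventuallyEq ?_
    filter_upwards [isOpen_compl_singleton.mem_nhds hs] with z hz using hgζ z hz
  have hlim := tendsto_sub_mul_logDeriv (f := riemannZeta) (n := -1) hgan
    (by rw [hg1]; exact one_ne_zero) ?_
  · simpa using hlim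
  · filter_upwards [self_mem_nhdsWithin] with s hs
    rw [hgζ s hs, zpow_neg_one, inv_mul_cancel_left₀ (sub_ne_zero.2 hs)]

lemma norm_logDeriv_riemannZeta_le {s : ℂ} (hs : 1 < s.re) :
    ‖logDeriv riemannZeta s‖ ≤ ‖logDeriv riemannZeta s.re‖ := by
  have hseries {z : ℂ} (hz : 1 < z.re) :
      logDeriv riemannZeta z = -LSeries (fun n ↦ (ArithmeticFunction.vonMangoldt n : ℂ)) z := by
    rw [ArithmeticFunction.LSeries_vonMangoldt_eq_deriv_riemannZeta_div hz, neg_div, neg_neg,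
      logDeriv_apply]
  have hterm (n : ℕ) : LSeries.term (fun n ↦ (ArithmeticFunction.vonMangoldt n : ℂ)) s.re n =
      (‖LSeries.term (fun n ↦ (ArithmeticFunction.vonMangoldt n : ℂ)) s n‖ : ℝ) := by
    rw [LSeries.norm_term_eq, LSeries.term_def, Complex.norm_real,
      Real.norm_of_nonneg ArithmeticFunction.vonMangoldt_nonneg]
    split_ifs
    · rfl
    · rw [Complex.ofReal_div, Complex.ofReal_cpow n.cast_nonneg, Complex.ofReal_natCast]
  rw [hseries hs, hseries (by rwa [Complex.ofReal_re]), norm_neg, norm_neg, LSeries, LSeries,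
    tsum_congr hterm, ← Complex.ofReal_tsum, Complex.norm_real]
  exact (norm_tsum_le_tsum_norm
    (ArithmeticFunction.LSeriesSummable_vonMangoldt hs).norm).trans (Real.le_norm_self _)

end ZetaLogDeriv

section Discrepancy

/-- The discrepancy `π(n;4,1) - π(n;4,3)`, as a character sum over primes. -/
noncomputable def discrepancy (n : ℕ) : ℤ :=
  ∑ k ∈ Icc 1 n, if k.Prime then ZMod.χ₄ (k : ZMod 4) else 0

lemma discrepancy_zero : discrepancy 0 = 0 := rfl

lemma sum_primeCoeff (n : ℕ) : ∑ k ∈ Icc 1 n, primeCoeff k = ((discrepancy n : ℝ) : ℂ) := by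
  rw [discrepancy]
  push_cast
  exact sum_congr rfl fun k _ ↦ by rw [primeCoeff, chi4_apply]; split_ifs <;> simp

lemma abs_discrepancy_le (n : ℕ) : |(discrepancy n : ℝ)| ≤ n := by
  rw [← Real.norm_eq_abs, ← Complex.norm_real, ← sum_primeCoeff]
  calc ‖∑ k ∈ Icc 1 n, primeCoeff k‖ ≤ ∑ k ∈ Icc 1 n, 1 :=
        norm_sum_le_of_le _ fun k _ ↦ norm_primeCoeff_le_one k
    _ = n := by simp

/-- The measure whose Mellin transform is `(C - ∑ χ₄(p) p⁻ˢ) / s`. It is meant for upper bounds `C`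
of the discrepancy, for which its density is nonnegative before truncation. -/
noncomputable def discrepancyMeasure (C : ℝ) : Measure ℝ :=
  mellinMeasure fun t ↦ C - discrepancy ⌊t⌋₊

variable {C : ℝ} (hC : ∀ n, (discrepancy n : ℝ) ≤ C)

include hC

lemma sub_discrepancy_nonneg (n : ℕ) : 0 ≤ C - discrepancy n := sub_nonneg.2 (hC n)

lemma sub_discrepancy_le (n : ℕ) (hn : 1 ≤ n) : C - discrepancy n ≤ (C + 1) * n ^ (1 : ℝ) := by
  have hC0 : 0 ≤ C := by simpa [discrepancy_zero] using hC 0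
  have hn1 : (1 : ℝ) ≤ n := by exact_mod_cast hn
  rw [Real.rpow_one]
  nlinarith [neg_abs_le (discrepancy n : ℝ), abs_discrepancy_le n]

lemma mulComplexMGF_discrepancyMeasure_of_one_lt_re {s : ℂ} (hs : 1 < s.re) :
    mulComplexMGF negLog (discrepancyMeasure C) s = C - LSeries primeCoeff s := by
  have hδ : LSeriesSummable LSeries.delta s := by
    rw [LSeriesSummable, funext (LSeries.term_delta s)]
    exact (hasSum_ite_eq 1 (1 : ℂ)).summable
  have hP := summable_primeCoeff hs
  have hsum (n : ℕ) (hn : 1 ≤ n) :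
      ∑ k ∈ Icc 1 n, ((C : ℂ) • LSeries.delta - primeCoeff) k = ((C - discrepancy n : ℝ) : ℂ) := by
    simp [LSeries.delta, sum_sub_distrib, sum_primeCoeff, hn]
  rw [discrepancyMeasure, ← LSeries_eq_mulComplexMGF (sub_discrepancy_nonneg hC) zero_le_one
    (sub_discrepancy_le hC) hsum ((hδ.smul _).sub hP) hs, LSeries_sub (hδ.smul _) hP,
    LSeries_smul, LSeries_delta, Pi.one_apply, mul_one]

lemma deriv_mulComplexMGF_discrepancyMeasure_of_one_lt_re {s : ℂ} (hs : 1 < s.re) :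
    deriv (mulComplexMGF negLog (discrepancyMeasure C)) s =
      logDeriv riemannZeta (2 * s) - LSeries errorCoeff s - logDeriv L s := by
  have heq : mulComplexMGF negLog (discrepancyMeasure C) =ᶠ[𝓝 s]
      fun z ↦ C - LSeries primeCoeff z := by
    filter_upwards [setOf_lt_re_mem_nhds hs] with z hz
      using mulComplexMGF_discrepancyMeasure_of_one_lt_re hC hz
  rw [heq.deriv_eq, deriv_const_sub, deriv_LSeries_primeCoeff hs, logDeriv_apply, logDeriv_apply]
  ring

omit hC in
lemma analyticAt_logDeriv_riemannZeta_two_mul_sub {s : ℂ} (hs : 1 / 2 < s.re) :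
    AnalyticAt ℂ (fun z ↦ logDeriv riemannZeta (2 * z) - LSeries errorCoeff z) s := by
  have hre : 1 < (2 * s).re := by
    rw [two_mul, Complex.add_re]
    linarith
  have hζ := analyticAt_logDeriv_riemannZeta hre.le fun h ↦ by simp [h] at hre
  exact (hζ.comp_of_eq (analyticAt_const.mul analyticAt_id) rfl).sub
    (analyticAt_LSeries_errorCoeff hs)

lemma deriv_mulComplexMGF_discrepancyMeasure_mul_of_one_lt_re {s : ℂ} (hs : 1 < s.re) :
    deriv (mulComplexMGF negLog (discrepancyMeasure C)) s * L s =
      (logDeriv riemannZeta (2 * s) - LSeries errorCoeff s) * L s - deriv L s := by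
  rw [deriv_mulComplexMGF_discrepancyMeasure_of_one_lt_re hC hs, logDeriv_apply L, sub_mul,
    div_mul_cancel₀ _ (L_ne_zero_of_one_le_re hs.le)]

omit hC in
lemma analyticOnNhd_L_mul_sub : AnalyticOnNhd ℂ
    (fun z ↦ (logDeriv riemannZeta (2 * z) - LSeries errorCoeff z) * L z - deriv L z)
    {z | 1 / 2 < z.re} := fun z hz ↦
  ((analyticAt_logDeriv_riemannZeta_two_mul_sub hz).mul (analyticAt_L z)).sub (analyticAt_L z).deriv

lemma mem_integrableExpSet_discrepancyMeasure {c : ℝ} (hc : 1 / 2 < c) :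
    c ∈ integrableExpSet negLog (discrepancyMeasure C) :=
  mem_integrableExpSet_of_deriv_mulComplexMGF_mul_eq measurable_negLog (ae_negLog_nonpos _)
    one_half_pos.le (fun z _ ↦ analyticAt_L z) analyticOnNhd_L_mul_sub
    (fun _ hx ↦ L_ofReal_ne_zero (one_half_pos.trans hx))
    (fun _ ↦ mem_integrableExpSet_summatory (sub_discrepancy_nonneg hC) zero_le_one
      (sub_discrepancy_le hC))
    (fun _ ↦ deriv_mulComplexMGF_discrepancyMeasure_mul_of_one_lt_re hC) hc

lemma deriv_mulComplexMGF_discrepancyMeasure_mul {s : ℂ} (hs : 1 / 2 < s.re) :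
    deriv (mulComplexMGF negLog (discrepancyMeasure C)) s * L s =
      (logDeriv riemannZeta (2 * s) - LSeries errorCoeff s) * L s - deriv L s :=
  deriv_mulComplexMGF_mul_eq (fun z _ ↦ analyticAt_L z) analyticOnNhd_L_mul_sub
    (fun _ ↦ mem_integrableExpSet_discrepancyMeasure hC)
    (fun _ ↦ deriv_mulComplexMGF_discrepancyMeasure_mul_of_one_lt_re hC) hs

omit hC in
lemma analyticOrderAt_L_ne_top (s : ℂ) : analyticOrderAt L s ≠ ⊤ := by
  have h1 : analyticOrderAt L 1 ≠ ⊤ := by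
    rw [(analyticAt_L 1).analyticOrderAt_eq_zero.2 (L_ne_zero_of_one_le_re (by simp))]
    exact ENat.zero_ne_top
  exact AnalyticOnNhd.analyticOrderAt_ne_top_of_isPreconnected (fun z _ ↦ analyticAt_L z)
    isPreconnected_univ (Set.mem_univ 1) (Set.mem_univ s) h1

lemma L_ne_zero_of_half_lt_re {s : ℂ} (hs : 1 / 2 < s.re) : L s ≠ 0 := by
  refine ne_zero_of_deriv_eventuallyEq_mul (analyticAt_L s)
    ((analyticAt_logDeriv_riemannZeta_two_mul_sub hs).sub (analyticOnNhd_mulComplexMGF (fun _ ↦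
      mem_integrableExpSet_discrepancyMeasure hC) s hs).deriv) (analyticOrderAt_L_ne_top s) ?_
  filter_upwards [setOf_lt_re_mem_nhds hs] with z hz
  rw [Pi.mul_apply, Pi.sub_apply, sub_mul, deriv_mulComplexMGF_discrepancyMeasure_mul hC hz,
    sub_sub_cancel]

lemma deriv_mulComplexMGF_discrepancyMeasure {s : ℂ} (hs : 1 / 2 < s.re) :
    deriv (mulComplexMGF negLog (discrepancyMeasure C)) s =
      logDeriv riemannZeta (2 * s) - LSeries errorCoeff s - logDeriv L s := by
  have hL := L_ne_zero_of_half_lt_re hC hs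
  rw [eq_div_of_mul_eq hL (deriv_mulComplexMGF_discrepancyMeasure_mul hC hs), sub_div,
    mul_div_cancel_right₀ _ hL, logDeriv_apply L]

end Discrepancy

section DerivMGF

variable {Ω : Type*} {mΩ : MeasurableSpace Ω} {μ : Measure Ω} {X : Ω → ℝ} {c d η : ℝ} {s : ℂ}

lemma deriv_mulComplexMGF (hs : s.re ∈ interior (integrableExpSet X μ)) :
    deriv (mulComplexMGF X μ) s = complexMGF X μ s + s * deriv (complexMGF X μ) s := by
  have h := (hasDerivAt_id s).mul (analyticAt_complexMGF hs).differentiableAt.hasDerivAt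
  rw [one_mul] at h
  exact h.deriv

lemma deriv_complexMGF_ofReal (hc : c ∈ interior (integrableExpSet X μ)) :
    deriv (complexMGF X μ) c = (deriv (mgf X μ) c : ℝ) := by
  rw [(hasDerivAt_complexMGF (by rwa [Complex.ofReal_re])).deriv, deriv_mgf hc,
    ← integral_complex_ofReal]
  push_cast
  rfl

lemma norm_deriv_complexMGF_le (hX0 : ∀ᵐ ω ∂μ, X ω ≤ 0)
    (hs : s.re ∈ interior (integrableExpSet X μ)) :
    ‖deriv (complexMGF X μ) s‖ ≤ -deriv (mgf X μ) s.re := by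
  rw [(hasDerivAt_complexMGF hs).deriv, deriv_mgf hs, ← integral_neg]
  refine (norm_integral_le_integral_norm _).trans_eq (integral_congr_ae ?_)
  filter_upwards [hX0] with ω hω
  rw [norm_mul, Complex.norm_real, Real.norm_of_nonpos hω, Complex.norm_exp, Complex.re_mul_ofReal,
    neg_mul]

lemma sum_mul_conj_mul_neg_mul_cexp (B : Finset ℝ) (z : ℝ → ℂ) (c x : ℝ) :
    ∑ a ∈ B, ∑ b ∈ B, z a * conj (z b) *
        -(x * Complex.exp ((c + Complex.I * (a - b : ℝ)) * x)) =
      (-x * Real.exp (c * x) * ‖∑ a ∈ B, z a * Complex.exp (Complex.I * a * x)‖ ^ 2 : ℝ) := by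
  rw [Complex.ofReal_mul, Complex.ofReal_pow, ← Complex.mul_conj', map_sum, sum_mul_sum, mul_sum]
  refine sum_congr rfl fun a _ ↦ ?_
  rw [mul_sum]
  refine sum_congr rfl fun b _ ↦ ?_
  have hexp : Complex.exp ((c + Complex.I * (a - b : ℝ)) * x) = Complex.exp (c * x) *
      Complex.exp (Complex.I * a * x) * Complex.exp (-Complex.I * b * x) := by
    rw [← Complex.exp_add, ← Complex.exp_add]
    congr 1
    push_cast
    ring
  rw [hexp, map_mul, ← Complex.exp_conj, map_mul, map_mul, Complex.conj_I, Complex.conj_ofReal,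
    Complex.conj_ofReal]
  push_cast
  ring

lemma isPositiveDefinite_neg_deriv_complexMGF (hX0 : ∀ᵐ ω ∂μ, X ω ≤ 0)
    (hc : c ∈ interior (integrableExpSet X μ)) :
    IsPositiveDefinite fun x : ℝ ↦ -deriv (complexMGF X μ) (c + Complex.I * x) := by
  intro B z
  have hre (x : ℝ) : (c + Complex.I * x : ℂ).re ∈ interior (integrableExpSet X μ) := by
    simpa using hc
  have hint (a b : ℝ) : Integrable (fun ω ↦ z a * conj (z b) *
      -(X ω * Complex.exp ((c + Complex.I * (a - b : ℝ)) * X ω))) μ := by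
    simpa using ((integrable_pow_mul_cexp_of_re_mem_interior_integrableExpSet
      (hre (a - b)) 1).neg.const_mul (z a * conj (z b)))
  have hsum : ∑ a ∈ B, ∑ b ∈ B, z a * conj (z b) *
      -deriv (complexMGF X μ) (c + Complex.I * (a - b : ℝ)) =
      ∫ ω, ∑ a ∈ B, ∑ b ∈ B, z a * conj (z b) *
        -(X ω * Complex.exp ((c + Complex.I * (a - b : ℝ)) * X ω)) ∂μ := by
    rw [integral_finsetSum _ fun a _ ↦ integrable_finsetSum _ fun b _ ↦ hint a b]
    refine sum_congr rfl fun a _ ↦ ?_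
    rw [integral_finsetSum _ fun b _ ↦ hint a b]
    refine sum_congr rfl fun b _ ↦ ?_
    rw [integral_const_mul, integral_neg, (hasDerivAt_complexMGF (hre _)).deriv]
  rw [hsum]
  simp only [sum_mul_conj_mul_neg_mul_cexp]
  rw [integral_complex_ofReal, Complex.ofReal_re]
  refine integral_nonneg_of_ae ?_
  filter_upwards [hX0] with ω hω
  have := neg_nonneg.2 hω
  rw [Pi.zero_apply]
  positivity

-- Where `-X ≥ 1/η` the integrand is at most `η (-X) exp(cX)`; elsewhere it is comparable to
-- `exp(dX)`.
lemma mgf_le_mul_neg_deriv_mgf_add (hη : 0 < η) (hc : c ∈ interior (integrableExpSet X μ))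
    (hd : d ∈ integrableExpSet X μ) (hcd : c ≤ d) (hX0 : ∀ᵐ ω ∂μ, X ω ≤ 0) :
    mgf X μ c ≤ η * -deriv (mgf X μ) c + Real.exp ((d - c) / η) * mgf X μ d := by
  have hcS : c ∈ integrableExpSet X μ := interior_subset hc
  have hint : Integrable (fun ω ↦ -(X ω * Real.exp (c * X ω))) μ := by
    simpa using (integrable_pow_mul_exp_of_mem_interior_integrableExpSet hc 1).neg
  rw [deriv_mgf hc, ← integral_neg, mgf, mgf, ← integral_const_mul, ← integral_const_mul,
    ← integral_add (hint.const_mul η) (hd.const_mul _)]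
  refine integral_mono_ae hcS ((hint.const_mul η).add (hd.const_mul _)) ?_
  filter_upwards [hX0] with ω hω
  rcases le_total (1 / η) (-X ω) with h | h
  · have h1 : 1 ≤ η * -X ω := by rwa [div_le_iff₀' hη] at h
    have := mul_le_mul_of_nonneg_right h1 (Real.exp_pos (c * X ω)).le
    have := (Real.exp_pos ((d - c) / η)).le
    have := (Real.exp_pos (d * X ω)).le
    nlinarith
  · have h1 : c * X ω ≤ (d - c) / η + d * X ω := by
      have := mul_le_mul_of_nonneg_left h (sub_nonneg.2 hcd)
      rw [mul_one_div] at this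
      linarith
    have h2 : 0 ≤ η * -(X ω * Real.exp (c * X ω)) := by
      rw [← neg_mul]
      have := neg_nonneg.2 hω
      positivity
    rw [← Real.exp_add]
    exact (Real.exp_le_exp.2 h1).trans (le_add_of_nonneg_left h2)

lemma mul_neg_deriv_mgf_le (hX0 : ∀ᵐ ω ∂μ, X ω ≤ 0) (hc0 : 0 < c)
    (hc : c ∈ interior (integrableExpSet X μ)) (hd : d ∈ integrableExpSet X μ) (hcd : c ≤ d) :
    c * -deriv (mgf X μ) c ≤
      2 * (‖deriv (mulComplexMGF X μ) c‖ + Real.exp ((d - c) / (c / 2)) * mgf X μ d) := by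
  have hderiv : deriv (mulComplexMGF X μ) c = (mgf X μ c + c * deriv (mgf X μ) c : ℝ) := by
    rw [deriv_mulComplexMGF (by rwa [Complex.ofReal_re]), complexMGF_ofReal,
      deriv_complexMGF_ofReal hc]
    push_cast
    rfl
  have hmgf := mgf_le_mul_neg_deriv_mgf_add (half_pos hc0) hc hd hcd hX0
  rw [hderiv, Complex.norm_real, Real.norm_eq_abs]
  linarith [neg_le_abs (mgf X μ c + c * deriv (mgf X μ) c)]

end DerivMGF

section RealAnalysis

lemma norm_sub_le_mul_log_sub_log {E : Type*} [NormedAddCommGroup E] [NormedSpace ℝ E]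
    {f f' : ℝ → E} {A a b : ℝ} (ha : 0 < a) (hf : ∀ x ∈ Set.Icc a b, HasDerivAt f (f' x) x)
    (hf' : ∀ x ∈ Set.Icc a b, x * ‖f' x‖ ≤ A) (hab : a ≤ b) :
    ‖f b - f a‖ ≤ A * (Real.log b - Real.log a) := by
  have hB (x : ℝ) (hx : x ∈ Set.Icc a b) :
      HasDerivAt (fun x ↦ A * (Real.log x - Real.log a)) (A * x⁻¹) x :=
    ((Real.hasDerivAt_log (ha.trans_le hx.1).ne').sub_const _).const_mul A
  refine image_norm_le_of_norm_deriv_right_le_deriv_boundary' (f := fun x ↦ f x - f a) (f' := f')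
    (fun x hx ↦ ((hf x hx).sub_const _).continuousAt.continuousWithinAt)
    (fun x hx ↦ ((hf x (Set.Ico_subset_Icc_self hx)).sub_const _).hasDerivWithinAt) (by simp)
    (fun x hx ↦ (hB x hx).continuousAt.continuousWithinAt)
    (fun x hx ↦ (hB x (Set.Ico_subset_Icc_self hx)).hasDerivWithinAt) (fun x hx ↦ ?_)
    (Set.right_mem_Icc.2 hab)
  rw [← div_eq_mul_inv, le_div_iff₀' (ha.trans_le hx.1)]
  exact hf' x (Set.Ico_subset_Icc_self hx)

lemma hasDerivAt_log_norm {u : ℝ → ℂ} {u' : ℂ} {x : ℝ} (hu : HasDerivAt u u' x) (hx : u x ≠ 0) :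
    HasDerivAt (fun y ↦ Real.log ‖u y‖) (u' / u x).re x := by
  have h := (hu.norm_sq.log (by positivity)).div_const 2
  simp only [Real.log_pow, Nat.cast_ofNat, mul_div_cancel_left₀ _ (two_ne_zero' ℝ)] at h
  have heq : (u' / u x).re = 2 * inner ℝ (u x) u' / ‖u x‖ ^ 2 / 2 := by
    rw [Complex.inner, ← Complex.normSq_eq_norm_sq, Complex.div_re, Complex.mul_re,
      Complex.conj_re, Complex.conj_im]
    ring
  rwa [heq]

lemma one_add_max_neg_log_le {x r : ℝ} (hx : 0 < x) (hxr : x ≤ r) (hr : 1 ≤ r) :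
    1 + max 0 (-Real.log x) ≤ 1 - Real.log (x / r) := by
  rw [Real.log_div hx.ne' (by positivity)]
  have hlogr := Real.log_nonneg hr
  have hlog := Real.log_le_log hx hxr
  have := max_le (by linarith : 0 ≤ Real.log r - Real.log x)
    (by linarith : -Real.log x ≤ Real.log r - Real.log x)
  linarith

end RealAnalysis

section Bounds

lemma norm_LSeries_sub_one_le {f : ℕ → ℂ} {s : ℂ} (hf1 : f 1 = 1) (hf : ∀ n, ‖f n‖ ≤ 1)
    (hs : 2 ≤ s.re) : ‖LSeries f s - 1‖ ≤ Real.pi ^ 2 / 6 - 1 := by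
  have hsummable : LSeriesSummable f s :=
    LSeriesSummable_of_bounded_of_one_lt_re (fun n _ ↦ hf n) (by linarith)
  have hterm : HasSum (LSeries.term f s) (LSeries f s) := hsummable.LSeriesHasSum
  have hsum := hterm.sub (hasSum_ite_eq 1 (1 : ℂ))
  have hbound : HasSum (fun n : ℕ ↦ 1 / (n : ℝ) ^ 2 - if n = 1 then 1 else 0)
      (Real.pi ^ 2 / 6 - 1) := hasSum_zeta_two.sub (hasSum_ite_eq 1 1)
  rw [← hsum.tsum_eq]
  refine tsum_of_norm_bounded hbound fun n ↦ ?_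
  rcases eq_or_ne n 0 with rfl | h0
  · simp
  rcases eq_or_ne n 1 with rfl | h1
  · simp [LSeries.term, hf1]
  have hn : (1 : ℝ) ≤ n := by exact_mod_cast Nat.pos_of_ne_zero h0
  rw [if_neg h1, if_neg h1, sub_zero, sub_zero, LSeries.norm_term_eq, if_neg h0,
    ← Real.rpow_natCast]
  exact div_le_div₀ zero_le_one (hf n) (by positivity)
    (Real.rpow_le_rpow_of_exponent_le hn (by exact_mod_cast hs))

lemma abs_log_norm_LSeries_le {f : ℕ → ℂ} {s : ℂ} (hf1 : f 1 = 1) (hf : ∀ n, ‖f n‖ ≤ 1)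
    (hs : 2 ≤ s.re) : |Real.log ‖LSeries f s‖| ≤ 2 := by
  have hle : ‖LSeries f s - 1‖ ≤ 2 / 3 :=
    (norm_LSeries_sub_one_le hf1 hf hs).trans (by nlinarith [Real.pi_lt_d2, Real.pi_pos])
  have hupper := norm_le_norm_add_norm_sub 1 (LSeries f s)
  have hlower := norm_sub_norm_le 1 (LSeries f s)
  rw [norm_one, norm_sub_rev] at hupper
  rw [norm_one, norm_sub_rev] at hlower
  have hpos : 0 < ‖LSeries f s‖ := by linarith
  have hinv : ‖LSeries f s‖⁻¹ ≤ 3 := by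
    rw [inv_le_comm₀ hpos three_pos]
    linarith
  rw [abs_le]
  constructor
  · linarith [Real.one_sub_inv_le_log_of_pos hpos]
  · linarith [Real.log_le_sub_one_of_pos hpos]

lemma abs_log_norm_L_le {s : ℂ} (hs : 2 ≤ s.re) : |Real.log ‖L s‖| ≤ 2 := by
  rw [DirichletCharacter.LFunction_eq_LSeries chi4 (by linarith)]
  exact abs_log_norm_LSeries_le (by simp) (fun n ↦ chi4.norm_le_one n) hs

lemma exists_sub_one_mul_norm_logDeriv_riemannZeta_le (b : ℝ) :
    ∃ K, ∀ s : ℂ, 1 < s.re → s.re ≤ b → (s.re - 1) * ‖logDeriv riemannZeta s‖ ≤ K := by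
  set h : ℂ → ℂ := Function.update (fun s ↦ (s - 1) * logDeriv riemannZeta s) 1 (-1)
  have hcont : ContinuousOn (fun x : ℝ ↦ h x) (Set.Icc 1 b) := fun x hx ↦ by
    refine (ContinuousAt.comp (g := h) (f := Complex.ofReal) ?_
      Complex.continuous_ofReal.continuousAt).continuousWithinAt
    rcases eq_or_ne (x : ℂ) 1 with h1 | h1
    · rw [h1]
      exact continuousAt_update_same.2 tendsto_sub_one_mul_logDeriv_riemannZeta
    · rw [continuousAt_update_of_ne h1]
      exact (continuousAt_id.sub continuousAt_const).mul
        (analyticAt_logDeriv_riemannZeta hx.1 h1).continuousAt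
  obtain ⟨K, hK⟩ := isCompact_Icc.exists_bound_of_continuousOn hcont
  refine ⟨K, fun s hs hsb ↦ ?_⟩
  have hs1 : (s.re : ℂ) ≠ 1 := by exact_mod_cast hs.ne'
  have hKs := hK s.re ⟨hs.le, hsb⟩
  rw [show h s.re = (s.re - 1) * logDeriv riemannZeta s.re from Function.update_of_ne hs1 _ _,
    norm_mul, ← Complex.ofReal_one, ← Complex.ofReal_sub,
    Complex.norm_real, Real.norm_of_nonneg (sub_pos.2 hs).le] at hKs
  exact (mul_le_mul_of_nonneg_left (norm_logDeriv_riemannZeta_le hs) (sub_pos.2 hs).le).trans hKs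

lemma exists_norm_logDeriv_L_ofReal_le {a : ℝ} (ha : 0 < a) (b : ℝ) :
    ∃ K, ∀ x ∈ Set.Icc a b, ‖logDeriv L (x : ℂ)‖ ≤ K :=
  isCompact_Icc.exists_bound_of_continuousOn fun x hx ↦
    (ContinuousAt.comp (f := ((↑) : ℝ → ℂ)) ((analyticAt_L x).deriv.div (analyticAt_L x)
      (L_ofReal_ne_zero (ha.trans_le hx.1))).continuousAt
      Complex.continuous_ofReal.continuousAt).continuousWithinAt

end Bounds

section CriticalStrip

lemma exists_mul_norm_logDeriv_riemannZeta_two_mul_sub_le :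
    ∃ K, ∀ s : ℂ, 1 / 2 < s.re → s.re ≤ 2 →
      (s.re - 1 / 2) * ‖logDeriv riemannZeta (2 * s) - LSeries errorCoeff s‖ ≤ K := by
  obtain ⟨Kζ, hKζ⟩ := exists_sub_one_mul_norm_logDeriv_riemannZeta_le 4
  obtain ⟨K, hK⟩ := exists_norm_LSeries_errorCoeff_le
  refine ⟨Kζ / 2 + 3 / 2 * K, fun s hs hs2 ↦ ?_⟩
  have hre : (2 * s).re = 2 * s.re := by simp
  have hζ := hKζ (2 * s) (by linarith) (by linarith)
  rw [hre] at hζ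
  have hE := hK s hs.le
  have hE' : (s.re - 1 / 2) * ‖LSeries errorCoeff s‖ ≤ 3 / 2 * K := by
    gcongr
    linarith
  calc (s.re - 1 / 2) * ‖logDeriv riemannZeta (2 * s) - LSeries errorCoeff s‖
      ≤ (s.re - 1 / 2) * (‖logDeriv riemannZeta (2 * s)‖ + ‖LSeries errorCoeff s‖) :=
        mul_le_mul_of_nonneg_left (norm_sub_le _ _) (sub_pos.2 hs).le
    _ ≤ Kζ / 2 + 3 / 2 * K := by linarith

variable {C : ℝ} (hC : ∀ n, (discrepancy n : ℝ) ≤ C)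

include hC

lemma mem_interior_integrableExpSet_discrepancyMeasure {c : ℝ} (hc : 1 / 2 < c) :
    c ∈ interior (integrableExpSet negLog (discrepancyMeasure C)) :=
  mem_interior_integrableExpSet (fun _ ↦ mem_integrableExpSet_discrepancyMeasure hC) hc

lemma exists_mul_norm_deriv_mulComplexMGF_ofReal_le :
    ∃ K, ∀ x : ℝ, 1 / 2 < x → x ≤ 2 →
      (x - 1 / 2) * ‖deriv (mulComplexMGF negLog (discrepancyMeasure C)) x‖ ≤ K := by
  obtain ⟨Kζ, hKζ⟩ := exists_mul_norm_logDeriv_riemannZeta_two_mul_sub_le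
  obtain ⟨K, hK⟩ := exists_norm_logDeriv_L_ofReal_le one_half_pos 2
  refine ⟨Kζ + 3 / 2 * K, fun x hx hx2 ↦ ?_⟩
  have hζ := hKζ x hx hx2
  rw [Complex.ofReal_re] at hζ
  have hL := hK x ⟨hx.le, hx2⟩
  have hL' : (x - 1 / 2) * ‖logDeriv L (x : ℂ)‖ ≤ 3 / 2 * K := by
    gcongr
    linarith
  rw [deriv_mulComplexMGF_discrepancyMeasure hC hx]
  have := mul_le_mul_of_nonneg_left (norm_sub_le
    (logDeriv riemannZeta (2 * x) - LSeries errorCoeff x) (logDeriv L (x : ℂ))) (sub_pos.2 hx).le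
  linarith

lemma exists_mul_neg_deriv_mgf_le :
    ∃ K, ∀ x : ℝ, 1 / 2 < x → x ≤ 2 →
      (x - 1 / 2) * -deriv (mgf negLog (discrepancyMeasure C)) x ≤ K := by
  obtain ⟨K, hK⟩ := exists_mul_norm_deriv_mulComplexMGF_ofReal_le hC
  set B := Real.exp 6 * mgf negLog (discrepancyMeasure C) 2
  have hB0 : 0 ≤ B := mul_nonneg (Real.exp_pos _).le mgf_nonneg
  refine ⟨4 * (K + 3 / 2 * B), fun x hx hx2 ↦ ?_⟩
  have hexp : Real.exp ((2 - x) / (x / 2)) * mgf negLog (discrepancyMeasure C) 2 ≤ B := by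
    have : (2 - x) / (x / 2) ≤ 6 := by
      rw [div_le_iff₀ (by linarith)]
      linarith
    exact mul_le_mul_of_nonneg_right (Real.exp_le_exp.2 this) mgf_nonneg
  have hx0 : 0 < x - 1 / 2 := sub_pos.2 hx
  have hderiv := mul_neg_deriv_mgf_le (μ := discrepancyMeasure C) (ae_negLog_nonpos _) (by linarith)
    (mem_interior_integrableExpSet_discrepancyMeasure hC hx)
    (mem_integrableExpSet_discrepancyMeasure hC (by norm_num)) hx2
  have hnonneg : 0 ≤ -deriv (mgf negLog (discrepancyMeasure C)) x :=
    (norm_nonneg _).trans (norm_deriv_complexMGF_le (ae_negLog_nonpos _) (s := x)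
      (mem_interior_integrableExpSet_discrepancyMeasure hC hx))
  have hhalf : 1 / 2 * -deriv (mgf negLog (discrepancyMeasure C)) x ≤
      2 * (‖deriv (mulComplexMGF negLog (discrepancyMeasure C)) x‖ + B) := by
    nlinarith
  have hBx : (x - 1 / 2) * B ≤ 3 / 2 * B := by
    gcongr
    linarith
  linarith [hK x hx hx2, mul_le_mul_of_nonneg_left hhalf hx0.le]

lemma mul_mgf_le_add {K : ℝ} (hK : ∀ x : ℝ, 1 / 2 < x → x ≤ 2 →
      (x - 1 / 2) * -deriv (mgf negLog (discrepancyMeasure C)) x ≤ K) {η x : ℝ} (hη : 0 < η)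
    (hx : 1 / 2 < x) (hx2 : x ≤ 2) :
    (x - 1 / 2) * mgf negLog (discrepancyMeasure C) x ≤ η * K +
      (x - 1 / 2) * (Real.exp (3 / 2 / η) * mgf negLog (discrepancyMeasure C) 2) := by
  have hx0 : 0 < x - 1 / 2 := sub_pos.2 hx
  have hmgf := mgf_le_mul_neg_deriv_mgf_add hη
    (mem_interior_integrableExpSet_discrepancyMeasure hC hx)
    (mem_integrableExpSet_discrepancyMeasure hC (by norm_num)) hx2 (ae_negLog_nonpos _)
  have hexp : Real.exp ((2 - x) / η) * mgf negLog (discrepancyMeasure C) 2 ≤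
      Real.exp (3 / 2 / η) * mgf negLog (discrepancyMeasure C) 2 := by
    gcongr
    · exact mgf_nonneg
    · linarith
  linarith [mul_le_mul_of_nonneg_left (hmgf.trans (add_le_add_right hexp _)) hx0.le,
    mul_le_mul_of_nonneg_left (hK x hx hx2) hη.le]

lemma tendsto_mul_mgf : Tendsto
    (fun x ↦ (x - 1 / 2) * mgf negLog (discrepancyMeasure C) x) (𝓝[>] (1 / 2)) (𝓝 0) := by
  obtain ⟨K, hK⟩ := exists_mul_neg_deriv_mgf_le hC
  rw [Metric.tendsto_nhds]
  intro ε hε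
  set η := ε / (2 * (|K| + 1)) with hη
  set B := Real.exp (3 / 2 / η) * mgf negLog (discrepancyMeasure C) 2
  have hη0 : 0 < η := by positivity
  have hηK : η * K ≤ ε / 2 := by
    rw [hη, div_mul_eq_mul_div, div_le_div_iff₀ (by positivity) two_pos]
    nlinarith [le_abs_self K]
  have hsmall : ∀ᶠ x : ℝ in 𝓝[>] (1 / 2), (x - 1 / 2) * B < ε / 2 := by
    have : Tendsto (fun x ↦ (x - 1 / 2) * B) (𝓝[>] (1 / 2 : ℝ)) (𝓝 ((1 / 2 - 1 / 2) * B)) :=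
      (Continuous.tendsto (by fun_prop) _).mono_left nhdsWithin_le_nhds
    exact this.eventually_lt_const (by simpa using half_pos hε)
  filter_upwards [hsmall, Ioc_mem_nhdsGT (show (1 / 2 : ℝ) < 2 by norm_num)] with x hx hx2
  have hnonneg : 0 ≤ (x - 1 / 2) * mgf negLog (discrepancyMeasure C) x :=
    mul_nonneg (sub_pos.2 hx2.1).le mgf_nonneg
  rw [Real.dist_eq, sub_zero, abs_of_nonneg hnonneg]
  linarith [mul_mgf_le_add hC hK hη0 hx2.1 hx2.2]

lemma exists_mul_norm_complexMGF_le :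
    ∃ K, ∀ s : ℂ, 1 / 2 < s.re → s.re ≤ 2 →
      (s.re - 1 / 2) * ‖complexMGF negLog (discrepancyMeasure C) s‖ ≤ K := by
  obtain ⟨K, hK⟩ := exists_mul_neg_deriv_mgf_le hC
  set B := Real.exp (3 / 2 / 1) * mgf negLog (discrepancyMeasure C) 2
  have hB : 0 ≤ B := mul_nonneg (Real.exp_pos _).le mgf_nonneg
  refine ⟨1 * K + 3 / 2 * B, fun s hs hs2 ↦ ?_⟩
  calc (s.re - 1 / 2) * ‖complexMGF negLog (discrepancyMeasure C) s‖
      ≤ (s.re - 1 / 2) * mgf negLog (discrepancyMeasure C) s.re :=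
        mul_le_mul_of_nonneg_left norm_complexMGF_le_mgf (sub_pos.2 hs).le
    _ ≤ 1 * K + (s.re - 1 / 2) * B := mul_mgf_le_add hC hK one_pos hs hs2
    _ ≤ 1 * K + 3 / 2 * B := by
        gcongr
        linarith

lemma exists_mul_norm_logDeriv_L_le :
    ∃ A, ∀ s : ℂ, 1 / 2 < s.re → s.re ≤ 2 →
      (s.re - 1 / 2) * ‖logDeriv L s‖ ≤ A * (1 + |s.im|) := by
  obtain ⟨Kζ, hKζ⟩ := exists_mul_norm_logDeriv_riemannZeta_two_mul_sub_le
  obtain ⟨K, hK⟩ := exists_mul_neg_deriv_mgf_le hC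
  obtain ⟨B, hB⟩ := exists_mul_norm_complexMGF_le hC
  refine ⟨|Kζ| + |B| + 2 * |K|, fun s hs hs2 ↦ ?_⟩
  have hs0 : 0 < s.re - 1 / 2 := sub_pos.2 hs
  have hint := mem_interior_integrableExpSet_discrepancyMeasure hC hs
  have hsnorm : ‖s‖ ≤ 2 * (1 + |s.im|) := by
    refine (Complex.norm_le_abs_re_add_abs_im s).trans ?_
    rw [abs_of_pos (by linarith)]
    linarith [abs_nonneg s.im]
  have hH : (s.re - 1 / 2) * ‖deriv (complexMGF negLog (discrepancyMeasure C)) s‖ ≤ K :=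
    (mul_le_mul_of_nonneg_left (norm_deriv_complexMGF_le (ae_negLog_nonpos _) hint) hs0.le).trans
      (hK _ hs hs2)
  have heq : logDeriv L s = (logDeriv riemannZeta (2 * s) - LSeries errorCoeff s) -
      (complexMGF negLog (discrepancyMeasure C) s +
        s * deriv (complexMGF negLog (discrepancyMeasure C)) s) := by
    rw [← deriv_mulComplexMGF hint, deriv_mulComplexMGF_discrepancyMeasure hC hs, sub_sub_cancel]
  have hone : 1 ≤ 1 + |s.im| := le_add_of_nonneg_right (abs_nonneg _)
  calc (s.re - 1 / 2) * ‖logDeriv L s‖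
      ≤ (s.re - 1 / 2) * (‖logDeriv riemannZeta (2 * s) - LSeries errorCoeff s‖ +
          (‖complexMGF negLog (discrepancyMeasure C) s‖ +
            ‖s‖ * ‖deriv (complexMGF negLog (discrepancyMeasure C)) s‖)) := by
        rw [heq, ← norm_mul]
        gcongr
        exact (norm_sub_le _ _).trans (add_le_add_right (norm_add_le _ _) _)
    _ = (s.re - 1 / 2) * ‖logDeriv riemannZeta (2 * s) - LSeries errorCoeff s‖ +
          (s.re - 1 / 2) * ‖complexMGF negLog (discrepancyMeasure C) s‖ +
          ‖s‖ * ((s.re - 1 / 2) * ‖deriv (complexMGF negLog (discrepancyMeasure C)) s‖) := by ring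
    _ ≤ |Kζ| * (1 + |s.im|) + |B| * (1 + |s.im|) + 2 * (1 + |s.im|) * |K| := by
        refine add_le_add (add_le_add ?_ ?_) (mul_le_mul hsnorm (hH.trans (le_abs_self _))
          (by positivity) (by positivity))
        · exact (hKζ s hs hs2).trans ((le_abs_self _).trans
            (le_mul_of_one_le_right (abs_nonneg _) hone))
        · exact (hB s hs hs2).trans ((le_abs_self _).trans
            (le_mul_of_one_le_right (abs_nonneg _) hone))
    _ = (|Kζ| + |B| + 2 * |K|) * (1 + |s.im|) := by ring

lemma abs_log_norm_L_sub_le {A : ℝ} (hA : ∀ s : ℂ, 1 / 2 < s.re → s.re ≤ 2 →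
      (s.re - 1 / 2) * ‖logDeriv L s‖ ≤ A * (1 + |s.im|)) {s : ℂ} (hs : 1 / 2 < s.re)
    (hs2 : s.re ≤ 2) :
    |Real.log ‖L (2 + Complex.I * s.im)‖ - Real.log ‖L s‖| ≤
      A * (1 + |s.im|) * (Real.log (3 / 2) - Real.log (s.re - 1 / 2)) := by
  set w : ℂ := 1 / 2 + Complex.I * s.im with hw
  have hre (x : ℝ) : (x + w).re = x + 1 / 2 := by simp [hw]
  have him (x : ℝ) : (x + w).im = s.im := by simp [hw]
  have hleft : ((s.re - 1 / 2 : ℝ) : ℂ) + w = s := Complex.ext (by simp [hw]) (by simp [hw])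
  have hright : ((3 / 2 : ℝ) : ℂ) + w = 2 + Complex.I * s.im :=
    Complex.ext (by simp [hw]; norm_num) (by simp [hw])
  have hderiv (x : ℝ) (hx : x ∈ Set.Icc (s.re - 1 / 2) (3 / 2)) :
      HasDerivAt (fun y : ℝ ↦ Real.log ‖L (y + w)‖) (logDeriv L (x + w)).re x :=
    hasDerivAt_log_norm
      (((differentiable_L (x + w)).hasDerivAt.comp_add_const (x : ℂ) w).comp_ofReal)
      (L_ne_zero_of_half_lt_re hC (by rw [hre]; linarith [hx.1]))
  have hbound (x : ℝ) (hx : x ∈ Set.Icc (s.re - 1 / 2) (3 / 2)) :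
      x * ‖(logDeriv L (x + w)).re‖ ≤ A * (1 + |s.im|) := by
    have h := hA (x + w) (by rw [hre]; linarith [hx.1]) (by rw [hre]; linarith [hx.2])
    rw [hre, him, add_sub_cancel_right] at h
    exact (mul_le_mul_of_nonneg_left (Complex.abs_re_le_norm _) (by linarith [hx.1])).trans h
  have h := norm_sub_le_mul_log_sub_log (sub_pos.2 hs) hderiv hbound (by linarith)
  rwa [hleft, hright] at h

lemma exists_abs_log_norm_L_le : ∃ A, 0 ≤ A ∧ ∀ s : ℂ, 1 / 2 < s.re →
    |Real.log ‖L s‖| ≤ A * (1 + |s.im|) * (1 + max 0 (-Real.log (s.re - 1 / 2))) := by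
  obtain ⟨A, hA⟩ := exists_mul_norm_logDeriv_L_le hC
  refine ⟨|A| + 2, by positivity, fun s hs ↦ ?_⟩
  set m := max 0 (-Real.log (s.re - 1 / 2))
  have him : 0 ≤ |s.im| := abs_nonneg _
  have hm0 : 0 ≤ m := le_max_left _ _
  have htwo : 2 ≤ 2 * ((1 + |s.im|) * (1 + m)) := by nlinarith
  rcases le_total 2 s.re with h | h
  · have := abs_log_norm_L_le h
    have : 0 ≤ |A| * ((1 + |s.im|) * (1 + m)) := by positivity
    linarith
  · have hsub := abs_log_norm_L_sub_le hC hA hs h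
    have hedge : |Real.log ‖L (2 + Complex.I * s.im)‖| ≤ 2 := abs_log_norm_L_le (by simp)
    have hlog : Real.log (3 / 2) - Real.log (s.re - 1 / 2) ≤ 1 + m := by
      linarith [Real.log_le_sub_one_of_pos (show (0 : ℝ) < 3 / 2 by norm_num),
        le_max_right 0 (-Real.log (s.re - 1 / 2))]
    have hlog0 : 0 ≤ Real.log (3 / 2) - Real.log (s.re - 1 / 2) :=
      sub_nonneg.2 (Real.log_le_log (sub_pos.2 hs) (by linarith))
    have hA' : A * (1 + |s.im|) * (Real.log (3 / 2) - Real.log (s.re - 1 / 2)) ≤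
        |A| * (1 + |s.im|) * (1 + m) := by
      gcongr
      exact le_abs_self A
    rw [abs_sub_comm] at hsub
    linarith [abs_sub_abs_le_abs_sub (Real.log ‖L s‖) (Real.log ‖L (2 + Complex.I * s.im)‖)]

end CriticalStrip

section CriticalLine

lemma tendsto_add_ofReal_nhdsGT (z : ℂ) : Tendsto (fun σ : ℝ ↦ z + σ) (𝓝[>] 0) (𝓝[≠] z) := by
  have hcont : ContinuousAt (fun σ : ℝ ↦ z + σ) 0 := by fun_prop
  have h := hcont.tendsto.mono_left (nhdsWithin_le_nhds (s := Set.Ioi 0))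
  rw [Complex.ofReal_zero, add_zero] at h
  refine tendsto_nhdsWithin_iff.2 ⟨h, ?_⟩
  filter_upwards [self_mem_nhdsWithin] with σ hσ
  simpa using (Set.mem_Ioi.1 hσ).ne'

lemma tendsto_sub_mul_logDeriv_analyticOrderNatAt {f : ℂ → ℂ} {z : ℂ} (hf : AnalyticAt ℂ f z)
    (hord : analyticOrderAt f z ≠ ⊤) :
    Tendsto (fun s ↦ (s - z) * logDeriv f s) (𝓝[≠] z) (𝓝 (analyticOrderNatAt f z)) := by
  obtain ⟨g, hg, hg0, hfg⟩ := hf.analyticOrderAt_ne_top.1 hord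
  exact_mod_cast tendsto_sub_mul_logDeriv (n := analyticOrderNatAt f z) hg hg0
    ((hfg.filter_mono nhdsWithin_le_nhds).mono fun s hs ↦ by simpa using hs)

lemma tendsto_sub_mul_logDeriv_riemannZeta_two_mul (x : ℝ) :
    Tendsto (fun s ↦ (s - (1 / 2 + Complex.I * x)) * logDeriv riemannZeta (2 * s))
      (𝓝[≠] (1 / 2 + Complex.I * x)) (𝓝 (-if x = 0 then 1 / 2 else 0)) := by
  set z : ℂ := 1 / 2 + Complex.I * x with hz
  split_ifs with hx
  · have hz2 : z = 1 / 2 := by simp [hz, hx]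
    have hdouble : Tendsto (fun s : ℂ ↦ 2 * s) (𝓝[≠] z) (𝓝[≠] 1) := by
      refine tendsto_nhdsWithin_iff.2 ⟨?_, ?_⟩
      · have h := (continuous_const_mul (2 : ℂ)).tendsto z
        rw [hz2, mul_one_div_cancel two_ne_zero] at h
        rw [hz2]
        exact h.mono_left nhdsWithin_le_nhds
      · filter_upwards [self_mem_nhdsWithin] with s hs
        rw [hz2] at hs
        exact fun h ↦ hs (eq_one_div_of_mul_eq_one_right h)
    have h := (tendsto_sub_one_mul_logDeriv_riemannZeta.comp hdouble).const_mul (1 / 2)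
    rw [mul_neg_one] at h
    refine h.congr fun s ↦ ?_
    rw [Function.comp_apply, hz2]
    ring
  · have hre : (2 * z).re = 1 := by simp [hz]
    have hne : 2 * z ≠ 1 := fun h ↦ hx (by simpa [hz] using congrArg Complex.im h)
    have hcont : ContinuousAt (fun s ↦ (s - z) * logDeriv riemannZeta (2 * s)) z :=
      (continuousAt_id.sub continuousAt_const).mul <| ContinuousAt.comp (f := fun s ↦ 2 * s)
        (analyticAt_logDeriv_riemannZeta hre.ge hne).continuousAt (by fun_prop)
    have h := hcont.tendsto.mono_left (nhdsWithin_le_nhds (s := {z}ᶜ))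
    rwa [sub_self, zero_mul, ← neg_zero] at h

lemma tendsto_mul_zero_of_norm_mul_le {E : ℝ → ℂ} {b : ℝ → ℝ}
    (hb : Tendsto (fun σ ↦ σ * b σ) (𝓝[>] 0) (𝓝 0)) (hE : ∀ σ, 0 < σ → ‖E σ‖ ≤ b σ) :
    Tendsto (fun σ : ℝ ↦ σ * E σ) (𝓝[>] 0) (𝓝 0) := by
  refine squeeze_zero_norm' ?_ hb
  filter_upwards [self_mem_nhdsWithin] with σ hσ
  rw [norm_mul, Complex.norm_real, Real.norm_of_nonneg (Set.mem_Ioi.1 hσ).le]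
  exact mul_le_mul_of_nonneg_left (hE σ hσ) (Set.mem_Ioi.1 hσ).le

lemma tendsto_mul_LSeries_errorCoeff (x : ℝ) :
    Tendsto (fun σ : ℝ ↦ (σ : ℂ) * LSeries errorCoeff (1 / 2 + Complex.I * x + σ))
      (𝓝[>] 0) (𝓝 0) := by
  obtain ⟨K, hK⟩ := exists_norm_LSeries_errorCoeff_le
  have hb : Tendsto (fun σ : ℝ ↦ σ * K) (𝓝[>] 0) (𝓝 (0 * K)) :=
    (tendsto_id.mul_const K).mono_left nhdsWithin_le_nhds
  rw [zero_mul] at hb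
  exact tendsto_mul_zero_of_norm_mul_le hb fun σ hσ ↦ hK _ (by simpa using hσ.le)

variable {C : ℝ} (hC : ∀ n, (discrepancy n : ℝ) ≤ C)

include hC

lemma tendsto_mul_complexMGF (x : ℝ) :
    Tendsto (fun σ : ℝ ↦ (σ : ℂ) *
      complexMGF negLog (discrepancyMeasure C) (1 / 2 + Complex.I * x + σ)) (𝓝[>] 0) (𝓝 0) := by
  have hshift : Tendsto (fun σ : ℝ ↦ 1 / 2 + σ) (𝓝[>] 0) (𝓝[>] (1 / 2)) := by
    refine tendsto_nhdsWithin_iff.2 ⟨?_, ?_⟩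
    · simpa using (tendsto_id.const_add (1 / 2 : ℝ)).mono_left
        (nhdsWithin_le_nhds (a := 0) (s := Set.Ioi 0))
    · filter_upwards [self_mem_nhdsWithin] with σ hσ
      simpa using hσ
  have hb := (tendsto_mul_mgf hC).comp hshift
  simp only [Function.comp_def, add_sub_cancel_left] at hb
  exact tendsto_mul_zero_of_norm_mul_le hb fun σ _ ↦
    norm_complexMGF_le_mgf.trans_eq (by simp)

lemma tendsto_mul_neg_deriv_complexMGF (x : ℝ) :
    Tendsto (fun σ : ℝ ↦ (σ : ℂ) *
      -deriv (complexMGF negLog (discrepancyMeasure C)) (1 / 2 + Complex.I * x + σ)) (𝓝[>] 0)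
      (𝓝 (residueFunction (fun y ↦ analyticOrderNatAt L (1 / 2 + Complex.I * y)) x)) := by
  set z : ℂ := 1 / 2 + Complex.I * x with hz
  have hz0 : z ≠ 0 := fun h ↦ by simpa [hz] using congrArg Complex.re h
  have hpath := tendsto_add_ofReal_nhdsGT z
  have hL := (tendsto_sub_mul_logDeriv_analyticOrderNatAt (analyticAt_L z)
    (analyticOrderAt_L_ne_top z)).comp hpath
  have hζ := (tendsto_sub_mul_logDeriv_riemannZeta_two_mul x).comp hpath
  have hlim := ((((tendsto_mul_complexMGF hC x).add hL).sub hζ).add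
    (tendsto_mul_LSeries_errorCoeff x)).div (hpath.mono_right nhdsWithin_le_nhds) hz0
  rw [zero_add, sub_neg_eq_add, add_zero] at hlim
  refine Tendsto.congr' ?_ hlim
  filter_upwards [self_mem_nhdsWithin] with σ hσ
  have hs : 1 / 2 < (z + σ).re := by simpa [hz] using hσ
  have hs0 : z + σ ≠ 0 := fun h ↦ by norm_num [h] at hs
  have hderiv := deriv_mulComplexMGF_discrepancyMeasure hC hs
  rw [deriv_mulComplexMGF (mem_interior_integrableExpSet_discrepancyMeasure hC hs)] at hderiv
  simp only [Function.comp_apply, add_sub_cancel_left, ← hz]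
  rw [Pi.div_apply, div_eq_iff hs0]
  linear_combination (σ : ℂ) * hderiv

theorem isPositiveDefinite_residueFunction : IsPositiveDefinite
    (residueFunction fun y ↦ analyticOrderNatAt L (1 / 2 + Complex.I * y)) := by
  refine IsPositiveDefinite.of_tendsto ?_ (tendsto_mul_neg_deriv_complexMGF hC)
  filter_upwards [self_mem_nhdsWithin] with σ hσ
  have hc : 1 / 2 < 1 / 2 + σ := lt_add_of_pos_right _ hσ
  have hpath (x : ℝ) : ((1 / 2 + σ : ℝ) : ℂ) + Complex.I * x = 1 / 2 + Complex.I * x + σ := by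
    push_cast
    ring
  have h := isPositiveDefinite_neg_deriv_complexMGF (μ := discrepancyMeasure C)
    (ae_negLog_nonpos _) (mem_interior_integrableExpSet_discrepancyMeasure hC hc)
  simp only [hpath] at h
  exact h.const_mul (Set.mem_Ioi.1 hσ).le

end CriticalLine

section CompletedL

/-- The completed `L`-function of the non-principal character modulo 4, centred at the point `1 / 2`
of symmetry of its functional equation. The factor `2 ^ w`, a square root of the conductor factor
`4 ^ w`, makes it an even function. -/
noncomputable def xi (w : ℂ) : ℂ :=
  2 ^ w * DirichletCharacter.completedLFunction chi4 (1 / 2 + w)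

lemma differentiable_xi : Differentiable ℂ xi := fun w ↦
  (differentiableAt_id.const_cpow (.inl two_ne_zero)).mul <|
    (DirichletCharacter.differentiable_completedLFunction chi4_ne_one (1 / 2 + w)).comp w
      (differentiableAt_id.const_add _)

lemma chi4_odd : chi4.Odd := chi4_neg_one

lemma inv_chi4 : chi4⁻¹ = chi4 := (ZMod.isQuadratic_χ₄.comp _).inv

lemma chi4_isPrimitive : chi4.IsPrimitive := by
  by_contra hprim
  have hdvd : chi4.conductor ∣ 2 ^ 2 := chi4.conductor_dvd_level
  obtain ⟨k, hk, hcond⟩ := (Nat.dvd_prime_pow Nat.prime_two).1 hdvd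
  have hk1 : k ≤ 1 := by
    by_contra! hlt
    exact hprim (hcond.trans (by rw [le_antisymm hk hlt]; norm_num))
  have : Subsingleton (ZMod chi4.conductor)ˣ := by
    rw [hcond]
    interval_cases k
    · exact inferInstanceAs (Subsingleton (ZMod 1)ˣ)
    · exact inferInstanceAs (Subsingleton (ZMod 2)ˣ)
  obtain ⟨_, χ₀, hχ₀⟩ := chi4.factorsThrough_conductor
  have hone : χ₀ = 1 := MulChar.ext fun a ↦ by simp [Subsingleton.elim a 1]
  exact chi4_ne_one (by rw [hχ₀, hone, map_one])

lemma L_half_add (w : ℂ) :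
    L (1 / 2 + w) = 2 ^ (-w) * (Complex.Gammaℝ (3 / 2 + w))⁻¹ * xi w := by
  rw [DirichletCharacter.LFunction_eq_completed_div_gammaFactor chi4 (1 / 2 + w)
    (.inr (by norm_num)), chi4_odd.gammaFactor_def, xi, Complex.cpow_neg,
    show 1 / 2 + w + 1 = 3 / 2 + w by ring]
  have h2 : (2 : ℂ) ^ w ≠ 0 := by simp [Complex.cpow_eq_zero_iff]
  field_simp

lemma xi_zero_ne_zero : xi 0 ≠ 0 := by
  refine right_ne_zero_of_mul (a := 2 ^ (-0 : ℂ) * (Complex.Gammaℝ (3 / 2 + 0))⁻¹) ?_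
  rw [← L_half_add, add_zero]
  simpa using L_ofReal_ne_zero (x := 1 / 2) (by norm_num)

lemma xi_neg (w : ℂ) : xi (-w) = xi w := by
  have hroot (w : ℂ) : xi (-w) = chi4.rootNumber * xi w := by
    have h := chi4_isPrimitive.completedLFunction_one_sub (1 / 2 + w)
    have h4 : ((4 : ℕ) : ℂ) ^ w = 2 ^ w * 2 ^ w := by
      rw [show ((4 : ℕ) : ℂ) = (2 : ℝ) * (2 : ℝ) by norm_num,
        Complex.mul_cpow_ofReal_nonneg zero_le_two zero_le_two, Complex.ofReal_ofNat]
    rw [inv_chi4, show 1 - (1 / 2 + w) = 1 / 2 + -w by ring, add_sub_cancel_left, h4] at h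
    have h2 : (2 : ℂ) ^ w ≠ 0 := by simp [Complex.cpow_eq_zero_iff]
    rw [xi, xi, h, Complex.cpow_neg]
    field_simp
  have hone : chi4.rootNumber = 1 :=
    mul_right_cancel₀ xi_zero_ne_zero (by simpa using (hroot 0).symm)
  rw [hroot, hone, one_mul]

lemma imaginaryAxisOrder_xi (x : ℝ) :
    imaginaryAxisOrder xi x = analyticOrderNatAt L (1 / 2 + Complex.I * x) := by
  have hshift : analyticOrderAt (fun w ↦ L (1 / 2 + w)) (Complex.I * x) =
      analyticOrderAt L (1 / 2 + Complex.I * x) :=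
    analyticOrderAt_comp_of_deriv_ne_zero (f := L) (g := fun w ↦ 1 / 2 + w) (by fun_prop) (by simp)
  have hfactor : AnalyticAt ℂ (fun w : ℂ ↦ (2 : ℂ) ^ (-w) * (Complex.Gammaℝ (3 / 2 + w))⁻¹)
      (Complex.I * x) :=
    Differentiable.analyticAt (by
      intro w
      exact (differentiableAt_id.neg.const_cpow (.inl two_ne_zero)).mul <|
        (Complex.differentiable_Gammaℝ_inv _).comp w (differentiableAt_id.const_add (3 / 2))) _
  have hne : (2 : ℂ) ^ (-(Complex.I * x)) * (Complex.Gammaℝ (3 / 2 + Complex.I * x))⁻¹ ≠ 0 :=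
    mul_ne_zero (by simp [Complex.cpow_eq_zero_iff])
      (inv_ne_zero (Complex.Gammaℝ_ne_zero_of_re_pos (by norm_num)))
  rw [imaginaryAxisOrder, analyticOrderNatAt, analyticOrderNatAt, ← hshift, funext L_half_add,
    ← Pi.mul_def (f := fun w : ℂ ↦ (2 : ℂ) ^ (-w) * (Complex.Gammaℝ (3 / 2 + w))⁻¹) (g := xi),
    analyticOrderAt_mul hfactor (differentiable_xi.analyticAt _),
    hfactor.analyticOrderAt_eq_zero.2 hne, zero_add]

lemma imaginaryAxisOrder_xi_zero : imaginaryAxisOrder xi 0 = 0 := by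
  have h : xi (Complex.I * (0 : ℝ)) ≠ 0 := by simpa using xi_zero_ne_zero
  rw [imaginaryAxisOrder, analyticOrderNatAt,
    (differentiable_xi.analyticAt _).analyticOrderAt_eq_zero.2 h, ENat.toNat_zero]

variable {C : ℝ} (hC : ∀ n, (discrepancy n : ℝ) ≤ C)
include hC

lemma re_eq_zero_of_xi_eq_zero {w : ℂ} (hw : xi w = 0) : w.re = 0 := by
  have hle {z : ℂ} (hz : xi z = 0) : z.re ≤ 0 := by
    by_contra! hpos
    exact L_ne_zero_of_half_lt_re hC (s := 1 / 2 + z) (by simpa using hpos)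
      (by rw [L_half_add, hz, mul_zero])
  refine le_antisymm (hle hw) ?_
  simpa using hle ((xi_neg w).trans hw)

lemma log_norm_xi {w : ℂ} (hw : 0 < w.re) :
    Real.log ‖xi w‖ = w.re * Real.log 2 + Real.log ‖L (1 / 2 + w)‖ -
      (3 / 4 + w.re / 2) * Real.log Real.pi +
      Real.log ‖Complex.Gamma ((3 / 4 + w.re / 2 : ℝ) + (w.im / 2 : ℝ) * Complex.I)‖ := by
  have harg : ((3 / 4 + w.re / 2 : ℝ) + (w.im / 2 : ℝ) * Complex.I : ℂ) = (3 / 2 + w) / 2 := by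
    apply Complex.ext <;> norm_num; ring
  have hxi : xi w ≠ 0 := fun h ↦ hw.ne' (re_eq_zero_of_xi_eq_zero hC h)
  have hGamma : Complex.Gamma ((3 / 2 + w) / 2) ≠ 0 :=
    Complex.Gamma_ne_zero_of_re_pos (by norm_num; linarith)
  have htwo : ‖(2 : ℂ) ^ (-w)‖ = 2 ^ (-w.re) := by
    simpa using Complex.norm_cpow_eq_rpow_re_of_pos two_pos (-w)
  have hpi : ‖(Real.pi : ℂ) ^ (-(3 / 2 + w) / 2)‖ = Real.pi ^ (-(3 / 4 + w.re / 2)) := by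
    rw [Complex.norm_cpow_eq_rpow_re_of_pos Real.pi_pos]
    congr 1
    simp
    ring
  rw [L_half_add, harg, Complex.Gammaℝ_def, norm_mul, norm_mul, norm_inv, norm_mul, htwo, hpi,
    Real.log_mul (by positivity) (by positivity), Real.log_mul (by positivity) (by positivity),
    Real.log_inv, Real.log_mul (by positivity) (by positivity), Real.log_rpow two_pos,
    Real.log_rpow Real.pi_pos]
  ring

lemma exists_abs_log_norm_xi_sub_le_of_re_pos : ∃ K, 0 ≤ K ∧ ∀ w : ℂ, 0 < w.re → 1 ≤ ‖w‖ →
    |Real.log ‖xi w‖ - Real.log (Real.Gamma (3 / 4 + w.re / 2))| ≤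
      K * ‖w‖ * (1 - Real.log (w.re / ‖w‖)) := by
  obtain ⟨A, hA, hL⟩ := exists_abs_log_norm_L_le hC
  refine ⟨2 * A + 6, by positivity, fun w hw hnorm ↦ ?_⟩
  have hre : w.re ≤ ‖w‖ := Complex.re_le_norm w
  have him : |w.im| ≤ ‖w‖ := Complex.abs_im_le_norm w
  set Q := 1 - Real.log (w.re / ‖w‖)
  have hmax : 1 + max 0 (-Real.log w.re) ≤ Q := one_add_max_neg_log_le hw hre hnorm
  have hQ : 1 ≤ Q := le_trans (by simp) hmax
  have hLw : |Real.log ‖L (1 / 2 + w)‖| ≤ 2 * A * ‖w‖ * Q := calc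
    |Real.log ‖L (1 / 2 + w)‖| ≤ A * (1 + |w.im|) * (1 + max 0 (-Real.log w.re)) := by
      simpa using hL (1 / 2 + w) (by simpa using hw)
    _ ≤ A * (‖w‖ + ‖w‖) * Q := by gcongr
    _ = 2 * A * ‖w‖ * Q := by ring
  have hGamma := abs_log_norm_Gamma_sub_le (x := 3 / 4 + w.re / 2) (by linarith) (w.im / 2)
  have hangle : Real.pi * |w.im / 2| / 2 ≤ ‖w‖ := by
    rw [abs_div, abs_two]
    nlinarith [Real.pi_le_four, abs_nonneg w.im]
  have hlogtwo : |w.re * Real.log 2| ≤ ‖w‖ := by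
    rw [abs_of_nonneg (by positivity)]
    nlinarith [Real.log_two_lt_d9]
  have hlogpi : |(3 / 4 + w.re / 2) * Real.log Real.pi| ≤ 4 * ‖w‖ := by
    have hpi0 : 0 ≤ Real.log Real.pi := Real.log_nonneg (by linarith [Real.pi_gt_three])
    have hpi : Real.log Real.pi ≤ 3 := by
      linarith [Real.log_le_sub_one_of_pos Real.pi_pos, Real.pi_le_four]
    rw [abs_of_nonneg (by positivity)]
    nlinarith
  have hnormQ : ‖w‖ ≤ ‖w‖ * Q := le_mul_of_one_le_right (norm_nonneg w) hQ
  rw [log_norm_xi hC hw]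
  rw [abs_le] at *
  constructor <;> linarith

lemma exists_abs_log_norm_xi_sub_le : ∃ K, 0 ≤ K ∧ ∀ w : ℂ, w.re ≠ 0 → 1 ≤ ‖w‖ →
    |Real.log ‖xi w‖ - Real.log (Real.Gamma (3 / 4 + |w.re| / 2))| ≤
      K * ‖w‖ * (1 - Real.log (|w.re| / ‖w‖)) := by
  obtain ⟨K, hK, hle⟩ := exists_abs_log_norm_xi_sub_le_of_re_pos hC
  refine ⟨K, hK, fun w hre hnorm ↦ ?_⟩
  rcases hre.lt_or_gt with hneg | hpos
  · simpa [xi_neg, abs_of_neg hneg] using hle (-w) (by simpa using hneg) (by simpa using hnorm)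
  · simpa only [abs_of_pos hpos] using hle w hpos hnorm

end CompletedL

section JensenBounds

variable {C : ℝ} (hC : ∀ n, (discrepancy n : ℝ) ≤ C) {Z : ℝ → Finset ℝ}
  (hZ : ∀ R x, x ∈ Z R ↔ |x| ≤ R ∧ imaginaryAxisOrder xi x ≠ 0)
include hC hZ

lemma exists_jensenSum_xi_le :
    ∃ B, ∀ k : ℕ, jensenSum (imaginaryAxisOrder xi) Z (4 ^ k) ≤ B * 8 ^ k := by
  obtain ⟨K, hK, hxi⟩ := exists_abs_log_norm_xi_sub_le hC
  refine ⟨16 + K + K * Real.log 2 + |Real.log ‖xi 0‖|, fun k ↦ ?_⟩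
  have hR : (1 : ℝ) ≤ 4 ^ k := one_le_pow₀ (by norm_num)
  have hR8 : (4 : ℝ) ^ k ≤ 8 ^ k := pow_le_pow_left₀ (by norm_num) (by norm_num) k
  have hlog : ∀ w : ℂ, ‖w‖ = 4 ^ k → w.re ≠ 0 → Real.log ‖xi w‖ ≤
      (16 * 8 ^ k + K * 4 ^ k) - K * 4 ^ k * Real.log (|w.re| / 4 ^ k) := by
    intro w hw hre
    have hreR : |w.re| ≤ 4 ^ k := hw ▸ Complex.abs_re_le_norm w
    have hGamma := calc
      Real.log (Real.Gamma (3 / 4 + |w.re| / 2))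
          ≤ 2 * (3 / 4 + |w.re| / 2 + 2) * √(3 / 4 + |w.re| / 2 + 2) :=
            log_Gamma_le (by linarith [abs_nonneg w.re])
      _ ≤ 2 * (4 * 4 ^ k) * √(4 * 4 ^ k) := by gcongr <;> linarith
      _ = 16 * 8 ^ k := by
        rw [show (4 : ℝ) * 4 ^ k = (2 * 2 ^ k) ^ 2 by rw [mul_pow, ← pow_mul', pow_mul]; norm_num,
          Real.sqrt_sq (by positivity), show (8 : ℝ) = 2 ^ 3 by norm_num, ← pow_mul']
        ring
    have := (abs_le.1 (hxi w hre (hw ▸ hR))).2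
    rw [hw] at this
    linarith
  have hJ := jensenSum_le_of_log_norm_le differentiable_xi xi_zero_ne_zero
    (fun _ ↦ re_eq_zero_of_xi_eq_zero hC) hZ (by positivity) hlog
  have hlogtwo : 0 ≤ Real.log 2 := Real.log_nonneg one_le_two
  nlinarith [neg_abs_le (Real.log ‖xi 0‖), abs_nonneg (Real.log ‖xi 0‖), mul_nonneg hK hlogtwo]

lemma exists_mul_sub_le_jensenSum_xi (A : ℝ) :
    ∃ B, ∀ R, 1 ≤ R → A * R - B ≤ jensenSum (imaginaryAxisOrder xi) Z R := by
  obtain ⟨K, hK, hxi⟩ := exists_abs_log_norm_xi_sub_le hC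
  have hlogtwo : 0 < 1 - Real.log 2 := by linarith [Real.log_two_lt_d9]
  set c := (|A| + 2 * K) / (1 - Real.log 2) with hc
  obtain ⟨B, hB⟩ := exists_mul_sub_le_log_Gamma (2 * c)
  refine ⟨B + Real.log ‖xi 0‖, fun R hR ↦ ?_⟩
  have hlog : ∀ w : ℂ, ‖w‖ = R → w.re ≠ 0 →
      c * |w.re| - (B + K * R) + K * R * Real.log (|w.re| / R) ≤ Real.log ‖xi w‖ := by
    intro w hw hre
    have hGamma := hB (3 / 4 + |w.re| / 2) (by positivity)
    have := (abs_le.1 (hxi w hre (hw ▸ hR))).1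
    rw [hw] at this
    have : 0 ≤ c := by positivity
    linarith
  have hJ := le_jensenSum_of_le_log_norm differentiable_xi xi_zero_ne_zero
    (fun _ ↦ re_eq_zero_of_xi_eq_zero hC) hZ (by positivity) (by positivity) hlog
  have hcR : c * R * (1 - Real.log 2) = (|A| + 2 * K) * R := by
    rw [hc]
    field_simp
  have hAR : A * R ≤ |A| * R := by gcongr; exact le_abs_self A
  have hKR : 0 ≤ K * R * (1 - Real.log 2) := by positivity
  linarith

end JensenBounds

theorem not_bddAbove_range_discrepancy : ¬ BddAbove (Set.range discrepancy) := by
  rintro ⟨N, hN⟩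
  have hC (n : ℕ) : (discrepancy n : ℝ) ≤ N := by exact_mod_cast hN ⟨n, rfl⟩
  let Z (R : ℝ) : Finset ℝ :=
    (finite_setOf_imaginaryAxisOrder_ne_zero differentiable_xi xi_zero_ne_zero R).toFinset
  have hZ (R x : ℝ) : x ∈ Z R ↔ |x| ≤ R ∧ imaginaryAxisOrder xi x ≠ 0 := by simp [Z]
  have hpos : IsPositiveDefinite (residueFunction (imaginaryAxisOrder xi)) := by
    rw [funext imaginaryAxisOrder_xi]
    exact isPositiveDefinite_residueFunction hC
  obtain ⟨B, hupper⟩ := exists_jensenSum_xi_le hC hZ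
  obtain ⟨A, hA⟩ :=
    exists_jensenSum_le_of_isPositiveDefinite hpos hZ imaginaryAxisOrder_xi_zero hupper
  obtain ⟨B', hlower⟩ := exists_mul_sub_le_jensenSum_xi hC hZ (A + 1)
  obtain ⟨k, hk⟩ := pow_unbounded_of_one_lt B' (by norm_num : (1 : ℝ) < 4)
  linarith [hA k, hlower (4 ^ k) (one_le_pow₀ (by norm_num))]

lemma discrepancy_succ (n : ℕ) : discrepancy (n + 1) =
    discrepancy n + if (n + 1).Prime then ZMod.χ₄ ((n + 1 : ℕ) : ZMod 4) else 0 :=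
  sum_Icc_succ_top (by lia) _

lemma piMod4_succ (n r : ℕ) : piMod4 (n + 1) r =
    piMod4 n r + if (n + 1).Prime ∧ (n + 1) % 4 = r then 1 else 0 := by
  unfold piMod4
  rw [range_add_one (n := n + 1), filter_insert]
  split_ifs
  · rw [card_insert_of_notMem (by simp)]
  · rfl

lemma discrepancy_eq_piMod4_sub (n : ℕ) : discrepancy n = piMod4 n 1 - piMod4 n 3 := by
  induction n with
  | zero => simp [discrepancy_zero, piMod4, filter_singleton, Nat.not_prime_zero]
  | succ n ih =>
    rw [discrepancy_succ, piMod4_succ, piMod4_succ, ih, ZMod.χ₄_nat_eq_if_mod_four]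
    split_ifs <;> lia

lemma discrepancy_le_of_forall_prime {b : ℕ} (hb : ∀ p, p.Prime → 0 < discrepancy p → p ≤ b)
    (n : ℕ) : discrepancy n ≤ b := by
  induction n with
  | zero => simp [discrepancy_zero]
  | succ n ih =>
    by_cases hp : (n + 1).Prime
    · by_cases hpos : 0 < discrepancy (n + 1)
      · have hle : discrepancy (n + 1) ≤ (n + 1 : ℕ) := by
          exact_mod_cast (le_abs_self _).trans (abs_discrepancy_le (n + 1))
        exact hle.trans (by exact_mod_cast hb _ hp hpos)
      · exact (not_lt.1 hpos).trans (by positivity)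
    · simpa [discrepancy_succ, hp] using ih

end PrimeRace

/-- There are infinitely many primes `p` with `π(p;4,1) > π(p;4,3)`. -/
theorem infinitely_many_primes_with_positive_discrepancy :
    {p : ℕ | Nat.Prime p ∧ piMod4 p 3 < piMod4 p 1}.Infinite := by
  intro hfin
  obtain ⟨b, hb⟩ := hfin.bddAbove
  have hle : ∀ n, PrimeRace.discrepancy n ≤ b := by
    refine PrimeRace.discrepancy_le_of_forall_prime fun p hp hpos ↦ hb ⟨hp, ?_⟩
    rw [PrimeRace.discrepancy_eq_piMod4_sub] at hpos
    lia
  exact PrimeRace.not_bddAbove_range_discrepancy ⟨b, Set.forall_mem_range.2 hle⟩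
end

section
/- The integer solutions of y² + y = x³ − x are exactly the ten pairs (−1, 0), (−1, −1), (0, 0), (0, −1), (1, 0), (1, −1), (2, 2), (2, −3), (6, 14), (6, −15); that is, for all x, y ∈ ℤ, y² + y = x³ − x holds if and only if (x, y) is one of these ten pairs. -/
/-!
Let `θ` be a root of `t³ - 4t + 2` and put `Y = 2y + 1`, so that a solution of `y² + y = x³ - x`
satisfies `2Y² = N(2x - θ)`. The ideal `𝔞 = (Y, 2x - θ)` of `ℤ[θ]` has
`γ² θ(θ - 1) ∈ (2x - θ)` for every `γ ∈ 𝔞`, and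
`γ ↦` (the coefficient of `θ²` in `θ(θ - 1)γ² / (2x - θ)`) is an integral ternary quadratic form of
determinant `1`, positive definite as soon as `x ≥ 1`. By Minkowski's theorem it represents `1`, so
`(2x - θ)(θ² + bθ + a) = θ(θ - 1)γ²` for some integers `a`, `b`. Comparing signs at the three real
roots forces `t² + bt + a` to interlace `t³ - 4t + 2`, which together with the parity of `a + b`
leaves three quadratics, and for each of them `2(2x - θ)` is a square in `ℤ[θ]`. The coefficients
of that square satisfy three equations over `ℤ` which a coprimality argument solves.
-/

open MeasureTheory Matrix
open scoped MatrixOrder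

section Minkowski

variable {ι : Type*} [Fintype ι]

theorem exists_int_ne_zero_mem_of_two_pow_card_lt_volume {s : Set (ι → ℝ)}
    (h_symm : ∀ v ∈ s, -v ∈ s) (h_conv : Convex ℝ s) (h_vol : 2 ^ Fintype.card ι < volume s) :
    ∃ z : ι → ℤ, z ≠ 0 ∧ (fun i ↦ (z i : ℝ)) ∈ s := by
  classical
  set b := Pi.basisFun ℝ ι
  have : Countable (Submodule.span ℤ (Set.range b)).toAddSubgroup :=
    inferInstanceAs (Countable (Submodule.span ℤ (Set.range b)))
  have h_covolume : volume (ZSpan.fundamentalDomain b) = 1 := by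
    simp [b, ZSpan.fundamentalDomain_pi_basisFun, Real.volume_pi_Ico]
  obtain ⟨⟨v, hv⟩, hv_ne, hv_mem⟩ := exists_ne_zero_mem_lattice_of_measure_mul_two_pow_lt_measure
    (ZSpan.isAddFundamentalDomain' b volume) h_symm h_conv (by simpa [h_covolume] using h_vol)
  have h_int : ∀ i, ∃ n : ℤ, (n : ℝ) = v i := by
    simpa [b] using (b.mem_span_iff_repr_mem ℤ v).1 hv
  choose z hz using h_int
  obtain rfl : (fun i ↦ (z i : ℝ)) = v := funext hz
  refine ⟨z, ?_, hv_mem⟩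
  rintro rfl
  exact hv_ne (Subtype.ext (funext fun i ↦ by simp))

variable {A : Matrix ι ι ℝ}

theorem setOf_dotProduct_mulVec_lt_sq_eq_preimage_ball (B : Matrix ι ι ℝ) {r : ℝ} (hr : 0 ≤ r) :
    {v : ι → ℝ | v ⬝ᵥ (star B * B) *ᵥ v < r ^ 2} =
      B.mulVecLin ⁻¹' (WithLp.toLp 2 ⁻¹' Metric.ball (0 : EuclideanSpace ℝ ι) r) := by
  ext v
  have h_norm : v ⬝ᵥ (star B * B) *ᵥ v = ‖WithLp.toLp 2 (B *ᵥ v)‖ ^ 2 := by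
    rw [EuclideanSpace.real_norm_sq_eq, ← mulVec_mulVec, dotProduct_mulVec, star_eq_conjTranspose,
      conjTranspose_eq_transpose_of_trivial, vecMul_transpose]
    simp only [dotProduct, sq]
  rw [Set.mem_ofPred_eq, h_norm, pow_lt_pow_iff_left₀ (norm_nonneg _) hr two_ne_zero]
  simp

theorem convex_setOf_dotProduct_mulVec_lt_sq (hA : A.PosSemidef) (r : ℝ) :
    Convex ℝ {v : ι → ℝ | v ⬝ᵥ A *ᵥ v < r ^ 2} := by
  classical
  obtain ⟨B, rfl⟩ := CStarAlgebra.nonneg_iff_eq_star_mul_self.mp hA.nonneg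
  rw [← sq_abs r, setOf_dotProduct_mulVec_lt_sq_eq_preimage_ball B (abs_nonneg r)]
  exact ((convex_ball _ _).linear_preimage
    (WithLp.linearEquiv 2 ℝ (ι → ℝ)).symm.toLinearMap).linear_preimage _

variable [DecidableEq ι]

theorem volume_setOf_dotProduct_mulVec_lt_sq (hA : A.PosDef) {r : ℝ} (hr : 0 ≤ r) :
    volume {v : ι → ℝ | v ⬝ᵥ A *ᵥ v < r ^ 2} =
      ENNReal.ofReal (√A.det)⁻¹ * volume (Metric.ball (0 : EuclideanSpace ℝ ι) r) := by
  obtain ⟨B, rfl⟩ := CStarAlgebra.nonneg_iff_eq_star_mul_self.mp hA.posSemidef.nonneg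
  have h_det : (star B * B).det = B.det ^ 2 := by
    simp [star_eq_conjTranspose, sq]
  have hB : LinearMap.det B.mulVecLin ≠ 0 := fun h ↦ by
    rw [← toLin'_apply', LinearMap.det_toLin'] at h
    simpa [h_det, h] using hA.det_pos
  rw [setOf_dotProduct_mulVec_lt_sq_eq_preimage_ball B hr,
    Measure.addHaar_preimage_linearMap _ hB, ← toLin'_apply', LinearMap.det_toLin',
    (PiLp.volume_preserving_toLp ι).measure_preimage measurableSet_ball.nullMeasurableSet,
    h_det, Real.sqrt_sq_eq_abs, abs_inv]

theorem exists_int_ne_zero_dotProduct_mulVec_lt_sq (hA : A.PosDef) {r : ℝ}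
    (h_vol : 2 ^ Fintype.card ι <
      ENNReal.ofReal (√A.det)⁻¹ * volume (Metric.ball (0 : EuclideanSpace ℝ ι) r)) :
    ∃ z : ι → ℤ, z ≠ 0 ∧ (fun i ↦ (z i : ℝ)) ⬝ᵥ A *ᵥ (fun i ↦ (z i : ℝ)) < r ^ 2 := by
  have hr : 0 ≤ r := by
    by_contra! hr
    simp [Metric.ball_eq_empty.2 hr.le] at h_vol
  exact exists_int_ne_zero_mem_of_two_pow_card_lt_volume (by simp [mulVec_neg])
    (convex_setOf_dotProduct_mulVec_lt_sq hA.posSemidef r)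
    (by rwa [volume_setOf_dotProduct_mulVec_lt_sq hA hr])

theorem two_pow_three_lt_volume_ball_sqrt_two :
    2 ^ 3 < volume (Metric.ball (0 : EuclideanSpace ℝ (Fin 3)) √2) := by
  have h_eight : (2 : ENNReal) ^ 3 = ENNReal.ofReal 8 := by
    rw [← ENNReal.ofReal_ofNat, ← ENNReal.ofReal_pow zero_le_two]
    norm_num
  have h_cube : √2 ^ 3 = 2 * √2 := by
    rw [pow_succ, Real.sq_sqrt zero_le_two]
  rw [EuclideanSpace.volume_ball_fin_three, ← ENNReal.ofReal_pow (by positivity), h_cube,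
    ← ENNReal.ofReal_mul (by positivity), h_eight, ENNReal.ofReal_lt_ofReal_iff (by positivity)]
  nlinarith [Real.pi_gt_three, Real.one_lt_sqrt_two]

theorem exists_dotProduct_mulVec_eq_one {A : Matrix (Fin 3) (Fin 3) ℤ}
    (hA : (A.map ((↑) : ℤ → ℝ)).PosDef) (h_det : A.det = 1) :
    ∃ z : Fin 3 → ℤ, z ⬝ᵥ A *ᵥ z = 1 := by
  have h_cast (z : Fin 3 → ℤ) : (fun i ↦ (z i : ℝ)) ⬝ᵥ A.map (↑) *ᵥ (fun i ↦ (z i : ℝ)) =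
      ((z ⬝ᵥ A *ᵥ z : ℤ) : ℝ) := by
    simp [dotProduct, mulVec]
  obtain ⟨z, hz_ne, hz_lt⟩ := exists_int_ne_zero_dotProduct_mulVec_lt_sq hA (r := √2) <| by
    simpa [← Int.cast_det, h_det] using two_pow_three_lt_volume_ball_sqrt_two
  have hz_pos := hA.dotProduct_mulVec_pos (x := fun i ↦ (z i : ℝ)) <| by
    contrapose! hz_ne
    exact funext fun i ↦ by simpa using congrFun hz_ne i
  rw [star_trivial, h_cast, Int.cast_pos] at hz_pos
  rw [h_cast, Real.sq_sqrt zero_le_two] at hz_lt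
  have : z ⬝ᵥ A *ᵥ z < 2 := by exact_mod_cast hz_lt
  exact ⟨z, by lia⟩

end Minkowski

namespace Curve37a

section Forms

/-- The coefficient of `θ²` in `θ(θ - 1)γ² / (2x - θ)`, where `θ³ - 4θ + 2 = 0` and
`γ = uY + v(θ - 2x) + w(θ + 1)(θ - 2x)`. This basis of the ideal `(Y, θ - 2x)` makes the Gram
matrix of the form tridiagonal. -/
def leadingForm (x Y u v w : ℤ) : ℤ :=
  (2 * x ^ 2 - x) * u ^ 2 - 2 * Y * u * v + (2 * x + 1) * v ^ 2 - 6 * v * w + (6 * x - 1) * w ^ 2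

/-- The coefficient of `θ` in the element of which `leadingForm` is the coefficient of `θ²`. -/
def linearForm (x Y u v w : ℤ) : ℤ :=
  (-2 * x ^ 2 + 4 * x - 1) * u ^ 2 + 2 * Y * u * v - 6 * Y * u * w - (2 * x + 4) * v ^ 2
    + (12 * x + 4) * v * w + (2 * x - 10) * w ^ 2

/-- The constant coefficient of the element of which `leadingForm` is the coefficient of `θ²`. -/
def constantForm (x Y u v w : ℤ) : ℤ :=
  (1 - 2 * x) * u ^ 2 + 4 * Y * u * w + 2 * v ^ 2 - 8 * x * v * w + (6 - 4 * x) * w ^ 2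

/-- The Gram matrix of `leadingForm`. -/
def gramMatrix (x Y : ℤ) : Matrix (Fin 3) (Fin 3) ℤ :=
  !![2 * x ^ 2 - x, -Y, 0; -Y, 2 * x + 1, -3; 0, -3, 6 * x - 1]

variable {x Y : ℤ}

theorem two_mul_sub_mul_forms_eq {R : Type*} [CommRing R] {θ : R} (hθ : θ ^ 3 - 4 * θ + 2 = 0)
    (hY : Y ^ 2 = 4 * x ^ 3 - 4 * x + 1) (u v w : ℤ) :
    (2 * x - θ) * (leadingForm x Y u v w * θ ^ 2 + linearForm x Y u v w * θ
      + constantForm x Y u v w) =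
      θ * (θ - 1) * (u * Y + v * (θ - 2 * x) + w * (θ + 1) * (θ - 2 * x)) ^ 2 := by
  have hY' : (Y : R) ^ 2 = 4 * x ^ 3 - 4 * x + 1 := mod_cast congrArg (Int.cast : ℤ → R) hY
  simp only [leadingForm, linearForm, constantForm]
  push_cast
  grind

theorem even_constantForm_add_linearForm (x Y u v w : ℤ) :
    Even (constantForm x Y u v w + linearForm x Y u v w) :=
  ⟨(x - x ^ 2) * u ^ 2 + Y * u * v - Y * u * w - (x + 1) * v ^ 2 + (2 * x + 2) * v * w
    - (x + 2) * w ^ 2, by simp only [constantForm, linearForm]; ring⟩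

theorem dotProduct_gramMatrix_mulVec (x Y : ℤ) (z : Fin 3 → ℤ) :
    z ⬝ᵥ gramMatrix x Y *ᵥ z = leadingForm x Y (z 0) (z 1) (z 2) := by
  simp only [gramMatrix, leadingForm, dotProduct, mulVec, Fin.sum_univ_three, of_apply, cons_val',
    cons_val_zero, cons_val_one, cons_val, cons_val_fin_one]
  ring

theorem det_gramMatrix (hY : Y ^ 2 = 4 * x ^ 3 - 4 * x + 1) : (gramMatrix x Y).det = 1 := by
  simp only [gramMatrix, det_fin_three, of_apply, cons_val', cons_val_zero, cons_val_one, cons_val,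
    cons_val_fin_one]
  linear_combination (1 - 6 * x) * hY

theorem posDef_gramMatrix (hx : 1 ≤ x) (hY : Y ^ 2 = 4 * x ^ 3 - 4 * x + 1) :
    ((gramMatrix x Y).map ((↑) : ℤ → ℝ)).PosDef := by
  have hx' : (1 : ℝ) ≤ x := mod_cast hx
  have hY' : (Y : ℝ) ^ 2 = 4 * x ^ 3 - 4 * x + 1 := mod_cast hY
  refine .of_dotProduct_mulVec_pos ?_ fun z hz ↦ ?_
  · ext i j
    fin_cases i <;> fin_cases j <;> simp [gramMatrix]
  -- The trailing principal minors of sizes one and two; the determinant is one.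
  set c : ℝ := 6 * x - 1
  set d : ℝ := 12 * x ^ 2 + 4 * x - 10
  have hc : 0 < c := by linarith
  have hd : 0 < d := by nlinarith
  have h_squares : c * d * (star z ⬝ᵥ (gramMatrix x Y).map ((↑) : ℤ → ℝ) *ᵥ z) =
      d * (c * z 2 - 3 * z 1) ^ 2 + (d * z 1 - c * Y * z 0) ^ 2 + c * z 0 ^ 2 := by
    simp only [gramMatrix, dotProduct, mulVec, Fin.sum_univ_three, star_trivial, map_apply,
      of_apply, cons_val', cons_val_zero, cons_val_one, cons_val, cons_val_fin_one]
    push_cast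
    grind
  refine pos_of_mul_pos_right ?_ (mul_pos hc hd).le
  rw [h_squares]
  refine lt_of_le_of_ne (by positivity) fun h_zero ↦ hz ?_
  obtain ⟨h_sum, h_sq₀⟩ := (add_eq_zero_iff_of_nonneg (by positivity) (by positivity)).1 h_zero.symm
  obtain ⟨h_sq₂, h_sq₁⟩ := (add_eq_zero_iff_of_nonneg (by positivity) (by positivity)).1 h_sum
  have h₀ : z 0 = 0 := by simpa [hc.ne'] using h_sq₀
  have h₁ : z 1 = 0 := by simpa [h₀, hd.ne'] using h_sq₁
  have h₂ : z 2 = 0 := by simpa [h₁, hc.ne', hd.ne'] using h_sq₂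
  ext i
  fin_cases i <;> assumption

theorem exists_leadingForm_eq_one (hx : 1 ≤ x) (hY : Y ^ 2 = 4 * x ^ 3 - 4 * x + 1) :
    ∃ u v w : ℤ, leadingForm x Y u v w = 1 := by
  obtain ⟨z, hz⟩ := exists_dotProduct_mulVec_eq_one (posDef_gramMatrix hx hY) (det_gramMatrix hY)
  exact ⟨z 0, z 1, z 2, dotProduct_gramMatrix_mulVec x Y z ▸ hz⟩

theorem exists_quadratic_mul_eq_mul_sq {y : ℤ} (hx : 1 ≤ x) (hxy : y ^ 2 + y = x ^ 3 - x) :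
    ∃ a b n₀ n₁ n₂ : ℤ, Even (a + b) ∧ ∀ t : ℝ, t ^ 3 - 4 * t + 2 = 0 →
      (2 * x - t) * (t ^ 2 + b * t + a) = t * (t - 1) * (n₀ + n₁ * t + n₂ * t ^ 2) ^ 2 := by
  have hY : (2 * y + 1) ^ 2 = 4 * x ^ 3 - 4 * x + 1 := by linear_combination 4 * hxy
  obtain ⟨u, v, w, h_one⟩ := exists_leadingForm_eq_one hx hY
  refine ⟨_, _, u * (2 * y + 1) - 2 * x * (v + w), v + w - 2 * x * w, w,
    even_constantForm_add_linearForm x (2 * y + 1) u v w, fun t ht ↦ ?_⟩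
  have h_mul := two_mul_sub_mul_forms_eq ht hY u v w
  rw [h_one] at h_mul
  push_cast at h_mul ⊢
  linear_combination h_mul

end Forms

section RealRoots

theorem exists_roots : ∃ t₁ ∈ Set.Icc (-9 / 4 : ℝ) (-2), ∃ t₂ ∈ Set.Ioo (0 : ℝ) 1,
    ∃ t₃ ∈ Set.Ioo (1 : ℝ) 2, t₁ ^ 3 - 4 * t₁ + 2 = 0 ∧ t₂ ^ 3 - 4 * t₂ + 2 = 0 ∧
      t₃ ^ 3 - 4 * t₃ + 2 = 0 := by
  have h_cont (s : Set ℝ) : ContinuousOn (fun t : ℝ ↦ t ^ 3 - 4 * t + 2) s := by fun_prop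
  obtain ⟨t₁, ht₁, h₁⟩ := intermediate_value_Icc (by norm_num : (-9 / 4 : ℝ) ≤ -2) (h_cont _)
    (show (0 : ℝ) ∈ _ by constructor <;> norm_num)
  obtain ⟨t₂, ht₂, h₂⟩ := intermediate_value_Ioo' zero_le_one (h_cont _)
    (show (0 : ℝ) ∈ _ by constructor <;> norm_num)
  obtain ⟨t₃, ht₃, h₃⟩ := intermediate_value_Ioo one_le_two (h_cont _)
    (show (0 : ℝ) ∈ _ by constructor <;> norm_num)
  exact ⟨t₁, ht₁, t₂, ht₂, t₃, ht₃, h₁, h₂, h₃⟩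

theorem lt_two_of_root {t : ℝ} (ht : t ^ 3 - 4 * t + 2 = 0) : t < 2 := by
  by_contra! h
  nlinarith [mul_nonneg (by linarith : 0 ≤ t) (sq_nonneg (t - 2))]

theorem neg_add_le_of_quadratic_le {s t a b : ℝ} (hst : s < t)
    (h : s ^ 2 + b * s + a ≤ t ^ 2 + b * t + a) : -(s + t) ≤ b :=
  le_of_mul_le_mul_left (by linarith) (sub_pos.2 hst)

theorem le_neg_add_of_quadratic_le {s t a b : ℝ} (hst : s < t)
    (h : t ^ 2 + b * t + a ≤ s ^ 2 + b * s + a) : b ≤ -(s + t) :=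
  le_of_mul_le_mul_left (by linarith) (sub_pos.2 hst)

theorem coeffs_eq_of_interlacing {a b : ℤ} (h_even : Even (a + b))
    (h_sign : ∀ t : ℝ, t ^ 3 - 4 * t + 2 = 0 → 0 ≤ t * (t - 1) * (t ^ 2 + b * t + a)) :
    a = -2 ∧ b = 0 ∨ a = -1 ∧ b = -1 ∨ a = -1 ∧ b = 1 := by
  obtain ⟨t₁, ⟨l₁, u₁⟩, t₂, ⟨l₂, u₂⟩, t₃, ⟨l₃, u₃⟩, h₁, h₂, h₃⟩ := exists_roots
  have q₁ : 0 ≤ t₁ ^ 2 + b * t₁ + a :=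
    nonneg_of_mul_nonneg_right (h_sign t₁ h₁) (by nlinarith)
  have q₂ : t₂ ^ 2 + b * t₂ + a ≤ 0 :=
    nonpos_of_mul_nonneg_right (h_sign t₂ h₂) (by nlinarith)
  have q₃ : 0 ≤ t₃ ^ 2 + b * t₃ + a :=
    nonneg_of_mul_nonneg_right (h_sign t₃ h₃) (by nlinarith)
  have hb_lower : -3 < b := by
    have := neg_add_le_of_quadratic_le (by linarith : t₂ < t₃) (q₂.trans q₃)
    exact_mod_cast (by linarith : (-3 : ℝ) < b)
  have hb_upper : b < 3 := by
    have := le_neg_add_of_quadratic_le (by linarith : t₁ < t₂) (q₂.trans q₁)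
    exact_mod_cast (by linarith : (b : ℝ) < 3)
  rw [Int.even_iff] at h_even
  interval_cases b <;> push_cast at q₁ q₂ q₃
  · have ha_lower : 0 < a := mod_cast (by nlinarith : (0 : ℝ) < a)
    have ha_upper : a < 1 := mod_cast (by nlinarith : (a : ℝ) < 1)
    lia
  · have ha_lower : -2 < a := mod_cast (by nlinarith : (-2 : ℝ) < a)
    have ha_upper : a < 1 := mod_cast (by nlinarith : (a : ℝ) < 1)
    lia
  · have ha_lower : -4 < a := mod_cast (by nlinarith : (-4 : ℝ) < a)
    have ha_upper : a < 0 := mod_cast (by nlinarith : (a : ℝ) < 0)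
    lia
  · have ha_lower : -3 < a := mod_cast (by nlinarith : (-3 : ℝ) < a)
    have ha_upper : a < 0 := mod_cast (by nlinarith : (a : ℝ) < 0)
    lia
  · have ha_lower : -1 < a := mod_cast (by nlinarith : (-1 : ℝ) < a)
    have ha_upper : a < 0 := mod_cast (by nlinarith : (a : ℝ) < 0)
    lia

theorem quadratic_coeffs_eq_zero {R : Type*} [CommRing R] [IsDomain R] {t₁ t₂ t₃ p q r : R}
    (h₁₂ : t₁ ≠ t₂) (h₁₃ : t₁ ≠ t₃) (h₂₃ : t₂ ≠ t₃) (h₁ : p + q * t₁ + r * t₁ ^ 2 = 0)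
    (h₂ : p + q * t₂ + r * t₂ ^ 2 = 0) (h₃ : p + q * t₃ + r * t₃ ^ 2 = 0) :
    p = 0 ∧ q = 0 ∧ r = 0 := by
  have slope₁₂ : q + r * (t₁ + t₂) = 0 :=
    mul_left_cancel₀ (sub_ne_zero.2 h₁₂) (by linear_combination h₁ - h₂)
  have slope₁₃ : q + r * (t₁ + t₃) = 0 :=
    mul_left_cancel₀ (sub_ne_zero.2 h₁₃) (by linear_combination h₁ - h₃)
  have hr : r = 0 :=
    mul_left_cancel₀ (sub_ne_zero.2 h₂₃) (by linear_combination slope₁₂ - slope₁₃)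
  subst hr
  have hq : q = 0 := by simpa using slope₁₂
  subst hq
  exact ⟨by simpa using h₁, rfl, rfl⟩

theorem int_coeffs_eq_zero_of_forall_root {p q r : ℤ}
    (h : ∀ t : ℝ, t ^ 3 - 4 * t + 2 = 0 → p + q * t + r * t ^ 2 = 0) :
    p = 0 ∧ q = 0 ∧ r = 0 := by
  obtain ⟨t₁, ⟨-, u₁⟩, t₂, ⟨l₂, u₂⟩, t₃, ⟨l₃, -⟩, h₁, h₂, h₃⟩ := exists_roots
  exact_mod_cast quadratic_coeffs_eq_zero (R := ℝ) (by linarith : t₁ < t₂).ne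
    (by linarith : t₁ < t₃).ne (by linarith : t₂ < t₃).ne (h t₁ h₁) (h t₂ h₂) (h t₃ h₃)

end RealRoots

section Descent

variable {x : ℤ}

theorem mul_nonneg_of_mul_eq_mul_sq {s t q n : ℝ} (hs : 0 < s) (h : s * q = t * n ^ 2) :
    0 ≤ t * q := by
  refine nonneg_of_mul_nonneg_right (a := s) ?_ hs
  rw [mul_left_comm, h]
  nlinarith [sq_nonneg (t * n)]

theorem two_mul_eq_sq_of_mul_eq_mul_sq {R : Type*} [CommRing R] [IsDomain R] {s g e n h : R}
    (he : e ≠ 0) (h_mul : s * g = e * n ^ 2) (h_sq : h ^ 2 * g = 2 * e) :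
    2 * s = (h * n) ^ 2 := by
  refine mul_left_cancel₀ he ?_
  linear_combination h ^ 2 * h_mul - s * h_sq

theorem mul_sub_one_ne_zero_of_root {R : Type*} [CommRing R] [NeZero (2 : R)] {t : R}
    (ht : t ^ 3 - 4 * t + 2 = 0) : t * (t - 1) ≠ 0 := by
  intro h
  have h_three : 3 * t = 2 := by linear_combination (t + 1) * h - ht
  have h_two : (2 : R) = 0 := by linear_combination (-9) * h + (3 * t - 1) * h_three
  exact two_ne_zero h_two

theorem exists_sq_eq_of_interlacing {a b : ℤ}
    (hab : a = -2 ∧ b = 0 ∨ a = -1 ∧ b = -1 ∨ a = -1 ∧ b = 1) (n₀ n₁ n₂ : ℤ) :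
    ∃ s₀ s₁ s₂ : ℤ, ∀ t : ℝ, t ^ 3 - 4 * t + 2 = 0 →
      (2 * x - t) * (t ^ 2 + b * t + a) = t * (t - 1) * (n₀ + n₁ * t + n₂ * t ^ 2) ^ 2 →
      2 * (2 * x - t) = (s₀ + s₁ * t + s₂ * t ^ 2) ^ 2 := by
  -- In each case `2t(t - 1) / (t² + bt + a)` is the square of an element `h` of `ℤ[t]`.
  rcases hab with ⟨rfl, rfl⟩ | ⟨rfl, rfl⟩ | ⟨rfl, rfl⟩
  · refine ⟨-2 * n₂, n₀ + 4 * n₂, n₁, fun t ht h ↦ ?_⟩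
    rw [two_mul_eq_sq_of_mul_eq_mul_sq (h := t) (mul_sub_one_ne_zero_of_root ht) h
      (by push_cast; grind)]
    push_cast
    congr 1
    linear_combination n₂ * ht
  · refine ⟨-2 * n₀ - 2 * n₁ - 4 * n₂, 2 * n₀ + 2 * n₁ + 6 * n₂, n₀ + 2 * n₁ + 2 * n₂,
      fun t ht h ↦ ?_⟩
    rw [two_mul_eq_sq_of_mul_eq_mul_sq (h := t ^ 2 + 2 * t - 2) (mul_sub_one_ne_zero_of_root ht) h
      (by push_cast; grind)]
    push_cast
    congr 1
    linear_combination (n₂ * t + n₁ + 2 * n₂) * ht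
  · refine ⟨-2 * n₀ - 2 * n₁, 2 * n₁ - 2 * n₂, n₀ + 2 * n₂, fun t ht h ↦ ?_⟩
    rw [two_mul_eq_sq_of_mul_eq_mul_sq (h := t ^ 2 - 2) (mul_sub_one_ne_zero_of_root ht) h
      (by push_cast; grind)]
    push_cast
    congr 1
    linear_combination (n₂ * t + n₁) * ht

theorem eq_of_coeff_eqs {p q r : ℤ} (h₀ : x = p ^ 2 - 2 * q * r)
    (h₁ : 4 * q * (p + 2 * r) = r ^ 2 - 1) (h₂ : q ^ 2 + p * r + r ^ 2 = 0) :
    x = 1 ∨ x = 2 ∨ x = 6 := by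
  have h_coprime : IsCoprime r (q ^ 2) :=
    IsCoprime.pow_right ⟨r, -(4 * (p + 2 * r)), by linear_combination -h₁⟩
  have hr : r ^ 2 = 1 := Int.isUnit_sq <|
    h_coprime.isUnit_of_dvd' dvd_rfl ⟨-(p + r), by linear_combination h₂⟩
  have hq : q * (p + 2 * r) = 0 := by linarith
  rcases mul_eq_zero.1 hq with rfl | hp
  · left
    linear_combination h₀ + (p * r - 1) * h₂ + (-p ^ 2 - p * r + 1) * hr
  · right
    obtain rfl : p = -2 * r := by linarith
    have hqr : q * r = 1 ∨ q * r = -1 :=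
      sq_eq_one_iff.1 (by linear_combination r ^ 2 * h₂ + (r ^ 2 + 1) * hr)
    rcases hqr with hqr | hqr
    · left; linear_combination h₀ + 4 * hr - 2 * hqr
    · right; linear_combination h₀ + 4 * hr - 2 * hqr

theorem eq_of_forall_root_eq_sq {s₀ s₁ s₂ : ℤ} (h : ∀ t : ℝ, t ^ 3 - 4 * t + 2 = 0 →
      2 * (2 * x - t) = (s₀ + s₁ * t + s₂ * t ^ 2) ^ 2) :
    x = 1 ∨ x = 2 ∨ x = 6 := by
  obtain ⟨h₀, h₁, h₂⟩ := int_coeffs_eq_zero_of_forall_root (p := s₀ ^ 2 - 4 * s₁ * s₂ - 4 * x)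
    (q := 2 * s₀ * s₁ + 8 * s₁ * s₂ - 2 * s₂ ^ 2 + 2)
    (r := s₁ ^ 2 + 2 * s₀ * s₂ + 4 * s₂ ^ 2) fun t ht ↦ by
      push_cast
      linear_combination (-1) * h t ht - (s₂ ^ 2 * t + 2 * s₁ * s₂) * ht
  have hs₀ : Even s₀ := by
    rw [← Int.even_pow' two_ne_zero]
    exact ⟨2 * s₁ * s₂ + 2 * x, by linarith⟩
  have hs₁ : Even s₁ := by
    rw [← Int.even_pow' two_ne_zero]
    exact ⟨-s₀ * s₂ - 2 * s₂ ^ 2, by linarith⟩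
  obtain ⟨p, rfl⟩ := hs₀
  obtain ⟨q, rfl⟩ := hs₁
  exact eq_of_coeff_eqs (p := p) (q := q) (r := s₂) (by linarith) (by linarith) (by linarith)

theorem abscissa_eq_of_one_le {y : ℤ} (hx : 1 ≤ x) (hxy : y ^ 2 + y = x ^ 3 - x) :
    x = 1 ∨ x = 2 ∨ x = 6 := by
  obtain ⟨a, b, n₀, n₁, n₂, h_even, h_eq⟩ := exists_quadratic_mul_eq_mul_sq hx hxy
  have hx' : (1 : ℝ) ≤ x := mod_cast hx
  have h_interlacing := coeffs_eq_of_interlacing h_even fun t ht ↦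
    mul_nonneg_of_mul_eq_mul_sq (by linarith [lt_two_of_root ht]) (h_eq t ht)
  obtain ⟨s₀, s₁, s₂, h_sq⟩ := exists_sq_eq_of_interlacing h_interlacing n₀ n₁ n₂
  exact eq_of_forall_root_eq_sq fun t ht ↦ h_sq t ht (h_eq t ht)

theorem neg_one_le_abscissa {y : ℤ} (hxy : y ^ 2 + y = x ^ 3 - x) : -1 ≤ x := by
  by_contra! hx
  nlinarith [sq_nonneg (2 * y + 1), mul_nonneg (by lia : 0 ≤ -2 - x) (sq_nonneg x)]

theorem abscissa_eq {y : ℤ} (hxy : y ^ 2 + y = x ^ 3 - x) :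
    x = -1 ∨ x = 0 ∨ x = 1 ∨ x = 2 ∨ x = 6 := by
  have hx_lower := neg_one_le_abscissa hxy
  rcases le_or_gt 1 x with hx | hx
  · have hx_pos := abscissa_eq_of_one_le hx hxy
    lia
  · lia

theorem eq_or_eq_of_sq_add_eq {c y : ℤ} (h : y ^ 2 + y = c ^ 2 + c) : y = c ∨ y = -1 - c := by
  have h_mul : (y - c) * (y + 1 + c) = 0 := by linear_combination h
  rcases mul_eq_zero.1 h_mul with h | h <;> lia

end Descent

end Curve37a

/-- The integer solutions of `y² + y = x³ − x` are exactly the ten listed pairs. -/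
theorem integer_points_of_37a :
    ∀ x y : ℤ, y ^ 2 + y = x ^ 3 - x ↔
      (x, y) = (-1, 0) ∨ (x, y) = (-1, -1) ∨ (x, y) = (0, 0) ∨ (x, y) = (0, -1) ∨
      (x, y) = (1, 0) ∨ (x, y) = (1, -1) ∨ (x, y) = (2, 2) ∨ (x, y) = (2, -3) ∨
      (x, y) = (6, 14) ∨ (x, y) = (6, -15) := by
  intro x y
  simp only [Prod.mk.injEq]
  constructor
  · intro hxy
    rcases Curve37a.abscissa_eq hxy with rfl | rfl | rfl | rfl | rfl
    · have hy := Curve37a.eq_or_eq_of_sq_add_eq (c := 0) (by linarith)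
      lia
    · have hy := Curve37a.eq_or_eq_of_sq_add_eq (c := 0) (by linarith)
      lia
    · have hy := Curve37a.eq_or_eq_of_sq_add_eq (c := 0) (by linarith)
      lia
    · have hy := Curve37a.eq_or_eq_of_sq_add_eq (c := 2) (by linarith)
      lia
    · have hy := Curve37a.eq_or_eq_of_sq_add_eq (c := 14) (by linarith)
      lia
  · rintro (⟨rfl, rfl⟩ | ⟨rfl, rfl⟩ | ⟨rfl, rfl⟩ | ⟨rfl, rfl⟩ | ⟨rfl, rfl⟩ | ⟨rfl, rfl⟩ |
      ⟨rfl, rfl⟩ | ⟨rfl, rfl⟩ | ⟨rfl, rfl⟩ | ⟨rfl, rfl⟩) <;> norm_num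
end
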